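/- arXiv:1706.09675 — 2 statements merged into one kernel-verified Lean document; each statement's English description precedes it below -/
import Mathlib

section
/- Let R = k[x_1,…,x_n] be a polynomial ring over a field k, let J and H be homogeneous ideals in R, let f ∈ R be a form of degree d that is a non-zerodivisor on R/J, and set I = J + fH. Then (i) depth R/I ∈ {depth R/(J+H), depth R/J − 1}, and (ii) reg R/I ∈ {reg R/(J+H) + d, reg R/J + d − 1, reg R/J + d − 2, …, reg R/J}. -/
open MvPolynomial

/-- The depth of the `R`-module `M` with respect to the ideal `J`: the supremum of
lengths of `M`-regular sequences consisting of elements of `J`. -/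
noncomputable def idealDepth {R : Type*} [CommRing R] (J : Ideal R)
    (M : Type*) [AddCommGroup M] [Module R M] : ℕ :=
  sSup {d : ℕ | ∃ rs : List R, rs.length = d ∧ (∀ r ∈ rs, r ∈ J) ∧
    RingTheory.Sequence.IsRegular M rs}

/-- The irrelevant maximal homogeneous ideal `(x₁, …, xₙ)` of the polynomial ring. -/
noncomputable def mxIdeal (k : Type*) [Field k] (n : ℕ) : Ideal (MvPolynomial (Fin n) k) :=
  Ideal.span (Set.range MvPolynomial.X)

/-- `depth R/I`, the depth of the quotient module with respect to the maximal
homogeneous ideal. -/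
noncomputable def pdepth {k : Type*} [Field k] {n : ℕ}
    (I : Ideal (MvPolynomial (Fin n) k)) : ℕ :=
  idealDepth (mxIdeal k n) (MvPolynomial (Fin n) k ⧸ I)

/-- `p` is homogeneous of degree `d ∈ ℤ` (where `0` is homogeneous of any degree). -/
def HomogOfDeg {k : Type*} [Field k] {n : ℕ} (p : MvPolynomial (Fin n) k) (d : ℤ) : Prop :=
  p = 0 ∨ ∃ m : ℕ, (m : ℤ) = d ∧ p.IsHomogeneous m

/-- A finite graded free resolution of `R/I`: free modules `Fᵢ = ⊕_j R(-D i j)` (of rank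
`b i`, zero for `i > len`), differentials given by matrices `A i : Fᵢ₊₁ → Fᵢ` whose entries
are homogeneous of the appropriate degrees, and an augmentation `F₀ → R/I` given by the
homogeneous column `v`, the whole complex being exact. -/
structure GradedFreeRes {k : Type*} [Field k] {n : ℕ}
    (I : Ideal (MvPolynomial (Fin n) k)) where
  len : ℕ
  b : ℕ → ℕ
  hb : ∀ i : ℕ, len < i → b i = 0
  D : (i : ℕ) → Fin (b i) → ℤ
  A : (i : ℕ) → Matrix (Fin (b i)) (Fin (b (i+1))) (MvPolynomial (Fin n) k)
  v : Fin (b 0) → MvPolynomial (Fin n) k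
  hv : ∀ r, HomogOfDeg (v r) (D 0 r)
  hA : ∀ (i : ℕ) r c, HomogOfDeg (A i r c) (D (i+1) c - D i r)
  haug : Function.Surjective
    (fun w : Fin (b 0) → MvPolynomial (Fin n) k => Ideal.Quotient.mk I (∑ r, w r * v r))
  hex0 : Function.Exact ((A 0).mulVec)
    (fun w : Fin (b 0) → MvPolynomial (Fin n) k => Ideal.Quotient.mk I (∑ r, w r * v r))
  hex : ∀ i : ℕ, Function.Exact ((A (i+1)).mulVec) ((A i).mulVec)

/-- The Castelnuovo–Mumford regularity `reg R/I`: the least `r` such that some finite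
graded free resolution of `R/I` has all its `i`-th twists `≤ r + i`; equivalently (via the
minimal free resolution) `reg R/I = max { j - i : β_{i,j}(R/I) ≠ 0 }`. -/
noncomputable def regQuot {k : Type*} [Field k] {n : ℕ}
    (I : Ideal (MvPolynomial (Fin n) k)) : ℤ :=
  sInf {r : ℤ | ∃ F : GradedFreeRes I, ∀ (i : ℕ) (j : Fin (F.b i)), F.D i j - (i : ℤ) ≤ r}

/-- The regularity of a (nonzero) homogeneous ideal: `reg I = reg R/I + 1`. -/
noncomputable def regIdeal {k : Type*} [Field k] {n : ℕ}
    (I : Ideal (MvPolynomial (Fin n) k)) : ℤ :=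
  regQuot I + 1

/-- An ideal is homogeneous if it is generated by homogeneous polynomials. -/
def IsHomogeneousIdeal {k : Type*} [Field k] {n : ℕ}
    (I : Ideal (MvPolynomial (Fin n) k)) : Prop :=
  ∃ T : Set (MvPolynomial (Fin n) k), (∀ p ∈ T, ∃ d : ℕ, p.IsHomogeneous d) ∧ I = Ideal.span T

/-- A monomial ideal: an ideal generated by monomials. -/
def IsMonomialIdeal {k : Type*} [Field k] {n : ℕ}
    (I : Ideal (MvPolynomial (Fin n) k)) : Prop :=
  ∃ T : Set (Fin n →₀ ℕ), I = Ideal.span ((fun m => monomial m (1 : k)) '' T)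

/-!
Let `K = (J + H)/J`. Since `f` is regular on `R/J`, multiplication by `f` maps `K(-d)`
isomorphically onto `I/J`, so there are exact sequences `0 → K → R/J → R/(J+H) → 0` and
`0 → K(-d) → R/J → R/I → 0`. The first map of the second one is the composite of `K → R/J` with
multiplication by `f`, which vanishes on Koszul homology on the variables because `f ∈ m`. The two
long exact sequences then determine which bidegrees `(i, e)`, for `e` the internal degree minus `i`,
carry Koszul homology of `R/I`. Depth is read off from the largest such `i`, and regularity from the
largest such `e`.
-/

universe u

/-- The underlying module of the Koszul complex of `M` on the list `l`, built as an iterated mapping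
cone: all homological degrees are lumped together, and `Koszul.piece` separates them. -/
def Koszul {R : Type*} (M : Type u) : List R → Type u
  | [] => M
  | _ :: l => Koszul M l × Koszul M l

namespace Koszul

variable {R : Type*} {M A B C : Type*}

/-- A pair of elements of the complex on `l`, as an element of the cone on `r :: l`. -/
def mk {r : R} {l : List R} (a b : Koszul M l) : Koszul M (r :: l) := (a, b)

theorem exists_eq_mk {r : R} {l : List R} (z : Koszul M (r :: l)) :
    ∃ a b, z = mk a b := ⟨z.1, z.2, rfl⟩

theorem mk_inj {r : R} {l : List R} {a b a' b' : Koszul M l} :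
    mk (r := r) a b = mk a' b' ↔ a = a' ∧ b = b' := Prod.mk_inj

instance instAddCommGroup (M : Type*) [AddCommGroup M] : (l : List R) → AddCommGroup (Koszul M l)
  | [] => inferInstanceAs (AddCommGroup M)
  | _ :: l =>
    letI := instAddCommGroup M l
    inferInstanceAs (AddCommGroup (Koszul M l × Koszul M l))

section Pieces

variable [AddCommGroup M] {ι : Type*} {g : ι → AddSubgroup M} {r : R} {l : List R} {i : ℤ} {e : ι}

theorem mk_zero : mk (r := r) (0 : Koszul M l) 0 = 0 := rfl

theorem mk_add (a b a' b' : Koszul M l) :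
    mk (r := r) a b + mk a' b' = mk (a + a') (b + b') := rfl

/-- The elements of homological degree `i` whose coefficients lie in degree `e` of `M`. Twists are
not recorded: homology at `(i, e)` is what is usually written `Tor_i` in internal degree `e + i`,
so that the regularity is the largest second coordinate. -/
def piece (g : ι → AddSubgroup M) : (l : List R) → ℤ → ι → AddSubgroup (Koszul M l)
  | [], i, e => if i = 0 then g e else (⊥ : AddSubgroup M)
  | _ :: l, i, e => ((piece g l i e).prod (piece g l (i - 1) e) :
      AddSubgroup (Koszul M l × Koszul M l))

theorem mem_piece_nil {z : M} :
    z ∈ (piece g ([] : List R) i e : AddSubgroup M) ↔ (i ≠ 0 → z = 0) ∧ (i = 0 → z ∈ g e) := by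
  by_cases hi : i = 0
  · rw [show piece g ([] : List R) i e = g e from if_pos hi]
    exact ⟨fun h => ⟨fun h' => absurd hi h', fun _ => h⟩, fun h => h.2 hi⟩
  · rw [show piece g ([] : List R) i e = (⊥ : AddSubgroup M) from if_neg hi]
    exact ⟨fun h => ⟨fun _ => h, fun h' => absurd h' hi⟩, fun h => h.1 hi⟩

theorem mk_mem_piece {a b : Koszul M l} :
    mk (r := r) a b ∈ piece g (r :: l) i e ↔ a ∈ piece g l i e ∧ b ∈ piece g l (i - 1) e := Iff.rfl

theorem eq_zero_of_mem_piece_of_neg (hi : i < 0) {z : Koszul M l} (hz : z ∈ piece g l i e) :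
    z = 0 := by
  induction l generalizing i with
  | nil => exact (mem_piece_nil.1 hz).1 hi.ne
  | cons r l ih =>
    obtain ⟨a, b, rfl⟩ := exists_eq_mk z
    rw [ih hi (mk_mem_piece.1 hz).1, ih (by lia) (mk_mem_piece.1 hz).2, mk_zero]

theorem eq_zero_of_mem_piece_of_length_lt (hi : l.length < i) {z : Koszul M l}
    (hz : z ∈ piece g l i e) : z = 0 := by
  induction l generalizing i with
  | nil => exact (mem_piece_nil.1 hz).1 (by simpa using hi.ne')
  | cons r l ih =>
    rw [List.length_cons, Nat.cast_succ] at hi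
    obtain ⟨a, b, rfl⟩ := exists_eq_mk z
    rw [ih (by lia) (mk_mem_piece.1 hz).1, ih (by lia) (mk_mem_piece.1 hz).2, mk_zero]

theorem piece_comp {κ : Type*} (φ : κ → ι) (l : List R) (i : ℤ) (a : κ) :
    piece (fun a => g (φ a)) l i a = piece g l i (φ a) := by
  induction l generalizing i with
  | nil => rfl
  | cons _ l ih => exact congrArg₂ AddSubgroup.prod (ih i) (ih (i - 1))

end Pieces

variable [CommRing R] [AddCommGroup M] [Module R M]
  [AddCommGroup A] [Module R A] [AddCommGroup B] [Module R B] [AddCommGroup C] [Module R C]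

instance instModule (M : Type*) [AddCommGroup M] [Module R M] :
    (l : List R) → Module R (Koszul M l)
  | [] => inferInstanceAs (Module R M)
  | _ :: l =>
    letI := instModule M l
    inferInstanceAs (Module R (Koszul M l × Koszul M l))

/-- The Koszul differential. -/
def d (M : Type*) [AddCommGroup M] [Module R M] : (l : List R) → Koszul M l →ₗ[R] Koszul M l
  | [] => 0
  | r :: l =>
    (((d M l).coprod (r • LinearMap.id)).prod (-(d M l).comp (LinearMap.snd R _ _)) :
      Koszul M l × Koszul M l →ₗ[R] Koszul M l × Koszul M l)

/-- The map of Koszul complexes induced by a linear map. -/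
def map (φ : A →ₗ[R] B) : (l : List R) → Koszul A l →ₗ[R] Koszul B l
  | [] => φ
  | _ :: l => ((map φ l).prodMap (map φ l) : Koszul A l × Koszul A l →ₗ[R] Koszul B l × Koszul B l)

section Complex

variable {r : R} {l : List R}

theorem smul_mk (s : R) (a b : Koszul M l) :
    s • mk (r := r) a b = mk (s • a) (s • b) := rfl

theorem d_mk (a b : Koszul M l) : d M (r :: l) (mk a b) = mk (d M l a + r • b) (-d M l b) := rfl

theorem d_d (z : Koszul M l) : d M l (d M l z) = 0 := by
  induction l with
  | nil => rfl
  | cons r l ih =>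
    obtain ⟨a, b, rfl⟩ := exists_eq_mk z
    simp [d_mk, ih, mk_zero]

theorem map_mk (φ : A →ₗ[R] B) (a b : Koszul A l) :
    map φ (r :: l) (mk a b) = mk (map φ l a) (map φ l b) := rfl

theorem map_d (φ : A →ₗ[R] B) (z : Koszul A l) : map φ l (d A l z) = d B l (map φ l z) := by
  induction l with
  | nil => exact map_zero φ
  | cons r l ih =>
    obtain ⟨a, b, rfl⟩ := exists_eq_mk z
    simp [d_mk, map_mk, ih]

theorem map_injective {φ : A →ₗ[R] B} (h : Function.Injective φ) (l : List R) :
    Function.Injective (map φ l) := by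
  induction l with
  | nil => exact h
  | cons _ l ih => exact Prod.map_injective.2 ⟨ih, ih⟩

theorem map_map_eq_zero {φ : A →ₗ[R] B} {ψ : B →ₗ[R] C} (h : ∀ a, ψ (φ a) = 0)
    (z : Koszul A l) : map ψ l (map φ l z) = 0 := by
  induction l with
  | nil => exact h z
  | cons r l ih =>
    obtain ⟨a, b, rfl⟩ := exists_eq_mk z
    simp [map_mk, ih, mk_zero]

theorem map_id (z : Koszul M l) : map (R := R) LinearMap.id l z = z := by
  induction l with
  | nil => rfl
  | cons r l ih =>
    obtain ⟨a, b, rfl⟩ := exists_eq_mk z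
    rw [map_mk, ih, ih]

theorem map_smul_left (s : R) (φ : A →ₗ[R] B) (z : Koszul A l) :
    map (s • φ) l z = s • map φ l z := by
  induction l with
  | nil => rfl
  | cons r l ih =>
    obtain ⟨a, b, rfl⟩ := exists_eq_mk z
    rw [map_mk, ih, ih, map_mk, smul_mk]

end Complex

section GradedMaps

variable {ι κ : Type*} {gA : κ → AddSubgroup A} {gB : ι → AddSubgroup B} {gC : ι → AddSubgroup C}
  {l : List R} {i : ℤ} {e : ι} {a : κ}

theorem map_mem_piece {φ : A →ₗ[R] B} (h : ∀ x ∈ gA a, φ x ∈ gB e) {z : Koszul A l}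
    (hz : z ∈ piece gA l i a) : map φ l z ∈ piece gB l i e := by
  induction l generalizing i with
  | nil =>
    obtain ⟨h0, hi⟩ := mem_piece_nil.1 hz
    exact mem_piece_nil.2 ⟨fun hi => (congrArg φ (h0 hi)).trans (map_zero φ), fun h' => h _ (hi h')⟩
  | cons r l ih =>
    obtain ⟨x, y, rfl⟩ := exists_eq_mk z
    exact ⟨ih hz.1, ih hz.2⟩

theorem exists_map_eq_of_mem_piece {ψ : B →ₗ[R] C} (h : ∀ c ∈ gC e, ∃ b ∈ gB e, ψ b = c)
    {z : Koszul C l} (hz : z ∈ piece gC l i e) : ∃ y ∈ piece gB l i e, map ψ l y = z := by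
  induction l generalizing i with
  | nil =>
    obtain ⟨h0, hi⟩ := mem_piece_nil.1 hz
    by_cases i0 : i = 0
    · obtain ⟨b, hb, hbz⟩ := h z (hi i0)
      exact ⟨b, mem_piece_nil.2 ⟨fun h => absurd i0 h, fun _ => hb⟩, hbz⟩
    · exact ⟨0, zero_mem _, (map_zero ψ).trans (h0 i0).symm⟩
  | cons r l ih =>
    obtain ⟨x, y, rfl⟩ := exists_eq_mk z
    obtain ⟨x', hx, rfl⟩ := ih hz.1
    obtain ⟨y', hy, rfl⟩ := ih hz.2
    exact ⟨mk x' y', ⟨hx, hy⟩, rfl⟩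

theorem exists_map_eq_of_map_eq_zero {gA : ι → AddSubgroup A} {φ : A →ₗ[R] B} {ψ : B →ₗ[R] C}
    (h : ∀ b ∈ gB e, ψ b = 0 → ∃ a ∈ gA e, φ a = b) {z : Koszul B l} (hz : z ∈ piece gB l i e)
    (h0 : map ψ l z = 0) : ∃ y ∈ piece gA l i e, map φ l y = z := by
  induction l generalizing i with
  | nil =>
    obtain ⟨hz0, hi⟩ := mem_piece_nil.1 hz
    by_cases i0 : i = 0
    · obtain ⟨a, ha, haz⟩ := h z (hi i0) h0
      exact ⟨a, mem_piece_nil.2 ⟨fun h => absurd i0 h, fun _ => ha⟩, haz⟩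
    · exact ⟨0, zero_mem _, (map_zero φ).trans (hz0 i0).symm⟩
  | cons r l ih =>
    obtain ⟨x, y, rfl⟩ := exists_eq_mk z
    rw [map_mk, ← mk_zero, mk_inj] at h0
    obtain ⟨x', hx, rfl⟩ := ih hz.1 h0.1
    obtain ⟨y', hy, rfl⟩ := ih hz.2 h0.2
    exact ⟨mk x' y', ⟨hx, hy⟩, rfl⟩

theorem smul_mem_piece {g : ι → AddSubgroup M} {e e' : ι} {s : R} (h : ∀ m ∈ g e, s • m ∈ g e')
    {z : Koszul M l} (hz : z ∈ piece g l i e) : s • z ∈ piece g l i e' := by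
  rw [← map_id z, ← map_smul_left]
  exact map_mem_piece h hz

theorem exists_nullHomotopy (g : ι → AddSubgroup M) {s : R} (hs : s ∈ l) :
    ∃ h : Koszul M l →ₗ[R] Koszul M l,
      (∀ i e z, z ∈ piece g l i e → h z ∈ piece g l (i + 1) e) ∧
      ∀ z, d M l (h z) + h (d M l z) = s • z := by
  induction l with
  | nil => simp at hs
  | cons r l ih =>
    obtain rfl | hl := List.mem_cons.1 hs
    · refine ⟨((0 : Koszul M l × Koszul M l →ₗ[R] _).prod (LinearMap.fst R _ _) :
        Koszul M l × Koszul M l →ₗ[R] Koszul M l × Koszul M l), fun i e z hz => ?_, fun z => ?_⟩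
      · refine ⟨zero_mem _, ?_⟩
        rw [add_sub_cancel_right]
        exact hz.1
      · obtain ⟨a, b, rfl⟩ := exists_eq_mk z
        change d M (s :: l) (mk 0 a) + mk 0 (d M l a + s • b) = _
        simp [d_mk, mk_add, smul_mk]
    · obtain ⟨h, h_mem, h_eq⟩ := ih hl
      refine ⟨(h.prodMap (-h) : Koszul M l × Koszul M l →ₗ[R] Koszul M l × Koszul M l),
        fun i e z hz => ?_, fun z => ?_⟩
      · refine ⟨h_mem _ _ _ hz.1, AddSubgroup.neg_mem _ ?_⟩
        have hz₂ := h_mem _ _ _ hz.2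
        rwa [sub_add_cancel, ← add_sub_cancel_right i 1] at hz₂
      · obtain ⟨a, b, rfl⟩ := exists_eq_mk z
        change d M (r :: l) (mk (h a) (-h b)) + mk (h (d M l a + r • b)) (-h (-d M l b)) = _
        simp only [d_mk, mk_add, smul_mk, mk_inj, ← h_eq, map_add, map_neg, map_smul]
        exact ⟨by module, by module⟩

end GradedMaps

/-- The inclusion of `M` in homological degree `0`. -/
def bottom (M : Type*) [AddCommGroup M] [Module R M] : (l : List R) → M →ₗ[R] Koszul M l
  | [] => LinearMap.id
  | _ :: l => ((bottom M l).prod 0 : M →ₗ[R] Koszul M l × Koszul M l)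

section Bottom

variable {ι : Type*} {r : R} {l : List R} {g : ι → AddSubgroup M} {e : ι}

theorem bottom_cons (m : M) : bottom M (r :: l) m = mk (bottom M l m) 0 := rfl

theorem bottom_mem_piece {m : M} (hm : m ∈ g e) : bottom M l m ∈ piece g l 0 e := by
  induction l with
  | nil => exact mem_piece_nil.2 ⟨fun h => absurd rfl h, fun _ => hm⟩
  | cons r l ih => exact ⟨ih, zero_mem _⟩

theorem exists_eq_bottom {z : Koszul M l} (hz : z ∈ piece g l 0 e) :
    ∃ m ∈ g e, z = bottom M l m := by
  induction l with
  | nil => exact ⟨z, (mem_piece_nil.1 hz).2 rfl, rfl⟩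
  | cons r l ih =>
    obtain ⟨a, b, rfl⟩ := exists_eq_mk z
    obtain ⟨m, hm, rfl⟩ := ih hz.1
    exact ⟨m, hm, by rw [bottom_cons, eq_zero_of_mem_piece_of_neg (by lia) (mk_mem_piece.1 hz).2]⟩

theorem d_bottom (m : M) : d M l (bottom M l m) = 0 := by
  induction l with
  | nil => rfl
  | cons r l ih => simp [bottom_cons, d_mk, ih, mk_zero]

end Bottom

variable {ι : Type*}

/-- The Koszul cycles at `(i, e)`. -/
def cycles (l : List R) (g : ι → AddSubgroup M) (i : ℤ) (e : ι) : AddSubgroup (Koszul M l) :=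
  piece g l i e ⊓ (LinearMap.ker (d M l)).toAddSubgroup

theorem mem_cycles {l : List R} {g : ι → AddSubgroup M} {i : ℤ} {e : ι} {z : Koszul M l} :
    z ∈ cycles l g i e ↔ z ∈ piece g l i e ∧ d M l z = 0 := Iff.rfl

/-- A short exact sequence `A → B → C` that is exact in each degree. -/
structure GradedExact (gA : ι → AddSubgroup A) (gB : ι → AddSubgroup B) (gC : ι → AddSubgroup C)
    (φ : A →ₗ[R] B) (ψ : B →ₗ[R] C) : Prop where
  injective : Function.Injective φ
  map_mem_left : ∀ e, ∀ a ∈ gA e, φ a ∈ gB e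
  map_mem_right : ∀ e, ∀ b ∈ gB e, ψ b ∈ gC e
  comp_eq_zero : ∀ a, ψ (φ a) = 0
  exact : ∀ e, ∀ b ∈ gB e, ψ b = 0 → ∃ a ∈ gA e, φ a = b
  surjective : ∀ e, ∀ c ∈ gC e, ∃ b ∈ gB e, ψ b = c

namespace GradedExact

variable {gA : ι → AddSubgroup A} {gB : ι → AddSubgroup B} {gC : ι → AddSubgroup C}
  {φ : A →ₗ[R] B} {ψ : B →ₗ[R] C} {l : List R} {i : ℤ} {e : ι}

theorem map_mem_cycles_left (S : GradedExact gA gB gC φ ψ) {z : Koszul A l}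
    (hz : z ∈ cycles l gA i e) : map φ l z ∈ cycles l gB i e :=
  mem_cycles.2 ⟨map_mem_piece (S.map_mem_left e) hz.1, by
    rw [← map_d, hz.2, map_zero]⟩

theorem map_mem_cycles_right (S : GradedExact gA gB gC φ ψ) {z : Koszul B l}
    (hz : z ∈ cycles l gB i e) : map ψ l z ∈ cycles l gC i e :=
  mem_cycles.2 ⟨map_mem_piece (S.map_mem_right e) hz.1, by
    rw [← map_d, hz.2, map_zero]⟩

end GradedExact

variable [AddCommGroupWithOne ι]

/-- Every element of `l` raises the degree of homogeneous elements by one. -/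
def ActsInDegreeOne (l : List R) (g : ι → AddSubgroup M) : Prop :=
  ∀ r ∈ l, ∀ e, ∀ m ∈ g e, r • m ∈ g (e + 1)

theorem ActsInDegreeOne.of_cons {r : R} {l : List R} {g : ι → AddSubgroup M}
    (h : ActsInDegreeOne (r :: l) g) : ActsInDegreeOne l g :=
  fun s hs => h s (List.mem_cons_of_mem r hs)

theorem ActsInDegreeOne.d_mem_piece {l : List R} {g : ι → AddSubgroup M} (h : ActsInDegreeOne l g)
    {i : ℤ} {e : ι} {z : Koszul M l} (hz : z ∈ piece g l i e) :
    d M l z ∈ piece g l (i - 1) (e + 1) := by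
  induction l generalizing i with
  | nil => exact zero_mem _
  | cons r l ih =>
    obtain ⟨a, b, rfl⟩ := exists_eq_mk z
    exact ⟨add_mem (ih h.of_cons hz.1) (smul_mem_piece (h r List.mem_cons_self e) hz.2),
      AddSubgroup.neg_mem _ (ih h.of_cons hz.2)⟩

/-- The Koszul boundaries at `(i, e)`. -/
def boundaries (l : List R) (g : ι → AddSubgroup M) (i : ℤ) (e : ι) : AddSubgroup (Koszul M l) :=
  (piece g l (i + 1) (e - 1)).map (d M l).toAddMonoidHom

/-- The bidegrees in which the Koszul homology of `M` does not vanish. -/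
def support (l : List R) (g : ι → AddSubgroup M) : Set (ℤ × ι) :=
  {x | ¬ cycles l g x.1 x.2 ≤ boundaries l g x.1 x.2}

section Support

variable {l : List R} {g : ι → AddSubgroup M} {i : ℤ} {e : ι}

theorem mem_boundaries {z : Koszul M l} :
    z ∈ boundaries l g i e ↔ ∃ w ∈ piece g l (i + 1) (e - 1), d M l w = z := Iff.rfl

theorem d_mem_boundaries {w : Koszul M l} (hw : w ∈ piece g l (i + 1) e) :
    d M l w ∈ boundaries l g i (e + 1) :=
  ⟨w, by rwa [add_sub_cancel_right], rfl⟩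

theorem notMem_support : (i, e) ∉ support l g ↔ cycles l g i e ≤ boundaries l g i e := not_not

theorem nonneg_of_mem_support (h : (i, e) ∈ support l g) : 0 ≤ i := by
  contrapose! h
  exact notMem_support.2 fun z hz => (eq_zero_of_mem_piece_of_neg h hz.1) ▸ zero_mem _

theorem le_length_of_mem_support (h : (i, e) ∈ support l g) : i ≤ l.length := by
  contrapose! h
  exact notMem_support.2 fun z hz => (eq_zero_of_mem_piece_of_length_lt h hz.1) ▸ zero_mem _

theorem support_eq_empty_of_subsingleton [Subsingleton M] : support l g = ∅ := by
  have : Subsingleton (Koszul M l) := by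
    induction l with
    | nil => assumption
    | cons r l ih => exact inferInstanceAs (Subsingleton (Koszul M l × Koszul M l))
  exact Set.eq_empty_of_forall_notMem fun x hx => hx fun z _ => Subsingleton.elim 0 z ▸ zero_mem _

theorem cycles_shift (a : ι) :
    cycles l (fun e => g (e - a)) i e = cycles l g i (e - a) :=
  congrArg (· ⊓ _) (piece_comp (fun e => e - a) l i e)

theorem mem_support_shift (a : ι) :
    (i, e) ∈ support l (fun e => g (e - a)) ↔ (i, e - a) ∈ support l g := by
  simp only [support, cycles, boundaries, Set.mem_ofPred_eq, piece_comp (g := g) (fun e => e - a),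
    sub_right_comm e 1 a]

theorem smul_mem_boundaries {s : R} (hs : s ∈ l) {z : Koszul M l} (hz : z ∈ cycles l g i e) :
    s • z ∈ boundaries l g i (e + 1) := by
  obtain ⟨h, h_mem, h_eq⟩ := exists_nullHomotopy g hs
  rw [← h_eq, hz.2, map_zero, add_zero]
  exact d_mem_boundaries (h_mem i e z hz.1)

end Support

namespace GradedExact

variable {gA : ι → AddSubgroup A} {gB : ι → AddSubgroup B} {gC : ι → AddSubgroup C}
  {φ : A →ₗ[R] B} {ψ : B →ₗ[R] C} {l : List R} {i : ℤ} {e : ι}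

theorem map_mem_boundaries_left (S : GradedExact gA gB gC φ ψ) {z : Koszul A l}
    (hz : z ∈ boundaries l gA i e) : map φ l z ∈ boundaries l gB i e := by
  obtain ⟨w, hw, rfl⟩ := hz
  exact ⟨map φ l w, map_mem_piece (S.map_mem_left _) hw, (map_d φ w).symm⟩

theorem map_mem_boundaries_right (S : GradedExact gA gB gC φ ψ) {z : Koszul B l}
    (hz : z ∈ boundaries l gB i e) : map ψ l z ∈ boundaries l gC i e := by
  obtain ⟨w, hw, rfl⟩ := hz
  exact ⟨map ψ l w, map_mem_piece (S.map_mem_right _) hw, (map_d ψ w).symm⟩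

theorem exists_cycle_of_map_mem_boundaries (S : GradedExact gA gB gC φ ψ)
    (hB : ActsInDegreeOne l gB) {z : Koszul B l} (hz : z ∈ cycles l gB i e)
    (h : map ψ l z ∈ boundaries l gC i e) :
    ∃ u ∈ cycles l gA i e, z - map φ l u ∈ boundaries l gB i e := by
  obtain ⟨_, hw, hwz⟩ := mem_boundaries.1 h
  obtain ⟨y, hy, rfl⟩ := exists_map_eq_of_mem_piece (S.surjective _) hw
  have hdy := hB.d_mem_piece hy
  rw [add_sub_cancel_right, sub_add_cancel] at hdy
  obtain ⟨u, hu, huz⟩ := exists_map_eq_of_map_eq_zero (S.exact e) (sub_mem hz.1 hdy)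
    (by rw [map_sub, map_d, hwz, sub_self])
  refine ⟨u, ⟨hu, map_injective S.injective l ?_⟩, y, hy, by simp [huz]⟩
  rw [map_d, huz, map_sub, hz.2, d_d, sub_zero, map_zero]

/-- The connecting homomorphism, as a relation: `d` of a lift `y` of a cycle of `C` comes from a
cycle `u` of `A`. -/
theorem exists_connecting (S : GradedExact gA gB gC φ ψ) (hB : ActsInDegreeOne l gB)
    {z : Koszul C l} (hz : z ∈ cycles l gC i e) :
    ∃ y ∈ piece gB l i e, ∃ u ∈ cycles l gA (i - 1) (e + 1),
      map ψ l y = z ∧ map φ l u = d B l y := by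
  obtain ⟨y, hy, rfl⟩ := exists_map_eq_of_mem_piece (S.surjective e) hz.1
  obtain ⟨u, hu, huy⟩ := exists_map_eq_of_map_eq_zero (S.exact _) (hB.d_mem_piece hy)
    (by rw [map_d]; exact hz.2)
  exact ⟨y, hy, u, ⟨hu, map_injective S.injective l (by rw [map_d, huy, d_d, map_zero])⟩, rfl, huy⟩

theorem mem_support_middle (S : GradedExact gA gB gC φ ψ) (hB : ActsInDegreeOne l gB)
    (h : (i, e) ∈ support l gB) : (i, e) ∈ support l gA ∨ (i, e) ∈ support l gC := by
  contrapose! h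
  obtain ⟨hA, hC⟩ := And.imp notMem_support.1 notMem_support.1 h
  refine notMem_support.2 fun z hz => ?_
  obtain ⟨u, hu, huz⟩ :=
    S.exists_cycle_of_map_mem_boundaries hB hz (hC (S.map_mem_cycles_right hz))
  simpa using add_mem huz (S.map_mem_boundaries_left (hA hu))

theorem mem_support_right (S : GradedExact gA gB gC φ ψ) (hB : ActsInDegreeOne l gB)
    (h : (i, e) ∈ support l gC) : (i, e) ∈ support l gB ∨ (i - 1, e + 1) ∈ support l gA := by
  contrapose! h
  obtain ⟨hB', hA⟩ := And.imp notMem_support.1 notMem_support.1 h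
  refine notMem_support.2 fun z hz => ?_
  obtain ⟨y, hy, u, hu, rfl, huy⟩ := S.exists_connecting hB hz
  obtain ⟨v, hv, rfl⟩ := mem_boundaries.1 (hA hu)
  rw [sub_add_cancel, add_sub_cancel_right] at hv
  have hcycle : y - map φ l v ∈ cycles l gB i e :=
    mem_cycles.2 ⟨sub_mem hy (map_mem_piece (S.map_mem_left e) hv), by
      rw [map_sub, ← map_d, huy, sub_self]⟩
  simpa [map_map_eq_zero S.comp_eq_zero] using S.map_mem_boundaries_right (hB' hcycle)

theorem mem_boundaries_of_map_mem_boundaries (S : GradedExact gA gB gC φ ψ)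
    (hB : ActsInDegreeOne l gB) (hC : (i + 1, e - 1) ∉ support l gC) {z : Koszul A l}
    (h : map φ l z ∈ boundaries l gB i e) : z ∈ boundaries l gA i e := by
  obtain ⟨w, hw, hwz⟩ := mem_boundaries.1 h
  have hψw : map ψ l w ∈ cycles l gC (i + 1) (e - 1) :=
    mem_cycles.2 ⟨map_mem_piece (S.map_mem_right _) hw, by
      rw [← map_d, hwz, map_map_eq_zero S.comp_eq_zero]⟩
  obtain ⟨c, hc, hyw⟩ := mem_boundaries.1 (notMem_support.1 hC hψw)
  obtain ⟨y, hy, rfl⟩ := exists_map_eq_of_mem_piece (S.surjective _) hc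
  have hdy := hB.d_mem_piece hy
  rw [add_sub_cancel_right, sub_add_cancel] at hdy
  obtain ⟨u, hu, huz⟩ := exists_map_eq_of_map_eq_zero (S.exact _) (sub_mem hw hdy)
    (by rw [map_sub, map_d, hyw, sub_self])
  refine ⟨u, hu, map_injective S.injective l ?_⟩
  change map φ l (d A l u) = _
  rw [map_d, huz, map_sub, hwz, d_d, sub_zero]

theorem mem_support_left (S : GradedExact gA gB gC φ ψ) (hB : ActsInDegreeOne l gB)
    (h : (i, e) ∈ support l gA) : (i, e) ∈ support l gB ∨ (i + 1, e - 1) ∈ support l gC := by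
  contrapose! h
  exact notMem_support.2 fun z hz => S.mem_boundaries_of_map_mem_boundaries hB h.2
    (notMem_support.1 h.1 (S.map_mem_cycles_left hz))

theorem mem_support_right_of_map_mem_boundaries (S : GradedExact gA gB gC φ ψ)
    (hB : ActsInDegreeOne l gB) (hφ : ∀ z ∈ cycles l gA i e, map φ l z ∈ boundaries l gB i e)
    (h : (i, e) ∈ support l gB) : (i, e) ∈ support l gC := by
  contrapose! h
  refine notMem_support.2 fun z hz => ?_
  obtain ⟨u, hu, huz⟩ :=
    S.exists_cycle_of_map_mem_boundaries hB hz (notMem_support.1 h (S.map_mem_cycles_right hz))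
  simpa using add_mem huz (hφ u hu)

theorem mem_support_right_of_mem_support_left (S : GradedExact gA gB gC φ ψ)
    (hB : ActsInDegreeOne l gB) (hφ : ∀ z ∈ cycles l gA i e, map φ l z ∈ boundaries l gB i e)
    (h : (i, e) ∈ support l gA) : (i + 1, e - 1) ∈ support l gC := by
  contrapose! h
  exact notMem_support.2 fun z hz => S.mem_boundaries_of_map_mem_boundaries hB h (hφ z hz)

end GradedExact

/-- The degree `e` part of `l • M`, for `l` acting in degree one. -/
def decomposables (l : List R) (g : ι → AddSubgroup M) (e : ι) : AddSubgroup M :=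
  ⨆ r ∈ l, (g (e - 1)).map (DistribSMul.toAddMonoidHom M r)

section HomologyZero

variable {r : R} {l : List R} {g : ι → AddSubgroup M} {e : ι}

theorem decomposables_le {N : AddSubgroup M} :
    decomposables l g e ≤ N ↔ ∀ r ∈ l, ∀ m ∈ g (e - 1), r • m ∈ N := by
  simp only [decomposables, iSup_le_iff, AddSubgroup.map_le_iff_le_comap]
  rfl

theorem smul_mem_decomposables (hr : r ∈ l) {m : M} (hm : m ∈ g (e - 1)) :
    r • m ∈ decomposables l g e :=
  decomposables_le.1 le_rfl r hr m hm

theorem mem_decomposables_cons {m : M} :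
    m ∈ decomposables (r :: l) g e ↔ ∃ b ∈ g (e - 1), m - r • b ∈ decomposables l g e := by
  have h : decomposables (r :: l) g e =
      (g (e - 1)).map (DistribSMul.toAddMonoidHom M r) ⊔ decomposables l g e := by
    simp only [decomposables, List.mem_cons, iSup_or, iSup_sup_eq, iSup_iSup_eq_left]
  rw [h, AddSubgroup.mem_sup]
  constructor
  · rintro ⟨_, ⟨b, hb, rfl⟩, a, ha, rfl⟩
    exact ⟨b, hb, by simpa using ha⟩
  · rintro ⟨b, hb, h⟩
    exact ⟨r • b, ⟨b, hb, rfl⟩, _, h, add_sub_cancel _ m⟩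

theorem bottom_mem_boundaries_iff {m : M} :
    bottom M l m ∈ boundaries l g 0 e ↔ m ∈ decomposables l g e := by
  induction l generalizing m with
  | nil =>
    simp only [mem_boundaries, decomposables, List.not_mem_nil, iSup_false, iSup_bot,
      AddSubgroup.mem_bot]
    exact ⟨fun ⟨_, _, h⟩ => h.symm, fun h => ⟨0, zero_mem _, h.symm⟩⟩
  | cons r l ih =>
    simp only [mem_decomposables_cons, ← ih, mem_boundaries, map_sub, map_smul]
    constructor
    · rintro ⟨w, hw, h⟩
      obtain ⟨a, b, rfl⟩ := exists_eq_mk w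
      obtain ⟨ha, hb⟩ := mk_mem_piece.1 hw
      rw [zero_add, sub_self] at hb
      obtain ⟨b', hb', rfl⟩ := exists_eq_bottom hb
      rw [d_mk, bottom_cons, mk_inj] at h
      exact ⟨b', hb', a, ha, eq_sub_of_add_eq h.1⟩
    · rintro ⟨b, hb, a, ha, h⟩
      refine ⟨mk a (bottom M l b), ⟨ha, ?_⟩, ?_⟩
      · rw [zero_add, sub_self]
        exact bottom_mem_piece hb
      · simp [d_mk, h, d_bottom, bottom_cons]

theorem zero_mem_support_iff : (0, e) ∈ support l g ↔ ¬ g e ≤ decomposables l g e := by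
  refine not_congr ⟨fun h m hm => ?_, fun h z hz => ?_⟩
  · exact bottom_mem_boundaries_iff.1 (h (mem_cycles.2 ⟨bottom_mem_piece hm, d_bottom m⟩))
  · obtain ⟨m, hm, rfl⟩ := exists_eq_bottom hz.1
    exact bottom_mem_boundaries_iff.2 (h hm)

end HomologyZero

end Koszul

/-- A grading of an additive group by `ι`, encoded by the projections onto its homogeneous
components, which pass to submodules and quotients more readily than a direct sum decomposition. -/
structure Grading (ι : Type*) (M : Type*) [AddCommGroup M] where
  proj : ι → M →+ M
  proj_proj_self : ∀ e m, proj e (proj e m) = proj e m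
  proj_proj_of_ne : ∀ e a m, e ≠ a → proj e (proj a m) = 0
  exists_sum_proj : ∀ m, ∃ s : Finset ι, ∑ e ∈ s, proj e m = m

namespace Grading

variable {ι M : Type*} [AddCommGroup M]

/-- The homogeneous elements of degree `e`. -/
def piece (G : Grading ι M) (e : ι) : AddSubgroup M := (G.proj e).range

section Basic

variable (G : Grading ι M) {e a : ι} {m : M}

theorem mem_piece : m ∈ G.piece e ↔ G.proj e m = m :=
  ⟨fun ⟨x, hx⟩ => hx ▸ G.proj_proj_self e x, fun h => ⟨m, h⟩⟩

theorem proj_mem_piece (e : ι) (m : M) : G.proj e m ∈ G.piece e := ⟨m, rfl⟩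

variable {G} in
theorem proj_eq_zero_of_ne (hm : m ∈ G.piece a) (h : e ≠ a) : G.proj e m = 0 := by
  rw [← G.mem_piece.1 hm, G.proj_proj_of_ne e a m h]

theorem sum_proj_of_subset {s t : Finset ι} (hs : ∑ e ∈ s, G.proj e m = m) (hst : s ⊆ t) :
    ∑ e ∈ t, G.proj e m = m := by
  rw [← Finset.sum_subset hst, hs]
  intro e _ he
  rw [← hs, map_sum]
  exact Finset.sum_eq_zero fun a ha => G.proj_proj_of_ne e a m (ne_of_mem_of_not_mem ha he).symm

theorem induction_on {P : M → Prop} (m : M) (homogeneous : ∀ e, ∀ x ∈ G.piece e, P x) (zero : P 0)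
    (add : ∀ x y, P x → P y → P (x + y)) : P m := by
  obtain ⟨s, hs⟩ := G.exists_sum_proj m
  rw [← hs]
  exact Finset.sum_induction _ P add zero fun e _ => homogeneous e _ (G.proj_mem_piece e m)

end Basic

/-- The grading of `M` by a one-element type: it makes the graded results available for modules
without a grading. -/
def trivial (M : Type*) [AddCommGroup M] : Grading Unit M where
  proj _ := .id M
  proj_proj_self _ _ := rfl
  proj_proj_of_ne _ _ _ h := absurd rfl h
  exists_sum_proj m := ⟨{()}, by simp⟩

theorem mem_piece_trivial (m : M) : m ∈ (trivial M).piece () := ⟨m, rfl⟩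

theorem eq_trivial (G : Grading Unit M) : G = trivial M := by
  have hproj : G.proj = (trivial M).proj := by
    ext ⟨⟩ m
    obtain ⟨s, hs⟩ := G.exists_sum_proj m
    exact (by simpa using G.sum_proj_of_subset hs s.subset_univ : G.proj () m = m)
  cases G
  cases hproj
  rfl

/-- The grading of the twist `M(-a)`. -/
def shift [AddGroup ι] (G : Grading ι M) (a : ι) : Grading ι M where
  proj e := G.proj (e - a)
  proj_proj_self e := G.proj_proj_self (e - a)
  proj_proj_of_ne e b m h := G.proj_proj_of_ne _ _ m (sub_left_injective.ne h)
  exists_sum_proj m := by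
    obtain ⟨s, hs⟩ := G.exists_sum_proj m
    exact ⟨s.map (Equiv.addRight a).toEmbedding, by simpa using hs⟩

/-- The product grading. -/
def pi {κ : Type*} [Fintype κ] {N : κ → Type*} [∀ r, AddCommGroup (N r)]
    (G : ∀ r, Grading ι (N r)) : Grading ι (∀ r, N r) where
  proj e := AddMonoidHom.pi fun r => ((G r).proj e).comp (Pi.evalAddMonoidHom N r)
  proj_proj_self e m := funext fun r => (G r).proj_proj_self e (m r)
  proj_proj_of_ne e a m h := funext fun r => (G r).proj_proj_of_ne e a (m r) h
  exists_sum_proj m := by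
    classical
    choose s hs using fun r => (G r).exists_sum_proj (m r)
    refine ⟨Finset.univ.biUnion s, funext fun r => ?_⟩
    rw [Finset.sum_apply]
    exact (G r).sum_proj_of_subset (hs r) (Finset.subset_biUnion_of_mem s (Finset.mem_univ r))

section Submodules

variable {R : Type*} [Ring R] [Module R M] (G : Grading ι M)

/-- `N` contains the homogeneous components of its elements. -/
def IsHomogeneous (N : Submodule R M) : Prop := ∀ e, ∀ m ∈ N, G.proj e m ∈ N

variable {G} {N : Submodule R M}

/-- The grading of a homogeneous submodule. -/
def restrict (hN : G.IsHomogeneous N) : Grading ι N where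
  proj e := .mk' (fun m => ⟨G.proj e m, hN e m m.2⟩) fun x y => Subtype.ext (map_add _ x.1 y.1)
  proj_proj_self e m := Subtype.ext (G.proj_proj_self e m)
  proj_proj_of_ne e a m h := Subtype.ext (G.proj_proj_of_ne e a m h)
  exists_sum_proj m := by
    obtain ⟨s, hs⟩ := G.exists_sum_proj (m : M)
    exact ⟨s, Subtype.ext (by simpa using hs)⟩

/-- The grading of the quotient by a homogeneous submodule. -/
def quotient (hN : G.IsHomogeneous N) : Grading ι (M ⧸ N) where
  proj e := QuotientAddGroup.map N.toAddSubgroup N.toAddSubgroup (G.proj e) (hN e)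
  proj_proj_self e m := by
    obtain ⟨m, rfl⟩ := N.mkQ_surjective m
    exact congrArg N.mkQ (G.proj_proj_self e m)
  proj_proj_of_ne e a m h := by
    obtain ⟨m, rfl⟩ := N.mkQ_surjective m
    exact congrArg N.mkQ (G.proj_proj_of_ne e a m h)
  exists_sum_proj m := by
    obtain ⟨m, rfl⟩ := N.mkQ_surjective m
    obtain ⟨s, hs⟩ := G.exists_sum_proj m
    exact ⟨s, (map_sum N.mkQ _ s).symm.trans (congrArg N.mkQ hs)⟩

theorem factor_proj {P : Submodule R M} (hN : G.IsHomogeneous N) (hP : G.IsHomogeneous P)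
    (h : N ≤ P) (e : ι) (x : M ⧸ N) :
    Submodule.factor h ((quotient hN).proj e x) = (quotient hP).proj e (Submodule.factor h x) := by
  obtain ⟨m, rfl⟩ := N.mkQ_surjective x
  rfl

theorem IsHomogeneous.sup {P : Submodule R M} (hN : G.IsHomogeneous N) (hP : G.IsHomogeneous P) :
    G.IsHomogeneous (N ⊔ P) := fun e m hm => by
  obtain ⟨x, hx, y, hy, rfl⟩ := Submodule.mem_sup.1 hm
  rw [map_add]
  exact Submodule.add_mem_sup (hN e x hx) (hP e y hy)

theorem IsHomogeneous.ker {M' : Type*} [AddCommGroup M'] [Module R M'] {G' : Grading ι M'}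
    {φ : M →ₗ[R] M'} (hφ : ∀ e m, φ (G.proj e m) = G'.proj e (φ m)) :
    G.IsHomogeneous (LinearMap.ker φ) := fun e m hm => by
  rw [LinearMap.mem_ker, hφ, LinearMap.mem_ker.1 hm, map_zero]

theorem IsHomogeneous.range {M' : Type*} [AddCommGroup M'] [Module R M'] {G' : Grading ι M'}
    {φ : M →ₗ[R] M'} (hφ : ∀ e m, φ (G.proj e m) = G'.proj e (φ m)) :
    G'.IsHomogeneous (LinearMap.range φ) := by
  rintro e _ ⟨m, rfl⟩
  exact ⟨G.proj e m, hφ e m⟩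

end Submodules

variable {R : Type*} [CommRing R] [Module R M]

/-- Multiplication by a homogeneous ring element of degree `a` shifts the components of elements of
`M` by `a`. -/
def IsModuleGrading [Sub ι] (GR : Grading ι R) (G : Grading ι M) : Prop :=
  ∀ a, ∀ p ∈ GR.piece a, ∀ e (m : M), G.proj e (p • m) = p • G.proj (e - a) m

theorem IsHomogeneous.span_singleton_mul [Sub ι] {GR : Grading ι R} {H : Ideal R}
    (hH : GR.IsHomogeneous H) (hR : GR.IsModuleGrading GR) {a : ι} {f : R} (hf : f ∈ GR.piece a) :
    GR.IsHomogeneous (Ideal.span {f} * H) := fun e m hm => by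
  obtain ⟨h, hh, rfl⟩ := Ideal.mem_span_singleton_mul.1 hm
  exact Ideal.mem_span_singleton_mul.2 ⟨_, hH (e - a) h hh, (hR a f hf e h).symm⟩

namespace IsModuleGrading

theorem trivial : (Grading.trivial R).IsModuleGrading (Grading.trivial M) :=
  fun _ _ _ _ _ => rfl

variable [AddCommGroup ι] {GR : Grading ι R} {G : Grading ι M}

theorem smul_mem_piece (hG : GR.IsModuleGrading G) {a e : ι} {p : R} {m : M} (hp : p ∈ GR.piece a)
    (hm : m ∈ G.piece e) : p • m ∈ G.piece (e + a) := by
  rw [mem_piece, hG a p hp, add_sub_cancel_right, G.mem_piece.1 hm]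

theorem proj_smul_of_mem_piece (hG : GR.IsModuleGrading G) {a : ι} {m : M} (hm : m ∈ G.piece a)
    (e : ι) (p : R) : G.proj e (p • m) = GR.proj (e - a) p • m := by
  induction p using GR.induction_on with
  | homogeneous b p hp =>
    rw [hG b p hp]
    by_cases h : e - b = a
    · rw [h, G.mem_piece.1 hm, show e - a = b by rw [← h, sub_sub_cancel], GR.mem_piece.1 hp]
    · have h' : e - a ≠ b := fun h' => h (by rw [← h', sub_sub_cancel])
      rw [proj_eq_zero_of_ne hm h, proj_eq_zero_of_ne hp h', smul_zero, zero_smul]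
  | zero => simp
  | add p q hp hq => rw [add_smul, map_add, hp, hq, map_add, add_smul]

theorem shift (hG : GR.IsModuleGrading G) (a : ι) : GR.IsModuleGrading (G.shift a) :=
  fun b p hp e m => (hG b p hp (e - a) m).trans (by rw [sub_right_comm]; rfl)

theorem pi {κ : Type*} [Fintype κ] {N : κ → Type*} [∀ r, AddCommGroup (N r)] [∀ r, Module R (N r)]
    {G : ∀ r, Grading ι (N r)} (hG : ∀ r, GR.IsModuleGrading (G r)) :
    GR.IsModuleGrading (Grading.pi G) :=
  fun a p hp e m => funext fun r => hG r a p hp e (m r)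

theorem restrict (hG : GR.IsModuleGrading G) {N : Submodule R M} (hN : G.IsHomogeneous N) :
    GR.IsModuleGrading (restrict hN) :=
  fun a p hp e m => Subtype.ext (hG a p hp e m)

theorem quotient (hG : GR.IsModuleGrading G) {N : Submodule R M} (hN : G.IsHomogeneous N) :
    GR.IsModuleGrading (quotient hN) := fun a p hp e m => by
  obtain ⟨m, rfl⟩ := N.mkQ_surjective m
  exact congrArg N.mkQ (hG a p hp e m)

theorem actsInDegreeOne {κ : Type*} [AddCommGroupWithOne κ] {GR : Grading κ R} {G : Grading κ M}
    (hG : GR.IsModuleGrading G) {l : List R} (hl : ∀ r ∈ l, r ∈ GR.piece 1) :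
    Koszul.ActsInDegreeOne l G.piece :=
  fun r hr _ _ hm => hG.smul_mem_piece (hl r hr) hm

end IsModuleGrading

end Grading

namespace Koszul

variable {ι R M : Type*} [CommRing R] [AddCommGroup M] [Module R M]

theorem GradedExact.of_exact {A B C : Type*} [AddCommGroup A] [Module R A] [AddCommGroup B]
    [Module R B] [AddCommGroup C] [Module R C] {GA : Grading ι A} {GB : Grading ι B}
    {GC : Grading ι C} {φ : A →ₗ[R] B} {ψ : B →ₗ[R] C} (hφ : Function.Injective φ)
    (hφψ : Function.Exact φ ψ) (hψ : Function.Surjective ψ)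
    (φ_proj : ∀ e a, φ (GA.proj e a) = GB.proj e (φ a))
    (ψ_proj : ∀ e b, ψ (GB.proj e b) = GC.proj e (ψ b)) :
    GradedExact GA.piece GB.piece GC.piece φ ψ where
  injective := hφ
  map_mem_left e a ha := by rw [GB.mem_piece, ← φ_proj, GA.mem_piece.1 ha]
  map_mem_right e b hb := by rw [GC.mem_piece, ← ψ_proj, GB.mem_piece.1 hb]
  comp_eq_zero := hφψ.apply_apply_eq_zero
  exact e b hb h := by
    obtain ⟨a, rfl⟩ := (hφψ b).1 h
    exact ⟨GA.proj e a, GA.proj_mem_piece e a, by rw [φ_proj, GB.mem_piece.1 hb]⟩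
  surjective e c hc := by
    obtain ⟨b, rfl⟩ := hψ c
    exact ⟨GB.proj e b, GB.proj_mem_piece e b, by rw [ψ_proj, GC.mem_piece.1 hc]⟩

variable [AddCommGroupWithOne ι] {GR : Grading ι R} {G : Grading ι M} {l : List R}

theorem decomposables_le_smul_top {g : ι → AddSubgroup M} {e : ι} :
    decomposables l g e ≤ (Ideal.ofList l • ⊤ : Submodule R M).toAddSubgroup :=
  decomposables_le.2 fun _ hr _ _ =>
    Submodule.smul_mem_smul (Ideal.subset_span hr) Submodule.mem_top

theorem proj_mem_decomposables (hG : GR.IsModuleGrading G) (hl : ∀ r ∈ l, r ∈ GR.piece 1) (e : ι)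
    {m : M} (hm : m ∈ Ideal.ofList l • (⊤ : Submodule R M)) :
    G.proj e m ∈ decomposables l G.piece e := by
  induction hm using Submodule.smul_induction_on' with
  | add x _ y _ hx hy => rw [map_add]; exact add_mem hx hy
  | smul r hr m _ =>
    induction hr using Submodule.span_induction generalizing m with
    | mem r hr =>
      rw [hG 1 r (hl r hr)]
      exact smul_mem_decomposables hr (G.proj_mem_piece _ m)
    | zero => rw [zero_smul, map_zero]; exact zero_mem _
    | add x y _ _ hx hy =>
      rw [add_smul, map_add]
      exact add_mem (hx m Submodule.mem_top) (hy m Submodule.mem_top)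
    | smul a x _ hx =>
      rw [smul_assoc, smul_comm]
      exact hx (a • m) Submodule.mem_top

theorem zero_mem_support_iff_smul_top (hG : GR.IsModuleGrading G) (hl : ∀ r ∈ l, r ∈ GR.piece 1)
    {e : ι} : (0, e) ∈ support l G.piece ↔
      ¬ G.piece e ≤ (Ideal.ofList l • ⊤ : Submodule R M).toAddSubgroup := by
  rw [zero_mem_support_iff]
  refine not_congr ⟨fun h => h.trans decomposables_le_smul_top, fun h m hm => ?_⟩
  rw [← G.mem_piece.1 hm]
  exact proj_mem_decomposables hG hl e (h hm)

theorem bottom_mem_boundaries_of_isSMulRegular (hG : GR.IsModuleGrading G)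
    (hl : ∀ s ∈ l, s ∈ GR.piece 1) {r : R}
    (hr : IsSMulRegular (M ⧸ (Ideal.ofList l • ⊤ : Submodule R M)) r) {e : ι} {m : M}
    (hm : m ∈ G.piece e) (h : r • bottom M l m ∈ boundaries l G.piece 0 (e + 1)) :
    bottom M l m ∈ boundaries l G.piece 0 e := by
  rw [← map_smul, bottom_mem_boundaries_iff] at h
  have hm_smul_top : m ∈ (Ideal.ofList l • ⊤ : Submodule R M) :=
    mem_of_isSMulRegular_quotient_of_smul_mem hr (decomposables_le_smul_top h)
  rw [bottom_mem_boundaries_iff, ← G.mem_piece.1 hm]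
  exact proj_mem_decomposables hG hl e hm_smul_top

/-- Weak regularity is imposed on the reversed list because the head of `l` is the last variable
adjoined to the iterated cone. -/
theorem notMem_support_of_isWeaklyRegular (hG : GR.IsModuleGrading G)
    (hl : ∀ r ∈ l, r ∈ GR.piece 1) (hreg : RingTheory.Sequence.IsWeaklyRegular M l.reverse)
    {i : ℤ} (hi : 1 ≤ i) {e : ι} : (i, e) ∉ support l G.piece := by
  induction l generalizing i e with
  | nil => exact fun h => absurd (le_length_of_mem_support h) (by simp; lia)
  | cons r l ih =>
    rw [List.reverse_cons, RingTheory.Sequence.isWeaklyRegular_append_iff,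
      RingTheory.Sequence.isWeaklyRegular_singleton_iff] at hreg
    obtain ⟨hreg_l, hreg_r⟩ := hreg
    have hl' : ∀ s ∈ l, s ∈ GR.piece 1 := fun s hs => hl s (List.mem_cons_of_mem r hs)
    refine notMem_support.2 fun z hz => ?_
    obtain ⟨a, b, rfl⟩ := exists_eq_mk z
    obtain ⟨⟨ha, hb⟩, hdz⟩ := mem_cycles.1 hz
    rw [d_mk, ← mk_zero, mk_inj, neg_eq_zero] at hdz
    have hb_cycle : b ∈ cycles l G.piece (i - 1) e := mem_cycles.2 ⟨hb, hdz.2⟩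
    have hb_boundary : b ∈ boundaries l G.piece (i - 1) e := by
      obtain rfl | hi := hi.eq_or_lt'
      · rw [sub_self] at hb hb_cycle ⊢
        obtain ⟨m, hm, rfl⟩ := exists_eq_bottom hb
        rw [show Ideal.ofList l.reverse = Ideal.ofList l by simp [Ideal.ofList]] at hreg_r
        refine bottom_mem_boundaries_of_isSMulRegular hG hl' hreg_r hm ?_
        rw [eq_neg_of_add_eq_zero_right hdz.1, ← map_neg]
        exact d_mem_boundaries (neg_mem ha)
      · exact notMem_support.1 (ih hl' hreg_l (by lia)) hb_cycle
    obtain ⟨c, hc, rfl⟩ := mem_boundaries.1 hb_boundary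
    rw [sub_add_cancel] at hc
    have hac : a + r • c ∈ cycles l G.piece i e := by
      refine mem_cycles.2 ⟨add_mem ha ?_, by rw [map_add, map_smul, hdz.1]⟩
      refine smul_mem_piece (fun m hm => ?_) hc
      simpa using hG.smul_mem_piece (hl r List.mem_cons_self) hm
    obtain ⟨y, hy, hya⟩ := mem_boundaries.1 (notMem_support.1 (ih hl' hreg_l hi) hac)
    refine mem_boundaries.2 ⟨mk y (-c), mk_mem_piece.2 ⟨hy, ?_⟩, ?_⟩
    · rw [add_sub_cancel_right]
      exact AddSubgroup.neg_mem _ hc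
    · simp [d_mk, hya]

end Koszul

namespace Grading

open DirectSum

/-- The grading of an `ℕ`-graded ring, extended by zero to negative degrees. -/
def ofGradedRing {R σ : Type*} [CommRing R] [SetLike σ R] [AddSubmonoidClass σ R] (𝒜 : ℕ → σ)
    [GradedRing 𝒜] : Grading ℤ R where
  proj e := if 0 ≤ e then GradedRing.proj 𝒜 e.toNat else 0
  proj_proj_self e p := by
    split_ifs
    · simp [GradedRing.proj_apply]
    · rfl
  proj_proj_of_ne e a p h := by
    split_ifs
    · simp only [GradedRing.proj_apply]
      exact decompose_of_mem_ne 𝒜 (SetLike.coe_mem _) (by lia)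
    all_goals simp
  exists_sum_proj p := by
    classical
    refine ⟨(decompose 𝒜 p).support.map Nat.castEmbedding, ?_⟩
    simpa [GradedRing.proj_apply] using sum_support_decompose 𝒜 p

section OfGradedRing

variable {R σ : Type*} [CommRing R] [SetLike σ R] [AddSubmonoidClass σ R] {𝒜 : ℕ → σ}
  [GradedRing 𝒜]

theorem ofGradedRing_proj_natCast (a : ℕ) (p : R) :
    (ofGradedRing 𝒜).proj a p = decompose 𝒜 p a := by
  simp [ofGradedRing, GradedRing.proj_apply]

theorem mem_ofGradedRing_piece_natCast {a : ℕ} {p : R} :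
    p ∈ (ofGradedRing 𝒜).piece a ↔ p ∈ 𝒜 a := by
  rw [mem_piece, ofGradedRing_proj_natCast]
  exact ⟨fun h => h ▸ SetLike.coe_mem _, decompose_of_mem_same 𝒜⟩

theorem ofGradedRing_piece_of_neg {e : ℤ} (he : e < 0) : (ofGradedRing 𝒜).piece e = ⊥ := by
  refine (AddSubgroup.eq_bot_iff_forall _).2 fun p hp => ?_
  rw [← (mem_piece _).1 hp]
  simp [ofGradedRing, he.not_ge]

variable (𝒜) in
theorem mem_ofGradedRing_piece {e : ℤ} {p : R} :
    p ∈ (ofGradedRing 𝒜).piece e ↔ p = 0 ∨ ∃ a : ℕ, (a : ℤ) = e ∧ p ∈ 𝒜 a := by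
  obtain he | he := lt_or_ge e 0
  · rw [ofGradedRing_piece_of_neg he, AddSubgroup.mem_bot]
    exact ⟨.inl, fun h => h.resolve_right fun ⟨a, ha, _⟩ => by lia⟩
  · lift e to ℕ using he
    rw [mem_ofGradedRing_piece_natCast]
    refine ⟨fun h => .inr ⟨e, rfl, h⟩, ?_⟩
    rintro (rfl | ⟨a, ha, h⟩)
    · exact zero_mem _
    · rwa [← Nat.cast_injective ha]

theorem isModuleGrading_ofGradedRing : (ofGradedRing 𝒜).IsModuleGrading (ofGradedRing 𝒜) := by
  intro a p hp e q
  obtain rfl | ⟨a, rfl, hpa⟩ := (mem_ofGradedRing_piece 𝒜).1 hp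
  · simp
  obtain he | he := lt_or_ge e 0
  · simp [ofGradedRing, he.not_ge, show ¬ (a : ℤ) ≤ e by lia]
  · lift e to ℕ using he
    rw [ofGradedRing_proj_natCast, smul_eq_mul, smul_eq_mul]
    by_cases hae : a ≤ e
    · rw [coe_decompose_mul_of_left_mem_of_le 𝒜 hpa hae, ← Nat.cast_sub hae,
        ofGradedRing_proj_natCast]
    · rw [coe_decompose_mul_of_left_mem_of_not_le 𝒜 hpa hae]
      simp [ofGradedRing, show ¬ a ≤ e from hae]

theorem isHomogeneous_ofGradedRing {I : Ideal R} (hI : I.IsHomogeneous 𝒜) :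
    (ofGradedRing 𝒜).IsHomogeneous I := by
  intro e p hp
  obtain he | he := lt_or_ge e 0
  · simp [ofGradedRing, he.not_ge]
  · lift e to ℕ using he
    rw [ofGradedRing_proj_natCast]
    exact hI e hp

end OfGradedRing

end Grading

section Indeterminates

attribute [local instance] MvPolynomial.gradedAlgebra

variable {k : Type*} [Field k] {n : ℕ}

/-- The grading of the polynomial ring by total degree. -/
noncomputable abbrev degreeGrading (k : Type*) [Field k] (n : ℕ) :
    Grading ℤ (MvPolynomial (Fin n) k) :=
  .ofGradedRing (homogeneousSubmodule (Fin n) k)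

/-- The indeterminates, in the order in which they enter the Koszul complex. -/
noncomputable abbrev indeterminates (k : Type*) [Field k] (n : ℕ) : List (MvPolynomial (Fin n) k) :=
  (List.finRange n).map X

theorem homogOfDeg_iff_mem_piece {p : MvPolynomial (Fin n) k} {e : ℤ} :
    HomogOfDeg p e ↔ p ∈ (degreeGrading k n).piece e :=
  (Grading.mem_ofGradedRing_piece (homogeneousSubmodule (Fin n) k)).symm

theorem ofList_indeterminates : Ideal.ofList (indeterminates k n) = mxIdeal k n := by
  simp only [Ideal.ofList, mxIdeal, List.mem_map, List.mem_finRange, true_and]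
  rfl

theorem mem_piece_one_of_mem_indeterminates {p : MvPolynomial (Fin n) k}
    (hp : p ∈ indeterminates k n) : p ∈ (degreeGrading k n).piece 1 := by
  obtain ⟨i, -, rfl⟩ := List.mem_map.1 hp
  exact Grading.mem_ofGradedRing_piece_natCast.2 (isHomogeneous_X k i)

theorem mem_mxIdeal_of_isHomogeneous {d : ℕ} (hd : d ≠ 0) {p : MvPolynomial (Fin n) k}
    (hp : p.IsHomogeneous d) : p ∈ mxIdeal k n := by
  rw [mxIdeal, ← Set.image_univ, mem_ideal_span_X_image]
  intro m hm
  by_contra! h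
  refine hd ?_
  rw [← hp (mem_support_iff.1 hm), show m = 0 from Finsupp.ext fun i => h i trivial, map_zero]

theorem mem_mxIdeal_of_mem_piece {e : ℤ} (he : e ≠ 0) {p : MvPolynomial (Fin n) k}
    (hp : p ∈ (degreeGrading k n).piece e) : p ∈ mxIdeal k n := by
  obtain rfl | ⟨d, rfl, hpd⟩ := homogOfDeg_iff_mem_piece.2 hp
  · exact zero_mem _
  · exact mem_mxIdeal_of_isHomogeneous (by simpa using he) hpd

theorem isUnit_of_isHomogeneous_zero {p : MvPolynomial (Fin n) k} (hp : p.IsHomogeneous 0)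
    (h0 : p ≠ 0) : IsUnit p := by
  rw [← totalDegree_zero_iff_isHomogeneous (Fin n), totalDegree_eq_zero_iff_eq_C] at hp
  rw [hp] at h0 ⊢
  exact (isUnit_iff_ne_zero.2 fun h => h0 (by rw [h, C_0])).map C

theorem isUnit_of_mem_piece_zero {p : MvPolynomial (Fin n) k}
    (hp : p ∈ (degreeGrading k n).piece 0) (h0 : p ≠ 0) : IsUnit p :=
  isUnit_of_isHomogeneous_zero (Grading.mem_ofGradedRing_piece_natCast.1 hp) h0

theorem isWeaklyRegular_map_X {l : List (Fin n)} (hl : l.Nodup) :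
    RingTheory.Sequence.IsWeaklyRegular (MvPolynomial (Fin n) k)
      (l.map (X : Fin n → MvPolynomial (Fin n) k)) := by
  induction l using List.reverseRecOn with
  | nil => exact .nil _ _
  | append_singleton l j ih =>
    obtain ⟨hl, hjl⟩ : l.Nodup ∧ j ∉ l := by simpa [List.nodup_append'] using hl
    rw [List.map_append, RingTheory.Sequence.isWeaklyRegular_append_iff, List.map_singleton,
      RingTheory.Sequence.isWeaklyRegular_singleton_iff,
      isSMulRegular_quotient_iff_mem_of_smul_mem]
    refine ⟨ih hl, fun p hp => ?_⟩
    have hspan : (Ideal.ofList (l.map (X : Fin n → MvPolynomial (Fin n) k)) • ⊤ : Ideal _) =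
        Ideal.span ((X : Fin n → MvPolynomial (Fin n) k) '' {i | i ∈ l}) := by
      rw [smul_eq_mul, Ideal.mul_top, Ideal.ofList]
      congr 1
      ext
      simp
    rw [hspan, mem_ideal_span_X_image] at hp ⊢
    intro m hm
    obtain ⟨i, hi, h⟩ := hp (Finsupp.single j 1 + m) (by simpa [coeff_X_mul] using hm)
    exact ⟨i, hi, by simpa [Finsupp.single_apply, ne_of_mem_of_not_mem hi hjl |>.symm] using h⟩

theorem isWeaklyRegular_reverse_indeterminates (κ : Type*) [Finite κ] :
    RingTheory.Sequence.IsWeaklyRegular (κ → MvPolynomial (Fin n) k)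
      (indeterminates k n).reverse := by
  rw [← List.map_reverse,
    ← (TensorProduct.rid _ (κ → MvPolynomial (Fin n) k)).isWeaklyRegular_congr]
  exact (isWeaklyRegular_map_X
    (List.nodup_reverse.2 (List.nodup_finRange n))).isWeaklyRegular_lTensor

theorem isModuleGrading_degreeGrading : (degreeGrading k n).IsModuleGrading (degreeGrading k n) :=
  Grading.isModuleGrading_ofGradedRing

theorem degreeGrading_piece_of_neg {e : ℤ} (he : e < 0) : (degreeGrading k n).piece e = ⊥ :=
  Grading.ofGradedRing_piece_of_neg he

theorem isHomogeneous_degreeGrading {I : Ideal (MvPolynomial (Fin n) k)}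
    (hI : IsHomogeneousIdeal I) : (degreeGrading k n).IsHomogeneous I := by
  obtain ⟨T, hT, rfl⟩ := hI
  exact Grading.isHomogeneous_ofGradedRing
    (Ideal.homogeneous_span _ T fun p hp => (hT p hp).imp fun _ h => h)

theorem actsInDegreeOne_indeterminates {M : Type*} [AddCommGroup M]
    [Module (MvPolynomial (Fin n) k) M] {G : Grading ℤ M}
    (hG : (degreeGrading k n).IsModuleGrading G) :
    Koszul.ActsInDegreeOne (indeterminates k n) G.piece :=
  hG.actsInDegreeOne fun _ => mem_piece_one_of_mem_indeterminates

end Indeterminates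

namespace Koszul

theorem map_bottom {R A B : Type*} [CommRing R] [AddCommGroup A] [Module R A] [AddCommGroup B]
    [Module R B] (φ : A →ₗ[R] B) (l : List R) (a : A) :
    map φ l (bottom A l a) = bottom B l (φ a) := by
  induction l with
  | nil => rfl
  | cons r l ih => rw [bottom_cons, map_mk, ih, map_zero, bottom_cons]

end Koszul

namespace Grading

/-- The grading of the free module with basis elements in the degrees `D`. -/
def free {ι R κ : Type*} [AddGroup ι] [CommRing R] [Fintype κ] (GR : Grading ι R) (D : κ → ι) :
    Grading ι (κ → R) :=
  .pi fun r => GR.shift (D r)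

section Free

variable {ι R κ M : Type*} [CommRing R] [Fintype κ] [AddCommGroup M] [Module R M]
  {GR : Grading ι R} {G : Grading ι M}

theorem free_proj_apply [AddGroup ι] (D : κ → ι) (e : ι) (w : κ → R) (r : κ) :
    (GR.free D).proj e w r = GR.proj (e - D r) (w r) := rfl

theorem mem_free_piece [AddGroup ι] {D : κ → ι} {e : ι} {w : κ → R} :
    w ∈ (GR.free D).piece e ↔ ∀ r, w r ∈ GR.piece (e - D r) := by
  simp only [mem_piece, funext_iff, free_proj_apply]

variable [AddCommGroup ι] {D : κ → ι}

theorem IsModuleGrading.free (hR : GR.IsModuleGrading GR) (D : κ → ι) :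
    GR.IsModuleGrading (GR.free D) :=
  .pi fun r => hR.shift (D r)

theorem IsModuleGrading.linearCombination_proj (hG : GR.IsModuleGrading G) {γ : κ → M}
    (hγ : ∀ r, γ r ∈ G.piece (D r)) (e : ι) (w : κ → R) :
    Fintype.linearCombination R γ ((GR.free D).proj e w) =
      G.proj e (Fintype.linearCombination R γ w) := by
  simp only [Fintype.linearCombination_apply, map_sum, free_proj_apply,
    hG.proj_smul_of_mem_piece (hγ _)]

theorem IsModuleGrading.mulVecLin_proj {κ' : Type*} [Fintype κ'] {D' : κ' → ι}
    (hR : GR.IsModuleGrading GR) {A : Matrix κ κ' R}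
    (hA : ∀ r c, A r c ∈ GR.piece (D' c - D r)) (e : ι) (w : κ' → R) :
    A.mulVecLin ((GR.free D').proj e w) = (GR.free D).proj e (A.mulVecLin w) := by
  funext r
  simp only [Matrix.mulVecLin_apply, Matrix.mulVec, dotProduct, free_proj_apply, map_sum,
    ← smul_eq_mul, hR _ _ (hA r _), sub_sub, add_sub_cancel]

end Free

end Grading

namespace Grading

/-- A finite homogeneous generating system of a graded module that is minimal with respect to
inclusion. -/
structure MinimalGenerators (R : Type*) {ι M : Type*} [Ring R] [AddCommGroup M] [Module R M]
    (G : Grading ι M) where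
  rank : ℕ
  degree : Fin rank → ι
  gen : Fin rank → M
  gen_mem : ∀ j, gen j ∈ G.piece (degree j)
  span_eq_top : Submodule.span R (Set.range gen) = ⊤
  gen_notMem_span : ∀ j, gen j ∉ Submodule.span R (gen '' {j}ᶜ)

theorem span_iUnion_piece {R ι M : Type*} [Ring R] [AddCommGroup M] [Module R M]
    (G : Grading ι M) : Submodule.span R (⋃ e, (G.piece e : Set M)) = ⊤ :=
  eq_top_iff.2 fun m _ => G.induction_on m
    (fun e _ hx => Submodule.subset_span (Set.mem_iUnion_of_mem e hx)) (zero_mem _)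
    fun _ _ => add_mem

theorem nonempty_minimalGenerators {R ι M : Type*} [Ring R] [AddCommGroup M] [Module R M]
    [Module.Finite R M] (G : Grading ι M) : Nonempty (MinimalGenerators R G) := by
  classical
  have hfg := Module.Finite.fg_top (R := R) (M := M)
  rw [← G.span_iUnion_piece, Submodule.fg_span_iff_fg_span_finset_subset] at hfg
  obtain ⟨T₀, hT₀, hspan⟩ := hfg
  rw [G.span_iUnion_piece] at hspan
  obtain ⟨T, hTT₀, hT⟩ := exists_minimal_le_of_wellFoundedLT
    (fun T : Finset M => Submodule.span R (T : Set M) = ⊤) T₀ hspan.symm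
  have hhom (x : T) : ∃ e, (x : M) ∈ G.piece e := Set.mem_iUnion.1 (hT₀ (hTT₀ x.2))
  choose degree hdegree using hhom
  let x (j : Fin T.card) : T := T.equivFin.symm j
  have hrange (s : Set (Fin T.card)) : (fun j => (x j : M)) '' s = Subtype.val '' (x '' s) :=
    (Set.image_image _ _ _).symm
  refine ⟨⟨T.card, fun j => degree (x j), fun j => x j, fun j => hdegree _, ?_, fun j hj => ?_⟩⟩
  · rw [← Set.image_univ, hrange, Set.image_univ, T.equivFin.symm.range_eq_univ, Set.image_univ,
      Subtype.range_coe]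
    exact hT.prop
  · have herase : (fun j => (x j : M)) '' {j}ᶜ = T.erase (x j) := by
      rw [hrange, Set.image_compl_eq T.equivFin.symm.bijective, Set.image_singleton,
        Set.image_compl_eq_range_sdiff_image Subtype.val_injective, Subtype.range_coe,
        Set.image_singleton, Finset.coe_erase]
    rw [herase] at hj
    refine Finset.notMem_erase (x j : M) T (hT.le_of_le ?_ (Finset.erase_subset _ _) (x j).2)
    rw [← Submodule.span_insert_eq_span hj, ← Finset.coe_insert,
      Finset.insert_erase (x j).2]
    exact hT.prop

end Grading

theorem mem_smul_top_of_forall_mem {R κ : Type*} [CommRing R] [Finite κ] {I : Ideal R} {w : κ → R}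
    (hw : ∀ r, w r ∈ I) : w ∈ (I • ⊤ : Submodule R (κ → R)) := by
  classical
  have := Fintype.ofFinite κ
  rw [pi_eq_sum_univ' w]
  exact sum_mem fun r _ => Submodule.smul_mem_smul (hw r) trivial

section GradedFreeModules

variable {k : Type*} [Field k] {n : ℕ}

open Grading Koszul

variable {c : ℕ} {D : Fin c → ℤ} {i e : ℤ}

theorem notMem_support_free (hi : 1 ≤ i) :
    (i, e) ∉ support (indeterminates k n) ((degreeGrading k n).free D).piece :=
  notMem_support_of_isWeaklyRegular (isModuleGrading_degreeGrading.free D)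
    (fun _ => mem_piece_one_of_mem_indeterminates) (isWeaklyRegular_reverse_indeterminates _) hi

theorem exists_eq_of_mem_support_free
    (h : (i, e) ∈ support (indeterminates k n) ((degreeGrading k n).free D).piece) :
    i = 0 ∧ ∃ r, D r = e := by
  obtain rfl : i = 0 := by
    by_contra hi
    exact notMem_support_free (by have := nonneg_of_mem_support h; lia) h
  refine ⟨rfl, ?_⟩
  rw [zero_mem_support_iff_smul_top (isModuleGrading_degreeGrading.free D)
    fun _ => mem_piece_one_of_mem_indeterminates, ofList_indeterminates] at h
  contrapose! h
  exact fun w hw => mem_smul_top_of_forall_mem fun r =>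
    mem_mxIdeal_of_mem_piece (sub_ne_zero.2 (h r).symm) (mem_free_piece.1 hw r)

end GradedFreeModules

namespace Grading.MinimalGenerators

open Koszul

section Presentation

variable {ι R M : Type*} [CommRing R] [AddCommGroup M] [Module R M] {G : Grading ι M}
  (B : MinimalGenerators R G)

/-- The surjection from a free module given by the generators. -/
def presentation : (Fin B.rank → R) →ₗ[R] M := Fintype.linearCombination R B.gen

theorem presentation_surjective : Function.Surjective B.presentation := by
  rw [← LinearMap.range_eq_top, presentation, Fintype.range_linearCombination, B.span_eq_top]

variable {B}

theorem presentation_mem_span {w : Fin B.rank → R} {j : Fin B.rank} (hw : w j = 0) :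
    B.presentation w ∈ Submodule.span R (B.gen '' {j}ᶜ) := by
  rw [presentation, Fintype.linearCombination_apply]
  refine sum_mem fun r _ => ?_
  by_cases hr : r = j
  · simp [hr, hw]
  · exact Submodule.smul_mem _ _ (Submodule.subset_span ⟨r, hr, rfl⟩)

theorem not_isUnit_of_presentation_eq_zero {w : Fin B.rank → R} (hw : B.presentation w = 0)
    (j : Fin B.rank) : ¬ IsUnit (w j) := by
  classical
  intro hj
  have hupdate : B.presentation (w - Pi.single j (w j)) = - (w j • B.gen j) := by
    rw [map_sub, hw, zero_sub, presentation, Fintype.linearCombination_apply_single]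
  have hmem := presentation_mem_span (B := B) (w := w - Pi.single j (w j)) (j := j) (by simp)
  rw [hupdate, Submodule.neg_mem_iff, Submodule.smul_mem_iff_of_isUnit _ hj] at hmem
  exact B.gen_notMem_span j hmem

variable [AddCommGroup ι] {GR : Grading ι R}

variable (B) in
theorem presentation_proj (hG : GR.IsModuleGrading G) (e : ι) (w : Fin B.rank → R) :
    B.presentation ((GR.free B.degree).proj e w) = G.proj e (B.presentation w) :=
  hG.linearCombination_proj B.gen_mem e w

end Presentation

variable {k : Type*} [Field k] {n : ℕ} {M : Type*} [AddCommGroup M]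
  [Module (MvPolynomial (Fin n) k) M] {G : Grading ℤ M}
  (B : MinimalGenerators (MvPolynomial (Fin n) k) G)

theorem zero_degree_mem_support (hG : (degreeGrading k n).IsModuleGrading G) (j : Fin B.rank) :
    (0, B.degree j) ∈ support (indeterminates k n) G.piece := by
  rw [zero_mem_support_iff]
  intro h
  let N := (Submodule.span (MvPolynomial (Fin n) k) (B.gen '' {j}ᶜ)).toAddSubgroup
  refine B.gen_notMem_span j (decomposables_le (N := N).2 (fun r _ m hm => ?_) (h (B.gen_mem j)))
  obtain ⟨w, rfl⟩ := B.presentation_surjective m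
  rw [← G.mem_piece.1 hm, ← B.presentation_proj hG]
  refine Submodule.smul_mem _ r (presentation_mem_span ?_)
  have := (degreeGrading k n).proj_mem_piece (B.degree j - 1 - B.degree j) (w j)
  rwa [degreeGrading_piece_of_neg (by lia), AddSubgroup.mem_bot] at this

variable (hG : (degreeGrading k n).IsModuleGrading G)

/-- The grading of the module of relations between the generators. -/
noncomputable def syzygyGrading : Grading ℤ (LinearMap.ker B.presentation) :=
  .restrict (.ker (B.presentation_proj hG))

theorem gradedExact_syzygyGrading :
    GradedExact (B.syzygyGrading hG).piece ((degreeGrading k n).free B.degree).piece G.piece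
      (LinearMap.ker B.presentation).subtype B.presentation :=
  .of_exact Subtype.val_injective (LinearMap.exact_subtype_ker_map _) B.presentation_surjective
    (fun _ _ => rfl) (B.presentation_proj hG)

theorem mem_mxIdeal_of_presentation_eq_zero {e : ℤ} {w : Fin B.rank → MvPolynomial (Fin n) k}
    (hw : w ∈ ((degreeGrading k n).free B.degree).piece e) (h0 : B.presentation w = 0)
    (r : Fin B.rank) : w r ∈ mxIdeal k n := by
  have hwr := mem_free_piece.1 hw r
  by_cases he : e - B.degree r = 0
  · rw [he] at hwr
    have hunit := not_isUnit_of_presentation_eq_zero h0 r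
    rw [of_not_not fun h => hunit (isUnit_of_mem_piece_zero hwr h)]
    exact zero_mem _
  · exact mem_mxIdeal_of_mem_piece he hwr

/-- Minimality enters here: syzygies have no unit coefficients, so they die in the degree zero
Koszul homology of the free module. -/
theorem map_subtype_mem_boundaries {i e : ℤ}
    {z : Koszul (LinearMap.ker B.presentation) (indeterminates k n)}
    (hz : z ∈ cycles (indeterminates k n) (B.syzygyGrading hG).piece i e) :
    map (LinearMap.ker B.presentation).subtype _ z ∈
      boundaries (indeterminates k n) ((degreeGrading k n).free B.degree).piece i e := by
  have S := B.gradedExact_syzygyGrading hG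
  obtain hi | rfl | hi := lt_trichotomy i 0
  · rw [eq_zero_of_mem_piece_of_neg hi hz.1, map_zero]
    exact zero_mem _
  · obtain ⟨w, hw, rfl⟩ := exists_eq_bottom hz.1
    have hw_piece := S.map_mem_left e w hw
    rw [map_bottom, bottom_mem_boundaries_iff, ← (mem_piece _).1 hw_piece]
    refine proj_mem_decomposables (isModuleGrading_degreeGrading.free _)
      (fun _ => mem_piece_one_of_mem_indeterminates) e ?_
    rw [ofList_indeterminates]
    exact mem_smul_top_of_forall_mem (B.mem_mxIdeal_of_presentation_eq_zero hw_piece w.2)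
  · exact notMem_support.1 (notMem_support_free hi) (S.map_mem_cycles_left hz)

theorem mem_support_of_mem_support_syzygyGrading {i e : ℤ}
    (h : (i, e) ∈ support (indeterminates k n) (B.syzygyGrading hG).piece) :
    (i + 1, e - 1) ∈ support (indeterminates k n) G.piece :=
  (B.gradedExact_syzygyGrading hG).mem_support_right_of_mem_support_left
    (actsInDegreeOne_indeterminates (isModuleGrading_degreeGrading.free _))
    (fun _ => B.map_subtype_mem_boundaries hG) h

end Grading.MinimalGenerators

/-- A homogeneous submodule of a graded free module of finite rank. -/
structure GradedSubmodule (k : Type*) [Field k] (n : ℕ) where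
  rank : ℕ
  degree : Fin rank → ℤ
  carrier : Submodule (MvPolynomial (Fin n) k) (Fin rank → MvPolynomial (Fin n) k)
  isHomogeneous : ((degreeGrading k n).free degree).IsHomogeneous carrier

namespace GradedSubmodule

variable {k : Type*} [Field k] {n : ℕ}

/-- The induced grading. -/
noncomputable def grading (N : GradedSubmodule k n) : Grading ℤ N.carrier :=
  .restrict N.isHomogeneous

theorem isModuleGrading_grading (N : GradedSubmodule k n) :
    (degreeGrading k n).IsModuleGrading N.grading :=
  (isModuleGrading_degreeGrading.free N.degree).restrict N.isHomogeneous

end GradedSubmodule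

namespace Grading

/-- A choice of minimal homogeneous generators. -/
noncomputable def minimalGenerators (k : Type*) [Field k] (n : ℕ) {M : Type*} [AddCommGroup M]
    [Module (MvPolynomial (Fin n) k) M] [Module.Finite (MvPolynomial (Fin n) k) M]
    (G : Grading ℤ M) : MinimalGenerators (MvPolynomial (Fin n) k) G :=
  Classical.choice G.nonempty_minimalGenerators

end Grading

/-- A choice of minimal homogeneous generators of a graded submodule. -/
noncomputable abbrev GradedSubmodule.generators {k : Type*} [Field k] {n : ℕ}
    (N : GradedSubmodule k n) : Grading.MinimalGenerators (MvPolynomial (Fin n) k) N.grading :=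
  N.grading.minimalGenerators k n

namespace Grading.IsModuleGrading

open Koszul

variable {k : Type*} [Field k] {n : ℕ} {M : Type*} [AddCommGroup M]
  [Module (MvPolynomial (Fin n) k) M] [Module.Finite (MvPolynomial (Fin n) k) M] {G : Grading ℤ M}
  (hG : (degreeGrading k n).IsModuleGrading G)

/-- The syzygy modules in a minimal free resolution, starting with the relations between the
generators of the module itself. -/
noncomputable def syzygy : ℕ → GradedSubmodule k n
  | 0 => ⟨_, _, _, .ker ((G.minimalGenerators k n).presentation_proj hG)⟩
  | i + 1 => ⟨_, _, _, .ker ((syzygy i).generators.presentation_proj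
      (syzygy i).isModuleGrading_grading)⟩

theorem mem_support_of_mem_support_syzygy {i : ℕ} {a e : ℤ}
    (h : (a, e) ∈ support (indeterminates k n) (hG.syzygy i).grading.piece) :
    (a + (i + 1 : ℕ), e - (i + 1 : ℕ)) ∈ support (indeterminates k n) G.piece := by
  induction i generalizing a e with
  | zero => exact (G.minimalGenerators k n).mem_support_of_mem_support_syzygyGrading hG h
  | succ i ih =>
    have := ih ((hG.syzygy i).generators.mem_support_of_mem_support_syzygyGrading
      (hG.syzygy i).isModuleGrading_grading h)
    convert this using 2 <;> push_cast <;> ring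

theorem degree_syzygy_mem_support (i : ℕ) (j : Fin (hG.syzygy i).rank) :
    ((i : ℤ), (hG.syzygy i).degree j - i) ∈ support (indeterminates k n) G.piece := by
  cases i with
  | zero =>
    have := (G.minimalGenerators k n).zero_degree_mem_support hG j
    rwa [← sub_zero ((G.minimalGenerators k n).degree j)] at this
  | succ i =>
    have := hG.mem_support_of_mem_support_syzygy
      ((hG.syzygy i).generators.zero_degree_mem_support
        (hG.syzygy i).isModuleGrading_grading j)
    rwa [zero_add] at this

theorem syzygy_rank_eq_zero {i : ℕ} (hi : n < i) : (hG.syzygy i).rank = 0 := by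
  by_contra h
  have := le_length_of_mem_support (hG.degree_syzygy_mem_support i ⟨0, Nat.pos_of_ne_zero h⟩)
  rw [List.length_map, List.length_finRange] at this
  lia

end Grading.IsModuleGrading

namespace GradedSubmodule

open Grading

variable {k : Type*} [Field k] {n : ℕ} (N : GradedSubmodule k n)

/-- The matrix whose columns are the minimal generators of `N`. -/
noncomputable def genMatrix :
    Matrix (Fin N.rank) (Fin N.generators.rank) (MvPolynomial (Fin n) k) :=
  .of fun r c => (N.generators.gen c : Fin N.rank → MvPolynomial (Fin n) k) r

theorem homogOfDeg_genMatrix (r : Fin N.rank) (c : Fin N.generators.rank) :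
    HomogOfDeg (N.genMatrix r c) (N.generators.degree c - N.degree r) :=
  homogOfDeg_iff_mem_piece.2 <| (mem_piece _).2 <| congrFun (congrArg Subtype.val <|
    (mem_piece _).1 (N.generators.gen_mem c)) r

theorem genMatrix_mulVec (w : Fin N.generators.rank → MvPolynomial (Fin n) k) :
    N.genMatrix.mulVec w = N.generators.presentation w := by
  funext r
  simp [genMatrix, Matrix.mulVec, dotProduct, MinimalGenerators.presentation,
    Fintype.linearCombination_apply, mul_comm]

theorem exact_genMatrix_mulVec {P : Type*} [AddCommGroup P] [Module (MvPolynomial (Fin n) k) P]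
    {φ : (Fin N.rank → MvPolynomial (Fin n) k) →ₗ[MvPolynomial (Fin n) k] P}
    (hφ : N.carrier = LinearMap.ker φ) : Function.Exact N.genMatrix.mulVec φ := fun y => by
  rw [← LinearMap.mem_ker, ← hφ]
  refine ⟨fun hy => ?_, ?_⟩
  · obtain ⟨w, hw⟩ := N.generators.presentation_surjective ⟨y, hy⟩
    exact ⟨w, by rw [genMatrix_mulVec, hw]⟩
  · rintro ⟨w, rfl⟩
    rw [genMatrix_mulVec]
    exact Subtype.property _

theorem genMatrix_mulVec_eq_zero_iff
    {w : Fin N.generators.rank → MvPolynomial (Fin n) k} :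
    N.genMatrix.mulVec w = 0 ↔ N.generators.presentation w = 0 := by
  rw [genMatrix_mulVec, ZeroMemClass.coe_eq_zero]

end GradedSubmodule

section Regularity

variable {k : Type*} [Field k] {n : ℕ} {I : Ideal (MvPolynomial (Fin n) k)}

open Grading Koszul

/-- The grading of `R/I`. -/
noncomputable abbrev quotientGrading (hI : (degreeGrading k n).IsHomogeneous I) :
    Grading ℤ (MvPolynomial (Fin n) k ⧸ I) :=
  Grading.quotient hI

theorem isModuleGrading_quotientGrading (hI : (degreeGrading k n).IsHomogeneous I) :
    (degreeGrading k n).IsModuleGrading (quotientGrading hI) :=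
  isModuleGrading_degreeGrading.quotient hI

theorem exists_mem_piece_mk_eq (hI : (degreeGrading k n).IsHomogeneous I) {e : ℤ}
    {x : MvPolynomial (Fin n) k ⧸ I} (hx : x ∈ (quotientGrading hI).piece e) :
    ∃ v ∈ (degreeGrading k n).piece e, Ideal.Quotient.mk I v = x := by
  obtain ⟨p, rfl⟩ := Ideal.Quotient.mk_surjective x
  exact ⟨_, (degreeGrading k n).proj_mem_piece e p, (mem_piece _).1 hx⟩

theorem exists_gradedFreeRes_forall_mem_support (hI : (degreeGrading k n).IsHomogeneous I) :
    ∃ F : GradedFreeRes I, ∀ (i : ℕ) (j : Fin (F.b i)),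
      ((i : ℤ), F.D i j - i) ∈ support (indeterminates k n) (quotientGrading hI).piece := by
  have hG := isModuleGrading_quotientGrading hI
  have hv (j) := exists_mem_piece_mk_eq hI (((quotientGrading hI).minimalGenerators k n).gen_mem j)
  choose v hv_mem hv_mk using hv
  have haug (w : Fin ((quotientGrading hI).minimalGenerators k n).rank → MvPolynomial (Fin n) k) :
      Ideal.Quotient.mk I (∑ r, w r * v r) =
        ((quotientGrading hI).minimalGenerators k n).presentation w := by
    rw [map_sum, MinimalGenerators.presentation, Fintype.linearCombination_apply]
    exact Finset.sum_congr rfl fun r _ => by rw [← hv_mk]; rfl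
  exact ⟨{
    len := n
    b i := (hG.syzygy i).rank
    hb _ := hG.syzygy_rank_eq_zero
    D i := (hG.syzygy i).degree
    A i := (hG.syzygy i).genMatrix
    v := v
    hv j := homogOfDeg_iff_mem_piece.2 (hv_mem j)
    hA i := (hG.syzygy i).homogOfDeg_genMatrix
    haug x := (((quotientGrading hI).minimalGenerators k n).presentation_surjective x).imp
      fun w hw => (haug w).trans hw
    hex0 w := (Eq.congr_left (haug w)).trans ((hG.syzygy 0).exact_genMatrix_mulVec rfl w)
    hex i w := ((hG.syzygy i).genMatrix_mulVec_eq_zero_iff).trans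
      ((hG.syzygy (i + 1)).exact_genMatrix_mulVec rfl w) }, hG.degree_syzygy_mem_support⟩

end Regularity

section FreeCover

open Grading Koszul

variable {k : Type*} [Field k] {n c c' : ℕ} {D : Fin c → ℤ} {D' : Fin c' → ℤ}
  {M : Type*} [AddCommGroup M] [Module (MvPolynomial (Fin n) k) M] {G : Grading ℤ M}
  {ψ : (Fin c' → MvPolynomial (Fin n) k) →ₗ[MvPolynomial (Fin n) k]
    Fin c → MvPolynomial (Fin n) k}
  {φ : (Fin c → MvPolynomial (Fin n) k) →ₗ[MvPolynomial (Fin n) k] M} {i e : ℤ}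

theorem mem_support_of_exact_free
    (ψ_proj : ∀ e w, ψ (((degreeGrading k n).free D').proj e w) =
      ((degreeGrading k n).free D).proj e (ψ w))
    (φ_proj : ∀ e w, φ (((degreeGrading k n).free D).proj e w) = G.proj e (φ w))
    (hψφ : Function.Exact ψ φ) (hφ : Function.Surjective φ)
    (h : (i, e) ∈ support (indeterminates k n) G.piece) :
    (i = 0 ∧ ∃ r, D r = e) ∨ (i - 1, e + 1) ∈
      support (indeterminates k n) (restrict (IsHomogeneous.range ψ_proj)).piece := by
  have hexact : Function.Exact (LinearMap.range ψ).subtype φ := fun w => by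
    rw [hψφ w]
    simp
  have S := GradedExact.of_exact (GA := restrict (IsHomogeneous.range ψ_proj))
    Subtype.val_injective hexact hφ (fun _ _ => rfl) φ_proj
  exact (S.mem_support_right (actsInDegreeOne_indeterminates
    (isModuleGrading_degreeGrading.free D)) h).imp_left exists_eq_of_mem_support_free

end FreeCover

namespace GradedFreeRes

open Grading Koszul

variable {k : Type*} [Field k] {n : ℕ} {I : Ideal (MvPolynomial (Fin n) k)} (F : GradedFreeRes I)

theorem mulVecLin_proj (t : ℕ) (e : ℤ) (w : Fin (F.b (t + 1)) → MvPolynomial (Fin n) k) :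
    (F.A t).mulVecLin (((degreeGrading k n).free (F.D (t + 1))).proj e w) =
      ((degreeGrading k n).free (F.D t)).proj e ((F.A t).mulVecLin w) :=
  isModuleGrading_degreeGrading.mulVecLin_proj
    (fun r c => homogOfDeg_iff_mem_piece.1 (F.hA t r c)) e w

/-- The image of the differential `F.A t`. -/
noncomputable def image (t : ℕ) : GradedSubmodule k n :=
  ⟨_, _, LinearMap.range (F.A t).mulVecLin, .range (F.mulVecLin_proj t)⟩

variable {F}

theorem mem_support_image {t : ℕ} {i e : ℤ}
    (h : (i, e) ∈ support (indeterminates k n) (F.image t).grading.piece) :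
    (i = 0 ∧ ∃ r, F.D (t + 1) r = e) ∨
      (i - 1, e + 1) ∈ support (indeterminates k n) (F.image (t + 1)).grading.piece := by
  exact mem_support_of_exact_free (φ := (F.A t).mulVecLin.rangeRestrict)
    (G := (F.image t).grading) (F.mulVecLin_proj (t + 1))
    (fun e w => Subtype.ext (F.mulVecLin_proj t e w)) (fun w => Subtype.ext_iff.trans (F.hex t w))
    (LinearMap.surjective_rangeRestrict _) h

theorem exists_degree_eq_of_mem_support_image {i t : ℕ} {e : ℤ}
    (h : ((i : ℤ), e) ∈ support (indeterminates k n) (F.image t).grading.piece) :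
    ∃ s r, F.D s r - s = e - (t + 1) := by
  induction i generalizing t e with
  | zero =>
    obtain ⟨-, r, rfl⟩ | h := mem_support_image h
    · exact ⟨t + 1, r, by simp⟩
    · have := nonneg_of_mem_support h
      lia
  | succ i ih =>
    obtain ⟨hi, -⟩ | h := mem_support_image h
    · lia
    · rw [Nat.cast_succ, add_sub_cancel_right] at h
      obtain ⟨s, r, h⟩ := ih h
      exact ⟨s, r, by rw [h]; push_cast; ring⟩

theorem exists_degree_eq_of_mem_support (hI : (degreeGrading k n).IsHomogeneous I) {i e : ℤ}
    (h : (i, e) ∈ support (indeterminates k n) (quotientGrading hI).piece) :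
    ∃ s r, F.D s r - s = e := by
  let γ (r : Fin (F.b 0)) : MvPolynomial (Fin n) k ⧸ I := Ideal.Quotient.mk I (F.v r)
  have hγ (r) : γ r ∈ (quotientGrading hI).piece (F.D 0 r) :=
    ⟨γ r, congrArg (Ideal.Quotient.mk I) ((mem_piece _).1 (homogOfDeg_iff_mem_piece.1 (F.hv r)))⟩
  have haug (w : Fin (F.b 0) → MvPolynomial (Fin n) k) :
      Fintype.linearCombination _ γ w = Ideal.Quotient.mk I (∑ r, w r * F.v r) := by
    rw [map_sum, Fintype.linearCombination_apply]
    rfl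
  have hexact : Function.Exact (F.A 0).mulVecLin (Fintype.linearCombination _ γ) := fun w => by
    rw [haug]
    exact F.hex0 w
  have hsurj : Function.Surjective
      (Fintype.linearCombination (MvPolynomial (Fin n) k) γ) := fun x =>
    (F.haug x).imp fun w hw => (haug w).trans hw
  obtain ⟨-, r, rfl⟩ | h := mem_support_of_exact_free (F.mulVecLin_proj 0)
    ((isModuleGrading_quotientGrading hI).linearCombination_proj hγ) hexact hsurj h
  · exact ⟨0, r, by simp⟩
  · lift i - 1 to ℕ using nonneg_of_mem_support h with i'
    obtain ⟨s, r, h⟩ := exists_degree_eq_of_mem_support_image (F := F) (t := 0) h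
    exact ⟨s, r, by rw [h]; simp⟩

theorem exists_degree_sub_le : ∃ B : ℤ, ∀ i j, F.D i j - i ≤ B := by
  have hfin : (⋃ i ∈ Set.Iic F.len, Set.range fun j => F.D i j - i).Finite :=
    (Set.finite_Iic _).biUnion fun i _ => Set.finite_range _
  obtain ⟨B, hB⟩ := hfin.bddAbove
  refine ⟨B, fun i j => hB (Set.mem_biUnion (x := i) ?_ ⟨j, rfl⟩)⟩
  rw [Set.mem_Iic]
  by_contra! hi
  exact (F.hb i hi ▸ j).elim0

end GradedFreeRes

section Regularity

open Grading Koszul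

variable {k : Type*} [Field k] {n : ℕ} {I : Ideal (MvPolynomial (Fin n) k)}

theorem regQuot_eq_csInf_upperBounds (hI : (degreeGrading k n).IsHomogeneous I) :
    regQuot I = sInf (upperBounds
      (Prod.snd '' support (indeterminates k n) (quotientGrading hI).piece)) := by
  refine congrArg sInf (Set.ext fun r => ⟨?_, fun hr => ?_⟩)
  · rintro ⟨F, hF⟩ _ ⟨⟨i, e⟩, h, rfl⟩
    obtain ⟨s, j, rfl⟩ := F.exists_degree_eq_of_mem_support hI h
    exact hF s j
  · obtain ⟨F, hF⟩ := exists_gradedFreeRes_forall_mem_support hI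
    exact ⟨F, fun i j => hr ⟨_, hF i j, rfl⟩⟩

theorem bddAbove_snd_support (hI : (degreeGrading k n).IsHomogeneous I) :
    BddAbove (Prod.snd '' support (indeterminates k n) (quotientGrading hI).piece) := by
  obtain ⟨F, -⟩ := exists_gradedFreeRes_forall_mem_support hI
  obtain ⟨B, hB⟩ := F.exists_degree_sub_le
  refine ⟨B, ?_⟩
  rintro _ ⟨⟨i, e⟩, h, rfl⟩
  obtain ⟨s, j, rfl⟩ := F.exists_degree_eq_of_mem_support hI h
  exact hB s j

theorem zero_zero_mem_support (hI : (degreeGrading k n).IsHomogeneous I) (hI' : I ≠ ⊤) :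
    (0, 0) ∈ support (indeterminates k n) (quotientGrading hI).piece := by
  have hone : (1 : MvPolynomial (Fin n) k) ∈ (degreeGrading k n).piece 0 :=
    homogOfDeg_iff_mem_piece.1 (.inr ⟨0, rfl, isHomogeneous_one _ _⟩)
  rw [zero_mem_support_iff]
  intro h
  have hmem := h ⟨Ideal.Quotient.mk I 1, congrArg (Ideal.Quotient.mk I) ((mem_piece _).1 hone)⟩
  refine hI' (I.eq_top_iff_one.2 (Ideal.Quotient.eq_zero_iff_mem.1 ?_))
  rw [← AddSubgroup.mem_bot]
  refine decomposables_le.2 (fun r _ x hx => ?_) hmem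
  obtain ⟨v, hv, rfl⟩ := exists_mem_piece_mk_eq hI hx
  rw [degreeGrading_piece_of_neg (by simp), AddSubgroup.mem_bot] at hv
  rw [hv, map_zero, smul_zero]
  exact zero_mem _

theorem isGreatest_regQuot (hI : (degreeGrading k n).IsHomogeneous I) (hI' : I ≠ ⊤) :
    IsGreatest (Prod.snd '' support (indeterminates k n) (quotientGrading hI).piece)
      (regQuot I) := by
  have hbdd := bddAbove_snd_support hI
  have hne := Set.Nonempty.image Prod.snd ⟨_, zero_zero_mem_support hI hI'⟩
  rw [regQuot_eq_csInf_upperBounds hI, csInf_upperBounds_eq_csSup hbdd hne]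
  exact ⟨Int.csSup_mem hne hbdd, fun _ h => le_csSup hbdd h⟩

end Regularity

namespace Koszul

section SMul

variable {ι R M : Type*} [CommRing R] [AddCommGroup M] [Module R M] [AddCommGroupWithOne ι]
  {GR : Grading ι R} {G : Grading ι M} {l : List R} {i : ℤ} {e a : ι}

theorem smul_mem_boundaries_of_mem_ofList (hR : GR.IsModuleGrading GR) (hG : GR.IsModuleGrading G)
    (hl : ∀ r ∈ l, r ∈ GR.piece 1) {s : R} (hs : s ∈ GR.piece a) (hsl : s ∈ Ideal.ofList l)
    {z : Koszul M l} (hz : z ∈ cycles l G.piece i e) :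
    s • z ∈ boundaries l G.piece i (e + a) := by
  have hs_dec : s ∈ decomposables l GR.piece a := by
    rw [← GR.mem_piece.1 hs]
    exact proj_mem_decomposables hR hl a (by simpa using hsl)
  suffices h : decomposables l GR.piece a ≤
      (boundaries l G.piece i (e + a)).comap (AddMonoidHom.flip (smulAddHom R _) z) from h hs_dec
  refine decomposables_le.2 fun r hr m hm => ?_
  have hmz : m • z ∈ cycles l G.piece i (e + (a - 1)) :=
    mem_cycles.2 ⟨smul_mem_piece (fun x hx => hG.smul_mem_piece hm hx) hz.1, by
      rw [map_smul, hz.2, smul_zero]⟩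
  have hrmz := smul_mem_boundaries hr hmz
  rw [add_assoc, sub_add_cancel, smul_smul] at hrmz
  exact hrmz

theorem GradedExact.map_smul_mem_boundaries {A C : Type*} [AddCommGroup A] [Module R A]
    [AddCommGroup C] [Module R C] {gA : ι → AddSubgroup A} {gC : ι → AddSubgroup C}
    {φ : A →ₗ[R] M} {ψ : M →ₗ[R] C} (S : GradedExact gA G.piece gC φ ψ)
    (hR : GR.IsModuleGrading GR) (hG : GR.IsModuleGrading G) (hl : ∀ r ∈ l, r ∈ GR.piece 1) {s : R}
    (hs : s ∈ GR.piece a) (hsl : s ∈ Ideal.ofList l) {z : Koszul A l}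
    (hz : z ∈ cycles l (fun e => gA (e - a)) i e) :
    map (s • φ) l z ∈ boundaries l G.piece i e := by
  rw [cycles_shift] at hz
  rw [map_smul_left, ← sub_add_cancel e a]
  exact smul_mem_boundaries_of_mem_ofList hR hG hl hs hsl (S.map_mem_cycles_left hz)

end SMul

/-- The inclusion of `M` in the last homological degree. -/
def top {R : Type*} (M : Type*) [CommRing R] [AddCommGroup M] [Module R M] :
    (l : List R) → M →ₗ[R] Koszul M l
  | [] => LinearMap.id
  | _ :: l => ((0 : M →ₗ[R] Koszul M l).prod (top M l) : M →ₗ[R] Koszul M l × Koszul M l)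

section Top

variable {ι R M : Type*} [CommRing R] [AddCommGroup M] [Module R M] {r : R} {l : List R}
  {g : ι → AddSubgroup M} {e : ι}

theorem top_cons (m : M) : top M (r :: l) m = mk 0 (top M l m) := rfl

theorem top_injective (l : List R) : Function.Injective (top M l) := by
  induction l with
  | nil => exact Function.injective_id
  | cons r l ih => exact fun m m' h => ih (mk_inj.1 h).2

theorem top_mem_piece {m : M} (hm : m ∈ g e) : top M l m ∈ piece g l l.length e := by
  induction l with
  | nil => exact mem_piece_nil.2 ⟨fun h => absurd rfl h, fun _ => hm⟩
  | cons r l ih => exact mk_mem_piece.2 ⟨zero_mem _, by simpa using ih⟩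

theorem d_top {m : M} (hm : ∀ r ∈ l, r • m = 0) : d M l (top M l m) = 0 := by
  induction l with
  | nil => rfl
  | cons r l ih =>
    obtain ⟨hr, hl⟩ := List.forall_mem_cons.1 hm
    simp [top_cons, d_mk, ih hl, ← map_smul, hr, mk_zero]

theorem eq_zero_of_length_notMem_support [AddCommGroupWithOne ι]
    (h : ((l.length : ℤ), e) ∉ support l g) {m : M} (hme : m ∈ g e) (hm : ∀ r ∈ l, r • m = 0) :
    m = 0 := by
  obtain ⟨w, hw, hwm⟩ := mem_boundaries.1 <|
    notMem_support.1 h (mem_cycles.2 ⟨top_mem_piece hme, d_top hm⟩)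
  rw [eq_zero_of_mem_piece_of_length_lt (by lia) hw, map_zero] at hwm
  exact top_injective l (hwm.symm.trans (map_zero _).symm)

end Top

/-- The degrees in which the Koszul homology of a module without a grading does not vanish. -/
abbrev ungradedSupport {R : Type*} [CommRing R] (l : List R) (M : Type*) [AddCommGroup M]
    [Module R M] : Set ℤ :=
  {i | (i, ()) ∈ support l (Grading.trivial M).piece}

section Depth

variable {R : Type*} {M : Type u} [CommRing R] [AddCommGroup M] [Module R M] {l : List R}

theorem exists_mem_ofList_isSMulRegular [IsNoetherianRing R] [Module.Finite R M]
    (h : (l.length : ℤ) ∉ ungradedSupport l M) : ∃ r ∈ Ideal.ofList l, IsSMulRegular M r := by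
  by_contra! hno
  have hsub : (Ideal.ofList l : Set R) ⊆
      ⋃ P ∈ associatedPrimes R M, ((id P : Ideal R) : Set R) := by
    simp_rw [id, biUnion_associatedPrimes_eq_compl_regular]
    exact hno
  obtain ⟨P, hP, hlP⟩ := (Ideal.subset_union_prime_finite (associatedPrimes.finite R M)
    (f := id) 0 0 fun _ h _ _ => h.1).1 hsub
  obtain ⟨hP_prime, x, rfl⟩ := isAssociatedPrime_iff.1 (AssociatedPrimes.mem_iff.1 hP)
  have hx : x = 0 := eq_zero_of_length_notMem_support h (Grading.mem_piece_trivial x) fun r hr =>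
    Submodule.mem_colon_singleton.1 (hlP (Ideal.subset_span hr))
  exact hP_prime.ne_top (by simp [hx])

open scoped Pointwise

theorem gradedExact_quotSMulTop {r : R} (hr : IsSMulRegular M r) :
    GradedExact (Grading.trivial M).piece (Grading.trivial M).piece
      (Grading.trivial (QuotSMulTop r M)).piece (r • LinearMap.id : M →ₗ[R] M)
      (r • ⊤ : Submodule R M).mkQ :=
  .of_exact hr (fun m => by simp [Submodule.mem_smul_pointwise_iff_exists])
    (Submodule.mkQ_surjective _) (fun _ _ => rfl) fun _ _ => rfl

theorem actsInDegreeOne_trivial (l : List R) : ActsInDegreeOne l (Grading.trivial M).piece :=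
  fun _ _ _ _ _ => Grading.mem_piece_trivial _

theorem succ_mem_ungradedSupport_quotSMulTop {r : R} (hr : IsSMulRegular M r)
    (hrl : r ∈ Ideal.ofList l) {i : ℤ} (hi : i ∈ ungradedSupport l M) :
    i + 1 ∈ ungradedSupport l (QuotSMulTop r M) := by
  refine (gradedExact_quotSMulTop hr).mem_support_right_of_mem_support_left
    (actsInDegreeOne_trivial l) (fun z hz => ?_) hi
  rw [map_smul_left, map_id]
  exact smul_mem_boundaries_of_mem_ofList .trivial .trivial (fun _ _ => Grading.mem_piece_trivial _)
    (Grading.mem_piece_trivial r) hrl hz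

theorem isGreatest_ungradedSupport_quotSMulTop {r : R} (hr : IsSMulRegular M r)
    (hrl : r ∈ Ideal.ofList l) {p : ℤ} (hp : IsGreatest (ungradedSupport l M) p) :
    IsGreatest (ungradedSupport l (QuotSMulTop r M)) (p + 1) := by
  refine ⟨succ_mem_ungradedSupport_quotSMulTop hr hrl hp.1, fun i hi => ?_⟩
  obtain hi | hi := (gradedExact_quotSMulTop hr).mem_support_right (actsInDegreeOne_trivial l) hi
  · exact (hp.2 hi).trans (by lia)
  · exact sub_le_iff_le_add.1 (hp.2 hi)

theorem add_length_le_of_isWeaklyRegular {rs : List R} (hrs : ∀ r ∈ rs, r ∈ Ideal.ofList l)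
    (hreg : RingTheory.Sequence.IsWeaklyRegular M rs) {i : ℤ} (hi : i ∈ ungradedSupport l M) :
    i + rs.length ≤ l.length := by
  induction rs generalizing M i with
  | nil => simpa using le_length_of_mem_support hi
  | cons r rs ih =>
    obtain ⟨hr, hrs'⟩ := List.forall_mem_cons.1 hrs
    obtain ⟨hreg_r, hreg_rs⟩ := (RingTheory.Sequence.isWeaklyRegular_cons_iff M r rs).1 hreg
    have := ih hrs' hreg_rs (succ_mem_ungradedSupport_quotSMulTop hreg_r hr hi)
    push_cast [List.length_cons]
    lia

theorem exists_isWeaklyRegular [IsNoetherianRing R] [Module.Finite R M] {p : ℤ}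
    (hp : IsGreatest (ungradedSupport l M) p) {m : ℕ} (hm : p + m = l.length) :
    ∃ rs : List R, rs.length = m ∧ (∀ r ∈ rs, r ∈ Ideal.ofList l) ∧
      RingTheory.Sequence.IsWeaklyRegular M rs := by
  induction m generalizing M p with
  | zero => exact ⟨[], rfl, by simp, .nil R M⟩
  | succ m ih =>
    obtain ⟨r, hr, hreg⟩ := exists_mem_ofList_isSMulRegular fun h =>
      absurd (hp.2 h) (by lia)
    obtain ⟨rs, rfl, hrs, hreg_rs⟩ :=
      ih (isGreatest_ungradedSupport_quotSMulTop hreg hr hp) (by lia)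
    exact ⟨r :: rs, rfl, List.forall_mem_cons.2 ⟨hr, hrs⟩,
      (RingTheory.Sequence.isWeaklyRegular_cons_iff M r rs).2 ⟨hreg, hreg_rs⟩⟩

/-- Depth sensitivity of the Koszul complex. -/
theorem isGreatest_ungradedSupport [IsNoetherianRing R] [Module.Finite R M]
    (hM : Ideal.ofList l • (⊤ : Submodule R M) ≠ ⊤) :
    IsGreatest (ungradedSupport l M) (l.length - idealDepth (Ideal.ofList l) M) := by
  have hne : (ungradedSupport l M).Nonempty := ⟨0, by
    rw [Set.mem_ofPred_eq,
      zero_mem_support_iff_smul_top .trivial fun _ _ => Grading.mem_piece_trivial _]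
    exact fun h => hM (eq_top_iff.2 fun m _ => h (Grading.mem_piece_trivial m))⟩
  have hbdd : BddAbove (ungradedSupport l M) := ⟨l.length, fun i hi => le_length_of_mem_support hi⟩
  obtain ⟨p, hp⟩ : ∃ p, IsGreatest (ungradedSupport l M) p :=
    ⟨_, Int.csSup_mem hne hbdd, fun i hi => le_csSup hbdd hi⟩
  have hp_le := le_length_of_mem_support hp.1
  obtain ⟨m, hm⟩ := Int.le.dest hp_le
  obtain ⟨rs, hlen, hrs, hreg⟩ := exists_isWeaklyRegular hp hm
  have hdepth : idealDepth (Ideal.ofList l) M = m := by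
    have hrs_top : (⊤ : Submodule R M) ≠ Ideal.ofList rs • ⊤ := fun h =>
      hM (eq_top_iff.2 (h.le.trans (Submodule.smul_mono_left (Ideal.span_le.2 hrs))))
    refine IsGreatest.csSup_eq ⟨⟨rs, hlen, hrs, hreg, hrs_top⟩, ?_⟩
    rintro _ ⟨rs, rfl, hrs, hreg⟩
    have := add_length_le_of_isWeaklyRegular hrs hreg.toIsWeaklyRegular hp.1
    lia
  rwa [hdepth, ← hm, add_sub_cancel_right]

end Depth

end Koszul

/-- The ideal `(J + H) / J` of `R / J`, as a submodule over `R`. -/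
abbrev supQuotient {R : Type*} [CommRing R] (J H : Ideal R) : Submodule R (R ⧸ J) :=
  LinearMap.ker (Submodule.factor (le_sup_left : J ≤ J ⊔ H))

section ExactSequences

open Grading Koszul

variable {ι R : Type*} [CommRing R] {J H : Ideal R} {f : R}

theorem mk_mem_supQuotient {p : R} : J.mkQ p ∈ supQuotient J H ↔ p ∈ J ⊔ H := by
  rw [LinearMap.mem_ker, Submodule.factor_mk]
  exact Submodule.Quotient.mk_eq_zero _

theorem exact_smul_subtype_factor : Function.Exact (f • (supQuotient J H).subtype)
    (Submodule.factor (le_sup_left : J ≤ J ⊔ Ideal.span {f} * H)) := by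
  intro x
  obtain ⟨p, rfl⟩ := J.mkQ_surjective x
  change J.mkQ p ∈ supQuotient J (Ideal.span {f} * H) ↔ _
  rw [mk_mem_supQuotient, Submodule.mem_sup]
  constructor
  · rintro ⟨j, hj, _, hfh, rfl⟩
    obtain ⟨h, hh, rfl⟩ := Ideal.mem_span_singleton_mul.1 hfh
    refine ⟨⟨J.mkQ h, mk_mem_supQuotient.2 (Ideal.mem_sup_right hh)⟩, ?_⟩
    rw [map_add, show J.mkQ j = 0 from (Submodule.Quotient.mk_eq_zero J).2 hj, zero_add]
    rfl
  · rintro ⟨⟨y, hy⟩, hyp⟩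
    obtain ⟨s, rfl⟩ := J.mkQ_surjective y
    obtain ⟨j, hj, h, hh, rfl⟩ := Submodule.mem_sup.1 (mk_mem_supQuotient.1 hy)
    have hdiff : p - f * (j + h) ∈ J := (Submodule.Quotient.eq J).1 hyp.symm
    refine ⟨p - f * h, ?_, f * h, Ideal.mem_span_singleton_mul.2 ⟨h, hh, rfl⟩, sub_add_cancel _ _⟩
    convert add_mem hdiff (J.mul_mem_left f hj) using 1
    ring

variable {GR : Grading ι R}

theorem isHomogeneous_supQuotient (hJ : GR.IsHomogeneous J) (hH : GR.IsHomogeneous H) :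
    (quotient hJ).IsHomogeneous (supQuotient J H) :=
  .ker (G' := quotient (hJ.sup hH)) (factor_proj hJ (hJ.sup hH) _)

theorem gradedExact_factor (hJ : GR.IsHomogeneous J) (hH : GR.IsHomogeneous H) :
    GradedExact (restrict (isHomogeneous_supQuotient hJ hH)).piece (quotient hJ).piece
      (quotient (hJ.sup hH)).piece (supQuotient J H).subtype (Submodule.factor le_sup_left) :=
  .of_exact Subtype.val_injective (LinearMap.exact_subtype_ker_map _)
    (Submodule.factor_surjective _) (fun _ _ => rfl) (factor_proj hJ (hJ.sup hH) _)

theorem gradedExact_smul_factor [AddCommGroup ι] (hR : GR.IsModuleGrading GR)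
    (hJ : GR.IsHomogeneous J) (hH : GR.IsHomogeneous H) {a : ι} (hf : f ∈ GR.piece a)
    (hreg : IsSMulRegular (R ⧸ J) f) :
    GradedExact (fun e => (restrict (isHomogeneous_supQuotient hJ hH)).piece (e - a))
      (quotient hJ).piece (quotient (hJ.sup (hH.span_singleton_mul hR hf))).piece
      (f • (supQuotient J H).subtype) (Submodule.factor le_sup_left) :=
  .of_exact (GA := (restrict (isHomogeneous_supQuotient hJ hH)).shift a)
    (hreg.comp Subtype.val_injective) exact_smul_subtype_factor (Submodule.factor_surjective _)
    (fun e x => (hR.quotient hJ a f hf e (x : R ⧸ J)).symm) (factor_proj hJ _ _)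

end ExactSequences

/-- How the Koszul supports `NJ`, `NH`, `NI` and `NK` of `R/J`, `R/(J+H)`, `R/(J+fH)` and `(J+H)/J`
constrain each other, for `f` of degree `a`. -/
structure SupportRelations {ι : Type*} [AddGroupWithOne ι] (a : ι) (NJ NH NI NK : Set (ℤ × ι)) :
    Prop where
  subset : NJ ⊆ NI
  connecting_mem {i e} : (i - 1, e + 1 - a) ∈ NK → (i, e) ∈ NI
  of_mem_right {i e} : (i, e) ∈ NI → (i, e) ∈ NJ ∨ (i - 1, e + 1 - a) ∈ NK
  of_mem_kernel {i e} : (i, e) ∈ NK → (i, e) ∈ NJ ∨ (i + 1, e - 1) ∈ NH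
  of_mem_sup {i e} : (i, e) ∈ NH → (i, e) ∈ NJ ∨ (i - 1, e + 1) ∈ NK
  of_mem_base {i e} : (i, e) ∈ NJ → (i, e) ∈ NK ∨ (i, e) ∈ NH

namespace SupportRelations

theorem eq_succ_or_isGreatest {NJ NH NI NK : Set (ℤ × Unit)} {a : Unit}
    (S : SupportRelations a NJ NH NI NK) {p q : ℤ} (hp : IsGreatest {i | (i, ()) ∈ NJ} p)
    (hq : IsGreatest {i | (i, ()) ∈ NI} q) :
    q = p + 1 ∨ IsGreatest {i | (i, ()) ∈ NH} q := by
  have connecting_mem {i : ℤ} (hi : (i, ()) ∈ NK) : (i + 1, ()) ∈ NI :=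
    S.connecting_mem (by rwa [add_sub_cancel_right])
  have hNH_le : q ∈ upperBounds {i | (i, ()) ∈ NH} := fun i hi => hq.2 <| by
    obtain hi | hi := S.of_mem_sup hi
    · exact S.subset hi
    · simpa using connecting_mem hi
  have hNH_of_NJ (hqJ : (q, ()) ∈ NJ) : IsGreatest {i | (i, ()) ∈ NH} q :=
    ⟨(S.of_mem_base hqJ).resolve_left fun h => absurd (hq.2 (connecting_mem h)) (by lia), hNH_le⟩
  obtain hqJ | hqK := S.of_mem_right hq.1
  · exact .inr (hNH_of_NJ hqJ)
  obtain hqJ | hqH := S.of_mem_kernel hqK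
  · obtain h | rfl : q - 1 = p ∨ q = p := by
      have := hp.2 hqJ
      have := hq.2 (S.subset hp.1)
      lia
    · exact .inl (by lia)
    · exact .inr (hNH_of_NJ hp.1)
  · exact .inr ⟨by simpa using hqH, hNH_le⟩

variable {NJ NH NI NK : Set (ℤ × ℤ)} {a r s : ℤ}

theorem le_of_isGreatest (S : SupportRelations a NJ NH NI NK)
    (hr : IsGreatest (Prod.snd '' NJ) r) (hs : IsGreatest (Prod.snd '' NI) s) : r ≤ s :=
  hs.2 (Set.image_mono S.subset hr.1)

theorem isGreatest_sub (S : SupportRelations a NJ NH NI NK) (ha : 1 ≤ a)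
    (hr : IsGreatest (Prod.snd '' NJ) r) (hs : IsGreatest (Prod.snd '' NI) s)
    (hrs : r + a ≤ s) : IsGreatest (Prod.snd '' NH) (s - a) := by
  have hNJ {i e : ℤ} (h : (i, e) ∈ NJ) : e ≤ r := hr.2 ⟨_, h, rfl⟩
  constructor
  · obtain ⟨⟨i, s⟩, hsI, rfl⟩ := hs.1
    have hsK := (S.of_mem_right hsI).resolve_left fun h => absurd (hNJ h) (by lia)
    have hsH := (S.of_mem_kernel hsK).resolve_left fun h => absurd (hNJ h) (by lia)
    exact ⟨_, hsH, by lia⟩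
  · rintro _ ⟨⟨i, e⟩, he, rfl⟩
    obtain heJ | heK := S.of_mem_sup he
    · linarith [hNJ heJ]
    · have heI : (i, e + a) ∈ NI := S.connecting_mem (by convert heK using 2; ring)
      linarith [hs.2 ⟨_, heI, rfl⟩]

end SupportRelations

section Supports

open Grading Koszul

theorem supportRelations {ι R : Type*} [CommRing R] [AddCommGroupWithOne ι] {GR : Grading ι R}
    {J H : Ideal R} {f : R} {l : List R} {a : ι} (hR : GR.IsModuleGrading GR)
    (hl : ∀ r ∈ l, r ∈ GR.piece 1) (hJ : GR.IsHomogeneous J) (hH : GR.IsHomogeneous H)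
    (hf : f ∈ GR.piece a) (hfl : f ∈ Ideal.ofList l) (hreg : IsSMulRegular (R ⧸ J) f) :
    SupportRelations a (support l (quotient hJ).piece) (support l (quotient (hJ.sup hH)).piece)
      (support l (quotient (hJ.sup (hH.span_singleton_mul hR hf))).piece)
      (support l (restrict (isHomogeneous_supQuotient hJ hH)).piece) := by
  have hact := (hR.quotient hJ).actsInDegreeOne hl
  have S := gradedExact_factor hJ hH
  have T := gradedExact_smul_factor hR hJ hH hf hreg
  have hT (i : ℤ) (e : ι) := fun z hz =>
    S.map_smul_mem_boundaries (i := i) (e := e) (z := z) hR (hR.quotient hJ) hl hf hfl hz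
  exact {
    subset := fun ⟨i, e⟩ h => T.mem_support_right_of_map_mem_boundaries hact (hT i e) h
    connecting_mem := fun {i e} h => by
      simpa using T.mem_support_right_of_mem_support_left hact (hT (i - 1) (e + 1))
        ((mem_support_shift a).2 h)
    of_mem_right := fun h => (T.mem_support_right hact h).imp_right (mem_support_shift a).1
    of_mem_kernel := S.mem_support_left hact
    of_mem_sup := S.mem_support_right hact
    of_mem_base := S.mem_support_middle hact }

theorem supportRelations_trivial {R : Type*} [CommRing R] {J H : Ideal R} {f : R}
    {l : List R} (hfl : f ∈ Ideal.ofList l) (hreg : IsSMulRegular (R ⧸ J) f) :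
    SupportRelations () (support l (Grading.trivial (R ⧸ J)).piece)
      (support l (Grading.trivial (R ⧸ (J ⊔ H))).piece)
      (support l (Grading.trivial (R ⧸ (J ⊔ Ideal.span {f} * H))).piece)
      (support l (Grading.trivial (supQuotient J H)).piece) := by
  have htriv (N : Ideal R) : (Grading.trivial R).IsHomogeneous N := fun _ _ h => h
  simpa only [Grading.eq_trivial] using
    supportRelations .trivial (fun r _ => Grading.mem_piece_trivial r) (htriv J) (htriv H)
      (Grading.mem_piece_trivial f) hfl hreg

end Supports

section Polynomial

open Grading Koszul

variable {k : Type*} [Field k] {n : ℕ} {J H I : Ideal (MvPolynomial (Fin n) k)}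
  {f : MvPolynomial (Fin n) k}

theorem mxIdeal_smul_top_ne_top (hI : (degreeGrading k n).IsHomogeneous I) (hI' : I ≠ ⊤) :
    mxIdeal k n • (⊤ : Submodule (MvPolynomial (Fin n) k) (MvPolynomial (Fin n) k ⧸ I)) ≠ ⊤ := by
  intro h
  refine (zero_mem_support_iff_smul_top (isModuleGrading_quotientGrading hI)
    fun _ => mem_piece_one_of_mem_indeterminates).1 (zero_zero_mem_support hI hI') ?_
  simp [ofList_indeterminates, h]

theorem sup_ne_top_of_le_mxIdeal (hI : (degreeGrading k n).IsHomogeneous I) (hI' : I ≠ ⊤)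
    {N : Ideal (MvPolynomial (Fin n) k)} (hN : N ≤ mxIdeal k n) : I ⊔ N ≠ ⊤ := fun h => by
  obtain ⟨x, hx, y, hy, hxy⟩ := Submodule.mem_sup.1 ((Ideal.eq_top_iff_one _).1 h)
  refine mxIdeal_smul_top_ne_top hI hI' (eq_top_iff.2 fun p _ => ?_)
  have hxp : x • p = 0 := by
    obtain ⟨q, rfl⟩ := Ideal.Quotient.mk_surjective p
    exact Ideal.Quotient.eq_zero_iff_mem.2 (I.mul_mem_right q hx)
  rw [← one_smul (MvPolynomial (Fin n) k) p, ← hxy, add_smul, hxp, zero_add]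
  exact Submodule.smul_mem_smul (hN hy) Submodule.mem_top

theorem isGreatest_pdepth (hI : (degreeGrading k n).IsHomogeneous I) (hI' : I ≠ ⊤) :
    IsGreatest (ungradedSupport (indeterminates k n) (MvPolynomial (Fin n) k ⧸ I))
      (n - pdepth I) := by
  have h := isGreatest_ungradedSupport (l := indeterminates k n)
    (M := MvPolynomial (Fin n) k ⧸ I)
    (by rw [ofList_indeterminates]; exact mxIdeal_smul_top_ne_top hI hI')
  rwa [ofList_indeterminates, List.length_map, List.length_finRange] at h

theorem sup_span_singleton_mul_ne_top (hJ : (degreeGrading k n).IsHomogeneous J) (hJ' : J ≠ ⊤)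
    (hf : f ∈ mxIdeal k n) (H : Ideal (MvPolynomial (Fin n) k)) :
    J ⊔ Ideal.span {f} * H ≠ ⊤ :=
  sup_ne_top_of_le_mxIdeal hJ hJ'
    (Ideal.mul_le_left.trans ((Ideal.span_singleton_le_iff_mem _).2 hf))

theorem pdepth_sup_span_singleton_mul (hJ : (degreeGrading k n).IsHomogeneous J)
    (hH : (degreeGrading k n).IsHomogeneous H)
    (hI : (degreeGrading k n).IsHomogeneous (J ⊔ Ideal.span {f} * H))
    (hf : f ∈ mxIdeal k n) (hreg : IsSMulRegular (MvPolynomial (Fin n) k ⧸ J) f)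
    (hJ' : J ≠ ⊤) :
    pdepth (J ⊔ Ideal.span {f} * H) = pdepth (J ⊔ H) ∨
      pdepth (J ⊔ Ideal.span {f} * H) = pdepth J - 1 := by
  obtain h | h := (supportRelations_trivial (ofList_indeterminates (k := k) ▸ hf)
    hreg).eq_succ_or_isGreatest (isGreatest_pdepth hJ hJ')
      (isGreatest_pdepth hI (sup_span_singleton_mul_ne_top hJ hJ' hf H))
  · exact .inr (by lia)
  · have hJH : J ⊔ H ≠ ⊤ := fun hJH => by
      have := Ideal.Quotient.subsingleton_iff.2 hJH
      exact support_eq_empty_of_subsingleton.subset h.1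
    have := (isGreatest_pdepth (hJ.sup hH) hJH).unique h
    exact .inl (by lia)

theorem regQuot_sup_span_singleton_mul (hJ : (degreeGrading k n).IsHomogeneous J)
    (hH : (degreeGrading k n).IsHomogeneous H) {d : ℤ} (hd : 1 ≤ d)
    (hf : f ∈ (degreeGrading k n).piece d)
    (hreg : IsSMulRegular (MvPolynomial (Fin n) k ⧸ J) f) (hJ' : J ≠ ⊤) :
    regQuot (J ⊔ Ideal.span {f} * H) = regQuot (J ⊔ H) + d ∨
      regQuot (J ⊔ Ideal.span {f} * H) ∈ Set.Ico (regQuot J) (regQuot J + d) := by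
  have hf_mem := mem_mxIdeal_of_mem_piece (by lia) hf
  have S := supportRelations isModuleGrading_degreeGrading
    (fun _ => mem_piece_one_of_mem_indeterminates) hJ hH hf
    (ofList_indeterminates (k := k) ▸ hf_mem) hreg
  have hr := isGreatest_regQuot hJ hJ'
  have hs := isGreatest_regQuot (hJ.sup (hH.span_singleton_mul isModuleGrading_degreeGrading hf))
    (sup_span_singleton_mul_ne_top hJ hJ' hf_mem H)
  obtain h | h := lt_or_ge (regQuot (J ⊔ Ideal.span {f} * H)) (regQuot J + d)
  · exact .inr ⟨S.le_of_isGreatest hr hs, h⟩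
  · have hRH := S.isGreatest_sub hd hr hs h
    have hJH : J ⊔ H ≠ ⊤ := fun hJH => by
      have := Ideal.Quotient.subsingleton_iff.2 hJH
      obtain ⟨x, hx, -⟩ := hRH.1
      exact support_eq_empty_of_subsingleton.subset hx
    have := (isGreatest_regQuot (hJ.sup hH) hJH).unique hRH
    exact .inl (by lia)

end Polynomial

/-- **Corollary (depth and regularity modulo a form of degree `d`).** Let `I = J + fH` where
`J, H` are homogeneous ideals and `f` is a form of degree `d` which is a non-zerodivisor on
`R/J`. Then (i) `depth R/I ∈ {depth R/(J+H), depth R/J - 1}` and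
(ii) `reg R/I ∈ {reg R/(J+H) + d, reg R/J + d - 1, …, reg R/J}`. -/
theorem depth_reg_modulo_form {k : Type*} [Field k] {n : ℕ}
    (J H : Ideal (MvPolynomial (Fin n) k))
    (hJ : IsHomogeneousIdeal J) (hH : IsHomogeneousIdeal H)
    (d : ℕ) (f : MvPolynomial (Fin n) k) (hfd : f.IsHomogeneous d) (hf0 : f ≠ 0)
    (hnzd : ∀ g : MvPolynomial (Fin n) k, f * g ∈ J → g ∈ J)
    (I : Ideal (MvPolynomial (Fin n) k)) (hI : I = J + Ideal.span {f} * H) :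
    (pdepth I = pdepth (J + H) ∨ pdepth I = pdepth J - 1) ∧
      (regQuot I = regQuot (J + H) + d ∨
        ∃ e : ℕ, (e : ℤ) ≤ (d : ℤ) - 1 ∧ regQuot I = regQuot J + e) := by
  obtain rfl | hd := eq_or_ne d 0
  · have hf : Ideal.span {f} = ⊤ :=
      Ideal.span_singleton_eq_top.2 (isUnit_of_isHomogeneous_zero hfd hf0)
    simp [hI, hf]
  obtain rfl | hJ_top := eq_or_ne J ⊤
  · exact ⟨.inl (by simp [hI]), .inr ⟨0, by lia, by simp [hI]⟩⟩
  have hJ' := isHomogeneous_degreeGrading hJ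
  have hH' := isHomogeneous_degreeGrading hH
  have hf : f ∈ (degreeGrading k n).piece d := homogOfDeg_iff_mem_piece.1 (.inr ⟨d, rfl, hfd⟩)
  have hf_mem := mem_mxIdeal_of_isHomogeneous hd hfd
  have hreg : IsSMulRegular (MvPolynomial (Fin n) k ⧸ J) f :=
    (isSMulRegular_quotient_iff_mem_of_smul_mem J f).2 hnzd
  rw [Submodule.add_eq_sup] at hI ⊢
  subst hI
  refine ⟨pdepth_sup_span_singleton_mul hJ' hH'
    (hJ'.sup (hH'.span_singleton_mul isModuleGrading_degreeGrading hf)) hf_mem hreg hJ_top, ?_⟩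
  refine (regQuot_sup_span_singleton_mul hJ' hH' (by lia) hf hreg hJ_top).imp_right fun h => ?_
  obtain ⟨e, he⟩ := Int.le.dest h.1
  exact ⟨e, by have := h.2; lia, he.symm⟩
end

section
/- Let R = k[x_1,…,x_n] be a polynomial ring over a field k, let I ⊆ R be a homogeneous ideal, and let f ∈ R be a linear form that is filter-regular on R/I. Then (i) depth R/I ∈ {depth R/(I:f), depth R/(I,f)}, and (ii) reg R/I ∈ {reg R/(I:f) + 1, reg R/(I,f)}. -/
open MvPolynomial

/-!
The regularity of `R/I` is read off the Koszul homology of the variables: it is the largest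
internal degree minus homological degree in which that homology is nonzero. If `R/I` has a free
resolution with `i`-th twists at most `r + i`, then the long exact sequences of its syzygies show
that the Koszul homology vanishes above `r`; conversely, the same sequences bound the twists of
the minimal resolution.

For regularity, the long exact sequence of `0 → (R/(I:f))(-1) → R/I → R/(I,f) → 0` gives all the
required inequalities except `reg R/(I:f) ≤ reg R/I`. There filter-regularity enters: a nonzero
element of `R/I` killed by `f` has a nonzero multiple in the socle, and the socle, being the top
Koszul homology, lives in degrees at most `reg R/I`. Hence `R/I` and `R/(I:f)` agree above that
degree. For depth, either `f` is a nonzerodivisor on `R/I` and `I : f = I`, or `R/I` has a socle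
element and so depth zero, and that element survives in `R/(I,f)` or comes from a socle element of
`R/(I:f)`.
-/

namespace KoszulRegularity

section Koszul

variable {R ι : Type*} [CommRing R] [LinearOrder ι]
variable {M N : Type*} [AddCommGroup M] [AddCommGroup N]

/-- The sign of `eⱼ ∧ e_S` with respect to the basis of increasing wedge products. -/
def koszulSign (j : ι) (S : Finset ι) : ℤ := (-1) ^ (S.filter (· < j)).card

theorem koszulSign_mul_self (j : ι) (S : Finset ι) : koszulSign j S * koszulSign j S = 1 := by
  rw [koszulSign, ← mul_pow, neg_one_mul, neg_neg, one_pow]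

theorem koszulSign_insert {j : ι} {S : Finset ι} (hj : j ∉ S) (l : ι) :
    koszulSign l (insert j S) = (if j < l then -1 else 1) * koszulSign l S := by
  rw [koszulSign, koszulSign, Finset.filter_insert]
  split_ifs
  · rw [Finset.card_insert_of_notMem (by simp [hj]), pow_succ']
  · rw [one_mul]

theorem koszulSign_mul_insert_swap {j l : ι} (h : j ≠ l) {S : Finset ι} (hj : j ∉ S) (hl : l ∉ S) :
    koszulSign j S * koszulSign l (insert j S) = -(koszulSign l S * koszulSign j (insert l S)) := by
  rw [koszulSign_insert hj, koszulSign_insert hl]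
  rcases h.lt_or_gt with h | h <;> simp only [h, h.not_gt, if_true, if_false] <;> ring

theorem koszulSign_insert_mul_insert {j l : ι} (h : j ≠ l) {S : Finset ι} (hj : j ∉ S)
    (hl : l ∉ S) :
    koszulSign j (insert l S) * koszulSign l (insert j S) =
      -(koszulSign l S * koszulSign j S) := by
  rw [koszulSign_insert hj, koszulSign_insert hl]
  rcases h.lt_or_gt with h | h <;> simp only [h, h.not_gt, if_true, if_false] <;> ring

/-- Contraction with the `j`-th basis vector on `⋀ Rⁿ ⊗ M`, whose elements are encoded as families
`w` indexed by finite sets, `w S` being the coefficient of `e_S`. -/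
def contract (j : ι) : (Finset ι → M) →+ (Finset ι → M) where
  toFun w S := if j ∈ S then 0 else koszulSign j S • w (insert j S)
  map_zero' := by ext S; simp
  map_add' v w := by ext S; by_cases h : j ∈ S <;> simp [h]

/-- Exterior multiplication by the `j`-th basis vector on `⋀ Rⁿ ⊗ M`. -/
def wedge (j : ι) : (Finset ι → M) →+ (Finset ι → M) where
  toFun w S := if j ∈ S then koszulSign j (S.erase j) • w (S.erase j) else 0
  map_zero' := by ext S; simp
  map_add' v w := by ext S; by_cases h : j ∈ S <;> simp [h]

theorem contract_apply (j : ι) (w : Finset ι → M) (S : Finset ι) :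
    contract j w S = if j ∈ S then 0 else koszulSign j S • w (insert j S) := rfl

theorem wedge_apply (j : ι) (w : Finset ι → M) (S : Finset ι) :
    wedge j w S = if j ∈ S then koszulSign j (S.erase j) • w (S.erase j) else 0 := rfl

theorem contract_map {F : Type*} [FunLike F M N] [AddMonoidHomClass F M N] (φ : F) (j : ι)
    (w : Finset ι → M) : contract j (φ ∘ w) = φ ∘ contract j w := by
  ext S
  simp only [contract_apply, Function.comp_apply, apply_ite φ, map_zero, map_zsmul]

theorem wedge_map {F : Type*} [FunLike F M N] [AddMonoidHomClass F M N] (φ : F) (j : ι)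
    (w : Finset ι → M) : wedge j (φ ∘ w) = φ ∘ wedge j w := by
  ext S
  simp only [wedge_apply, Function.comp_apply, apply_ite φ, map_zero, map_zsmul]

theorem contract_contract_self (j : ι) (w : Finset ι → M) : contract j (contract j w) = 0 := by
  ext S
  simp [contract_apply]

theorem contract_contract_of_ne {j l : ι} (h : j ≠ l) (w : Finset ι → M) :
    contract j (contract l w) = -contract l (contract j w) := by
  ext S
  by_cases hj : j ∈ S
  · simp [contract_apply, hj]
  by_cases hl : l ∈ S
  · simp [contract_apply, hl]
  simp only [contract_apply, Pi.neg_apply, hj, hl, Finset.mem_insert, h, h.symm, or_self, if_false,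
    smul_smul, ← neg_smul, Finset.insert_comm l j S, koszulSign_mul_insert_swap h hj hl]

theorem contract_wedge_self_apply (j : ι) (w : Finset ι → M) (S : Finset ι) :
    contract j (wedge j w) S = if j ∈ S then 0 else w S := by
  by_cases hj : j ∈ S <;> simp [contract_apply, wedge_apply, hj, smul_smul, koszulSign_mul_self]

theorem wedge_contract_self_apply (j : ι) (w : Finset ι → M) (S : Finset ι) :
    wedge j (contract j w) S = if j ∈ S then w S else 0 := by
  by_cases hj : j ∈ S <;> simp [contract_apply, wedge_apply, hj, smul_smul, koszulSign_mul_self]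

theorem contract_wedge_of_ne {j l : ι} (h : j ≠ l) (w : Finset ι → M) :
    contract j (wedge l w) = -wedge l (contract j w) := by
  ext S
  by_cases hj : j ∈ S
  · simp [contract_apply, wedge_apply, hj, h]
  by_cases hl : l ∈ S
  · obtain ⟨T, hlT, rfl⟩ : ∃ T, l ∉ T ∧ insert l T = S :=
      ⟨S.erase l, S.notMem_erase l, Finset.insert_erase hl⟩
    have hjT : j ∉ T := fun hT => hj (Finset.mem_insert_of_mem hT)
    have hlT' : l ∉ insert j T := by simp [hlT, h.symm]
    simp only [contract_apply, wedge_apply, Pi.neg_apply, hj, hjT, Finset.mem_insert_self,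
      if_false, if_true, Finset.insert_comm j l T,
      Finset.erase_insert hlT, Finset.erase_insert hlT', smul_smul, ← neg_smul,
      koszulSign_insert_mul_insert h hjT hlT]
  · simp [contract_apply, wedge_apply, hj, hl, h.symm]

variable [Module R M] [Module R N]

theorem contract_smul (j : ι) (r : R) (w : Finset ι → M) :
    contract j (r • w) = r • contract j w :=
  contract_map (DistribSMul.toAddMonoidHom M r) j w

theorem wedge_smul (j : ι) (r : R) (w : Finset ι → M) : wedge j (r • w) = r • wedge j w :=
  wedge_map (DistribSMul.toAddMonoidHom M r) j w

variable [Fintype ι] (x : ι → R)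

/-- The Koszul differential of the sequence `x` with coefficients in `M`. -/
def koszulD : (Finset ι → M) →ₗ[R] (Finset ι → M) where
  toFun w := ∑ j, x j • contract j w
  map_add' v w := by simp only [map_add, smul_add, Finset.sum_add_distrib]
  map_smul' r w := by
    simp only [contract_smul, Finset.smul_sum, smul_comm r, RingHom.id_apply]

theorem koszulD_eq_sum (w : Finset ι → M) : koszulD x w = ∑ j, x j • contract j w := rfl

theorem koszulD_apply (w : Finset ι → M) (S : Finset ι) :
    koszulD x w S = ∑ j, x j • contract j w S := by
  simp only [koszulD_eq_sum, Finset.sum_apply, Pi.smul_apply]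

theorem koszulD_koszulD (w : Finset ι → M) : koszulD x (koszulD x w) = 0 := by
  simp only [koszulD_eq_sum, map_sum, contract_smul, smul_smul]
  rw [← Finset.sum_product']
  refine Finset.sum_involution (fun p _ => p.swap) ?_ ?_ (by simp) (by simp)
  · rintro ⟨j, l⟩ -
    obtain rfl | h := eq_or_ne j l
    · simp [contract_contract_self]
    · simp only [Prod.swap, contract_contract_of_ne h, mul_comm (x l), smul_neg, add_neg_cancel]
  · rintro ⟨j, l⟩ - hne h
    obtain rfl : l = j := congrArg Prod.fst h
    exact hne (by rw [contract_contract_self, smul_zero])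

theorem koszulD_map (φ : M →ₗ[R] N) (w : Finset ι → M) :
    koszulD x (φ ∘ w) = φ ∘ koszulD x w := by
  ext S
  simp only [koszulD_apply, contract_map, Function.comp_apply, map_sum, map_smul]

theorem koszulD_univ (w : Finset ι → M) : koszulD x w Finset.univ = 0 := by
  simp [koszulD_apply, contract_apply]

theorem koszulD_single_univ {m : M} (hm : ∀ j, x j • m = 0) :
    koszulD x (Pi.single Finset.univ m) = 0 := by
  ext S
  rw [koszulD_apply]
  refine Finset.sum_eq_zero fun j _ => ?_
  rw [contract_apply, Pi.single_apply]
  split_ifs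
  · rw [smul_zero]
  · rw [smul_comm, hm, smul_zero]
  · rw [smul_zero, smul_zero]

theorem koszulD_single_empty (m : M) : koszulD x (Pi.single ∅ m) = 0 := by
  ext S
  rw [koszulD_apply]
  refine Finset.sum_eq_zero fun j _ => ?_
  simp [contract_apply, Finset.insert_ne_empty]

end Koszul

section Grading

variable {R ι : Type*} [CommRing R] [LinearOrder ι] {x : ι → R}
variable {M N Q : Type*} [AddCommGroup M] [Module R M] [AddCommGroup N] [Module R N]
  [AddCommGroup Q] [Module R Q]

/-- A family of subgroups `piece d S ≤ M` such that the cochains `w` with `w S ∈ piece d S` for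
all `S` form a complex, the Koszul differential raising `d` by one. For a graded module one takes
`piece d S = M_d`, so that `d` is the internal degree minus the homological degree; taking `0` or
`M` according to the size of `S` gives truncations of the Koszul complex instead. -/
structure KoszulGrading (x : ι → R) (M : Type*) [AddCommGroup M] [Module R M] where
  piece : ℤ → Finset ι → AddSubgroup M
  smul_mem : ∀ {d : ℤ} {j : ι} {S : Finset ι} {m : M}, j ∉ S → m ∈ piece d (insert j S) →
    x j • m ∈ piece (d + 1) S

namespace KoszulGrading

/-- The cochains of degree `d` for a grading of the Koszul complex. -/
def component (g : KoszulGrading x M) (d : ℤ) : AddSubgroup (Finset ι → M) where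
  carrier := {w | ∀ S, w S ∈ g.piece d S}
  zero_mem' _ := zero_mem _
  add_mem' hv hw S := add_mem (hv S) (hw S)
  neg_mem' hw S := neg_mem (hw S)

theorem single_mem (g : KoszulGrading x M) {d : ℤ} {S : Finset ι} {m : M} (hm : m ∈ g.piece d S) :
    Pi.single S m ∈ g.component d := by
  intro T
  rcases eq_or_ne T S with rfl | hT
  · rwa [Pi.single_eq_same]
  · rw [Pi.single_eq_of_ne hT]
    exact zero_mem _

theorem koszulD_mem [Fintype ι] (g : KoszulGrading x M) {d : ℤ} {w : Finset ι → M}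
    (hw : w ∈ g.component d) : koszulD x w ∈ g.component (d + 1) := by
  intro S
  rw [koszulD_apply]
  refine sum_mem fun j _ => ?_
  rw [contract_apply]
  split_ifs with hj
  · rw [smul_zero]
    exact zero_mem _
  · rw [smul_comm]
    exact zsmul_mem (g.smul_mem hj (hw _)) _

theorem koszulD_mem' [Fintype ι] (g : KoszulGrading x M) {d : ℤ} {w : Finset ι → M}
    (hw : w ∈ g.component (d - 1)) : koszulD x w ∈ g.component d :=
  sub_add_cancel d 1 ▸ g.koszulD_mem hw

/-- Vanishing of the Koszul homology in degree `d` of the grading. -/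
def ExactAt [Fintype ι] (g : KoszulGrading x M) (d : ℤ) : Prop :=
  ∀ w ∈ g.component d, koszulD x w = 0 → ∃ u ∈ g.component (d - 1), koszulD x u = w

/-- Vanishing of the Koszul homology above degree `r`; for a finitely generated graded module over
a polynomial ring, and `x` the variables, this says that the regularity is at most `r`. -/
def RegularityLE [Fintype ι] (g : KoszulGrading x M) (r : ℤ) : Prop :=
  ∀ d, r < d → g.ExactAt d

theorem RegularityLE.mono [Fintype ι] {g : KoszulGrading x M} {r s : ℤ} (h : g.RegularityLE r)
    (hrs : r ≤ s) : g.RegularityLE s :=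
  fun d hd => h d (hrs.trans_lt hd)

theorem RegularityLE.of_injective_above [Fintype ι] {gM : KoszulGrading x M}
    {gN : KoszulGrading x N} {r : ℤ} (h : gM.RegularityLE r) {φ : M →ₗ[R] N}
    (map_mem : ∀ {d S m}, m ∈ gM.piece d S → φ m ∈ gN.piece d S)
    (exists_lift : ∀ {d S m}, m ∈ gN.piece d S → ∃ m' ∈ gM.piece d S, φ m' = m)
    (eq_zero : ∀ {d S m}, r < d → m ∈ gM.piece d S → φ m = 0 → m = 0) : gN.RegularityLE r := by
  intro d hd w hw hw0
  choose v hv hvw using fun S => exists_lift (hw S)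
  obtain rfl : φ ∘ v = w := funext hvw
  rw [koszulD_map] at hw0
  obtain ⟨u, hu, rfl⟩ := h d hd v hv <| funext fun S =>
    eq_zero (hd.trans (lt_add_one d)) (gM.koszulD_mem hv S) (congrFun hw0 S)
  exact ⟨φ ∘ u, fun S => map_mem (hu S), koszulD_map x φ u⟩

/-- A class in homological degree zero vanishes precisely when it is a combination of the `x j`. -/
theorem ExactAt.exists_sum_smul_eq [Fintype ι] {g : KoszulGrading x M} {d : ℤ} (h : g.ExactAt d)
    {m : M} (hm : m ∈ g.piece d ∅) :
    ∃ y : ι → M, (∀ j, y j ∈ g.piece (d - 1) {j}) ∧ ∑ j, x j • y j = m := by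
  obtain ⟨u, hu, hum⟩ := h (Pi.single ∅ m) (g.single_mem hm) (koszulD_single_empty x m)
  refine ⟨fun j => koszulSign j ∅ • u {j}, fun j => zsmul_mem (hu {j}) _, ?_⟩
  simpa [koszulD_apply, contract_apply] using congrFun hum ∅

/-- In the top homological degree the Koszul homology is the socle. -/
theorem ExactAt.eq_zero_of_smul_eq_zero [Fintype ι] {g : KoszulGrading x M} {d : ℤ}
    (h : g.ExactAt d) {m : M} (hm : m ∈ g.piece d Finset.univ) (hxm : ∀ j, x j • m = 0) :
    m = 0 := by
  obtain ⟨u, -, hum⟩ := h (Pi.single Finset.univ m) (g.single_mem hm) (koszulD_single_univ x hxm)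
  rw [← Pi.single_eq_same (M := fun _ => M) (Finset.univ : Finset ι) m, ← hum, koszulD_univ]

/-- The grading by homological degree: degree `-p` consists of the cochains concentrated in
homological degrees at least `p`. -/
def homological (x : ι → R) (M : Type*) [AddCommGroup M] [Module R M] : KoszulGrading x M where
  piece d S :=
    { carrier := {m | (S.card : ℤ) < -d → m = 0}
      zero_mem' := fun _ => rfl
      add_mem' := fun hm hn hS => by rw [hm hS, hn hS, add_zero]
      neg_mem' := fun hm hS => by rw [hm hS, neg_zero] }
  smul_mem {d j S m} hj hm hS := by
    rw [hm (by rw [Finset.card_insert_of_notMem hj]; push_cast; linarith), smul_zero]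

theorem exactAt_homological_of_card_lt [Fintype ι] {d : ℤ} (hd : (Fintype.card ι : ℤ) < -d) :
    (homological x M).ExactAt d := by
  intro w hw _
  have hw0 : w = 0 := funext fun S =>
    hw S ((Int.ofNat_le.2 (Finset.card_le_univ S)).trans_lt hd)
  exact ⟨0, zero_mem _, by rw [hw0, map_zero]⟩

/-- The grading pulled back along a linear map. -/
def comap (g : KoszulGrading x M) (φ : N →ₗ[R] M) : KoszulGrading x N where
  piece d S := (g.piece d S).comap φ.toAddMonoidHom
  smul_mem {d j S m} hj hm := by
    have := g.smul_mem hj hm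
    rwa [AddSubgroup.mem_comap, LinearMap.toAddMonoidHom_coe, map_smul]

/-- The grading of the twist `M(-1)`. -/
def shift (g : KoszulGrading x M) : KoszulGrading x M where
  piece d S := g.piece (d - 1) S
  smul_mem {d j S m} hj hm := by
    rw [add_sub_right_comm]
    exact g.smul_mem hj hm

theorem RegularityLE.shift_iff [Fintype ι] {g : KoszulGrading x M} {r : ℤ} :
    g.shift.RegularityLE r ↔ g.RegularityLE (r - 1) :=
  ⟨fun h d hd => by simpa [ExactAt, component, KoszulGrading.shift] using h (d + 1) (by linarith),
    fun h d hd => h (d - 1) (by linarith)⟩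

/-- Short exact sequences compatible with gradings, exact in every degree. -/
structure ShortExact (gN : KoszulGrading x N) (gM : KoszulGrading x M) (gQ : KoszulGrading x Q)
    (a : N →ₗ[R] M) (b : M →ₗ[R] Q) : Prop where
  injective : Function.Injective a
  exact : Function.Exact a b
  mem_iff : ∀ {d S m}, a m ∈ gM.piece d S ↔ m ∈ gN.piece d S
  map_mem : ∀ {d S m}, m ∈ gM.piece d S → b m ∈ gQ.piece d S
  exists_lift : ∀ {d S q}, q ∈ gQ.piece d S → ∃ m ∈ gM.piece d S, b m = q

theorem shortExact_subtype {gM : KoszulGrading x M} {gQ : KoszulGrading x Q} {K : Submodule R M}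
    {φ : M →ₗ[R] Q} (hK : Function.Exact K.subtype φ)
    (map_mem : ∀ {d S m}, m ∈ gM.piece d S → φ m ∈ gQ.piece d S)
    (exists_lift : ∀ {d S q}, q ∈ gQ.piece d S → ∃ m ∈ gM.piece d S, φ m = q) :
    ShortExact (gM.comap K.subtype) gM gQ K.subtype φ where
  injective := Subtype.val_injective
  exact := hK
  mem_iff := Iff.rfl
  map_mem := map_mem
  exists_lift := exists_lift

theorem shortExact_homological {a : N →ₗ[R] M} {b : M →ₗ[R] Q} (ha : Function.Injective a)
    (hab : Function.Exact a b) (hb : Function.Surjective b) :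
    ShortExact (homological x N) (homological x M) (homological x Q) a b where
  injective := ha
  exact := hab
  mem_iff := forall_congr' fun _ => map_eq_zero_iff a ha
  map_mem hm hS := by rw [hm hS, map_zero]
  exists_lift {d S q} hq := by
    by_cases hS : (S.card : ℤ) < -d
    · exact ⟨0, zero_mem _, by rw [hq hS, map_zero]⟩
    · obtain ⟨m, rfl⟩ := hb q
      exact ⟨m, fun h => absurd h hS, rfl⟩

namespace ShortExact

variable {gN : KoszulGrading x N} {gM : KoszulGrading x M} {gQ : KoszulGrading x Q}
  {a : N →ₗ[R] M} {b : M →ₗ[R] Q}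

theorem map_left_mem (h : ShortExact gN gM gQ a b) {d : ℤ} {v : Finset ι → N}
    (hv : v ∈ gN.component d) : a ∘ v ∈ gM.component d :=
  fun S => h.mem_iff.2 (hv S)

theorem map_right_mem (h : ShortExact gN gM gQ a b) {d : ℤ} {w : Finset ι → M}
    (hw : w ∈ gM.component d) : b ∘ w ∈ gQ.component d :=
  fun S => h.map_mem (hw S)

theorem comp_eq_zero (h : ShortExact gN gM gQ a b) (v : Finset ι → N) : b ∘ a ∘ v = 0 :=
  funext fun S => h.exact.apply_apply_eq_zero (v S)

theorem exists_component_lift (h : ShortExact gN gM gQ a b) {d : ℤ} {q : Finset ι → Q}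
    (hq : q ∈ gQ.component d) : ∃ w ∈ gM.component d, b ∘ w = q := by
  choose w hw hwq using fun S => h.exists_lift (hq S)
  exact ⟨w, hw, funext hwq⟩

theorem exists_preimage (h : ShortExact gN gM gQ a b) {d : ℤ} {w : Finset ι → M}
    (hw : w ∈ gM.component d) (hbw : b ∘ w = 0) : ∃ v ∈ gN.component d, a ∘ v = w := by
  choose v hv using fun S => (h.exact (w S)).1 (congrFun hbw S)
  exact ⟨v, fun S => h.mem_iff.1 (hv S ▸ hw S), funext hv⟩

theorem comp_left_injective (h : ShortExact gN gM gQ a b) :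
    Function.Injective (a ∘ · : (Finset ι → N) → Finset ι → M) :=
  h.injective.comp_left

variable [Fintype ι]

/-- The connecting homomorphism `H(Q) → H(N)` is onto the kernel of `H(N) → H(M)`. -/
theorem exists_boundary (h : ShortExact gN gM gQ a b) {d : ℤ} (hQ : gQ.ExactAt (d - 1))
    {w : Finset ι → N} {u : Finset ι → M} (hu : u ∈ gM.component (d - 1))
    (huw : koszulD x u = a ∘ w) : ∃ v ∈ gN.component (d - 1), koszulD x v = w := by
  obtain ⟨q, hq, hqu⟩ := hQ (b ∘ u) (h.map_right_mem hu)
    (by rw [koszulD_map, huw, h.comp_eq_zero])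
  obtain ⟨m, hm, rfl⟩ := h.exists_component_lift hq
  obtain ⟨v, hv, hvu⟩ := h.exists_preimage (sub_mem hu (gM.koszulD_mem' hm)) <| by
    rw [koszulD_map] at hqu
    exact funext fun S => by
      simp [show b (koszulD x m S) = b (u S) from congrFun hqu S]
  refine ⟨v, hv, h.comp_left_injective ?_⟩
  simp only [← koszulD_map, hvu, map_sub, koszulD_koszulD, sub_zero, huw]

theorem exactAt_left (h : ShortExact gN gM gQ a b) {d : ℤ} (hM : gM.ExactAt d)
    (hQ : gQ.ExactAt (d - 1)) : gN.ExactAt d := by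
  intro w hw hw0
  obtain ⟨u, hu, huw⟩ := hM (a ∘ w) (h.map_left_mem hw)
    (by rw [koszulD_map, hw0]; exact funext fun _ => map_zero a)
  exact h.exists_boundary hQ hu huw

theorem koszulD_eq_zero (h : ShortExact gN gM gQ a b) {v : Finset ι → N}
    (hv : koszulD x (a ∘ v) = 0) : koszulD x v = 0 :=
  h.comp_left_injective <| by
    simp only [← koszulD_map, hv]
    exact funext fun _ => (map_zero a).symm

theorem exactAt_middle (h : ShortExact gN gM gQ a b) {d : ℤ} (hN : gN.ExactAt d)
    (hQ : gQ.ExactAt d) : gM.ExactAt d := by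
  intro w hw hw0
  obtain ⟨q, hq, hqw⟩ := hQ (b ∘ w) (h.map_right_mem hw)
    (by rw [koszulD_map, hw0]; exact funext fun _ => map_zero b)
  obtain ⟨m, hm, rfl⟩ := h.exists_component_lift hq
  obtain ⟨v, hv, hvw⟩ := h.exists_preimage (sub_mem hw (gM.koszulD_mem' hm)) <| by
    rw [koszulD_map] at hqw
    exact funext fun S => by
      simp [show b (koszulD x m S) = b (w S) from congrFun hqw S]
  obtain ⟨t, ht, rfl⟩ := hN v hv <| h.koszulD_eq_zero <| by
    rw [hvw, map_sub, hw0, koszulD_koszulD, sub_zero]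
  refine ⟨m + a ∘ t, add_mem hm (h.map_left_mem ht), ?_⟩
  rw [map_add, koszulD_map, hvw, add_sub_cancel]

theorem exactAt_right (h : ShortExact gN gM gQ a b) {d : ℤ} (hM : gM.ExactAt d)
    (hN : gN.ExactAt (d + 1)) : gQ.ExactAt d := by
  intro w hw hw0
  obtain ⟨u, hu, rfl⟩ := h.exists_component_lift hw
  obtain ⟨v, hv, hvu⟩ := h.exists_preimage (gM.koszulD_mem hu) (by rw [← koszulD_map, hw0])
  obtain ⟨t, ht, rfl⟩ := hN v hv <| h.koszulD_eq_zero <| by rw [hvu, koszulD_koszulD]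
  rw [add_sub_cancel_right] at ht
  obtain ⟨y, hy, hyu⟩ := hM (u - a ∘ t) (sub_mem hu (h.map_left_mem ht)) <| by
    rw [map_sub, koszulD_map, hvu, sub_self]
  refine ⟨b ∘ y, h.map_right_mem hy, ?_⟩
  rw [koszulD_map, hyu]
  exact funext fun S => by simp [h.exact.apply_apply_eq_zero (t S)]

theorem regularityLE_left (h : ShortExact gN gM gQ a b) {r : ℤ} (hM : gM.RegularityLE r)
    (hQ : gQ.RegularityLE (r - 1)) : gN.RegularityLE r :=
  fun d hd => h.exactAt_left (hM d hd) (hQ _ (by linarith))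

theorem regularityLE_middle (h : ShortExact gN gM gQ a b) {r : ℤ} (hN : gN.RegularityLE r)
    (hQ : gQ.RegularityLE r) : gM.RegularityLE r :=
  fun d hd => h.exactAt_middle (hN d hd) (hQ d hd)

theorem regularityLE_right (h : ShortExact gN gM gQ a b) {r : ℤ} (hM : gM.RegularityLE r)
    (hN : gN.RegularityLE (r + 1)) : gQ.RegularityLE r :=
  fun d hd => h.exactAt_right (hM d hd) (hN _ (by linarith))

end ShortExact
end KoszulGrading
end Grading

section Homotopy

variable {R ι M : Type*} [CommRing R] [LinearOrder ι] [Fintype ι] [AddCommGroup M] [Module R M]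
  {x : ι → R} {i : ι} {D : M →+ M}

/-- An operator `D` that divides by `x i` yields the homotopy `wedge i ∘ D`. -/
theorem koszulD_wedge_comp_add (hi : ∀ m, D (x i • m) = m)
    (hne : ∀ j ≠ i, ∀ m, D (x j • m) = x j • D m) (w : Finset ι → M) :
    koszulD x (wedge i (D ∘ w)) + wedge i (D ∘ koszulD x w) =
      wedge i (contract i w) + x i • contract i (wedge i (D ∘ w)) := by
  have hsum : D ∘ koszulD x w = ∑ j, D ∘ (x j • contract j w) := by
    ext S
    simp [koszulD_eq_sum, Finset.sum_apply]
  rw [hsum, map_sum, koszulD_eq_sum, ← Finset.sum_add_distrib, Finset.sum_eq_single i]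
  · rw [add_comm, show D ∘ (x i • contract i w) = contract i w from funext fun S => hi _]
  · intro j _ hj
    have hD : D ∘ (x j • contract j w) = x j • contract j (D ∘ w) := by
      rw [contract_map]
      exact funext fun S => hne j hj _
    rw [hD, wedge_smul, contract_wedge_of_ne hj, smul_neg, neg_add_cancel]
  · exact fun h => absurd (Finset.mem_univ i) h

theorem sub_koszulD_wedge_comp_apply (hi : ∀ m, D (x i • m) = m)
    (hne : ∀ j ≠ i, ∀ m, D (x j • m) = x j • D m) {w : Finset ι → M} (hw : koszulD x w = 0)
    (S : Finset ι) :
    (w - koszulD x (wedge i (D ∘ w))) S = if i ∈ S then 0 else w S - x i • D (w S) := by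
  have h := koszulD_wedge_comp_add hi hne w
  rw [hw, show D ∘ (0 : Finset ι → M) = 0 from funext fun _ => map_zero D, map_zero,
    add_zero] at h
  rw [h, Pi.sub_apply, Pi.add_apply, Pi.smul_apply, wedge_contract_self_apply,
    contract_wedge_self_apply]
  split_ifs <;> simp

end Homotopy

section Degree

variable {σ k : Type*} [CommRing k]

variable (σ k) in
/-- The grading of the polynomial ring by total degree, indexed by `ℤ` so that it can be
twisted. -/
noncomputable abbrev degreePiece : ℤ → Submodule k (MvPolynomial σ k) :=
  weightedHomogeneousSubmodule k (1 : σ → ℤ)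

noncomputable instance : GradedAlgebra (degreePiece σ k) := weightedGradedAlgebra k 1

theorem weight_one_int (m : σ →₀ ℕ) : Finsupp.weight (1 : σ → ℤ) m = (m.degree : ℤ) := by
  simp [Finsupp.weight_apply, Finsupp.sum, Finsupp.degree_apply]

theorem mem_degreePiece {p : MvPolynomial σ k} {d : ℤ} :
    p ∈ degreePiece σ k d ↔ ∀ m, coeff m p ≠ 0 → (m.degree : ℤ) = d := by
  simp only [mem_weightedHomogeneousSubmodule, IsWeightedHomogeneous, weight_one_int]

theorem mem_degreePiece_natCast {p : MvPolynomial σ k} {d : ℕ} :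
    p ∈ degreePiece σ k d ↔ p.IsHomogeneous d := by
  simp only [mem_degreePiece, Nat.cast_inj, IsHomogeneous, IsWeightedHomogeneous,
    Finsupp.degree_eq_weight_one]
  rfl

theorem one_mem_degreePiece : (1 : MvPolynomial σ k) ∈ degreePiece σ k 0 :=
  SetLike.GradedOne.one_mem

theorem X_mem_degreePiece (i : σ) : X i ∈ degreePiece σ k 1 :=
  isWeightedHomogeneous_X k 1 i

theorem eq_zero_of_mem_degreePiece_of_neg {p : MvPolynomial σ k} {d : ℤ}
    (hp : p ∈ degreePiece σ k d) (hd : d < 0) : p = 0 := by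
  ext m
  by_contra hm
  have := mem_degreePiece.1 hp m hm
  omega

theorem coeff_proj (d : ℤ) (p : MvPolynomial σ k) (m : σ →₀ ℕ) :
    coeff m (GradedRing.proj (degreePiece σ k) d p) =
      if (m.degree : ℤ) = d then coeff m p else 0 := by
  rw [GradedRing.proj_apply, ← weight_one_int, ← coeff_weightedHomogeneousComponent]
  exact congrArg (coeff m) (weightedDecomposition.decompose'_apply k 1 p d)

theorem proj_zero_eq_C (p : MvPolynomial σ k) :
    GradedRing.proj (degreePiece σ k) 0 p = C (coeff 0 p) := by
  classical
  ext m
  simp only [coeff_proj, coeff_C, Nat.cast_eq_zero, Finsupp.degree_eq_zero_iff, eq_comm (b := m)]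
  split_ifs with h <;> simp [h]

theorem proj_mul_of_mem {a : MvPolynomial σ k} {i : ℤ} (ha : a ∈ degreePiece σ k i) (d : ℤ)
    (p : MvPolynomial σ k) :
    GradedRing.proj (degreePiece σ k) d (a * p) =
      a * GradedRing.proj (degreePiece σ k) (d - i) p := by
  have := DirectSum.coe_decompose_mul_add_of_left_mem (degreePiece σ k) (j := d - i) (b := p) ha
  rwa [add_sub_cancel] at this

theorem proj_of_mem {p : MvPolynomial σ k} {d : ℤ} (hp : p ∈ degreePiece σ k d) :
    GradedRing.proj (degreePiece σ k) d p = p :=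
  DirectSum.decompose_of_mem_same _ hp

theorem proj_mem (d : ℤ) (p : MvPolynomial σ k) :
    GradedRing.proj (degreePiece σ k) d p ∈ degreePiece σ k d :=
  SetLike.coe_mem _

end Degree

section FreeModule

variable {σ k β : Type*} [CommRing k]

/-- The vectors of degree `d` in the graded free module `⊕ᵣ R(-D r)`. -/
def vecPiece (D : β → ℤ) (d : ℤ) : AddSubgroup (β → MvPolynomial σ k) where
  carrier := {w | ∀ r, w r ∈ degreePiece σ k (d - D r)}
  zero_mem' _ := zero_mem _
  add_mem' hv hw r := add_mem (hv r) (hw r)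
  neg_mem' hw r := neg_mem (hw r)

/-- The Koszul grading of the graded free module `⊕ᵣ R(-D r)`. -/
noncomputable def freeGrading [LinearOrder σ] (D : β → ℤ) :
    KoszulGrading (X (R := k) (σ := σ)) (β → MvPolynomial σ k) where
  piece d _ := vecPiece D d
  smul_mem {d j S w} _ hw r := by
    have := SetLike.mul_mem_graded (X_mem_degreePiece (k := k) j) (hw r)
    rwa [show 1 + (d - D r) = d + 1 - D r by ring] at this

/-- Division by the variable `X i`, discarding remainders. -/
noncomputable def divX (i : σ) : (β → MvPolynomial σ k) →+ (β → MvPolynomial σ k) where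
  toFun w r := (w r).divMonomial (Finsupp.single i 1)
  map_zero' := funext fun _ => zero_divMonomial _
  map_add' _ _ := funext fun _ => add_divMonomial _ _ _

theorem divX_smul_self (i : σ) (w : β → MvPolynomial σ k) :
    divX i ((X i : MvPolynomial σ k) • w) = w :=
  funext fun r => X_mul_divMonomial i (w r)

theorem divX_smul_of_ne {i j : σ} (h : j ≠ i) (w : β → MvPolynomial σ k) :
    divX i ((X j : MvPolynomial σ k) • w) = (X j : MvPolynomial σ k) • divX i w := by
  classical
  ext r m
  simp only [divX, AddMonoidHom.coe_mk, ZeroHom.coe_mk, Pi.smul_apply, smul_eq_mul,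
    coeff_divMonomial, coeff_X_mul', Finsupp.mem_support_iff, Finsupp.add_apply,
    Finsupp.single_eq_of_ne h, zero_add]
  split_ifs with hj
  · rw [add_tsub_assoc_of_le (Finsupp.single_le_iff.2 (Nat.one_le_iff_ne_zero.2 hj))]
  · rfl

theorem coeff_sub_smul_divX (i : σ) (w : β → MvPolynomial σ k) (r : β) (m : σ →₀ ℕ) :
    coeff m ((w - (X i : MvPolynomial σ k) • divX i w) r) =
      if m i = 0 then coeff m (w r) else 0 := by
  classical
  rw [Pi.sub_apply, coeff_sub, Pi.smul_apply, smul_eq_mul, coeff_X_mul']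
  by_cases h : m i = 0
  · rw [if_pos h, if_neg (by simpa using h), sub_zero]
  · rw [if_neg h, if_pos (by simpa using h)]
    simp only [divX, AddMonoidHom.coe_mk, ZeroHom.coe_mk]
    rw [coeff_divMonomial, add_tsub_cancel_of_le, sub_self]
    exact Finsupp.single_le_iff.2 (Nat.one_le_iff_ne_zero.2 h)

variable [LinearOrder σ]

theorem wedge_divX_mem_freeGrading (D : β → ℤ) (i : σ) {d : ℤ}
    {w : Finset σ → β → MvPolynomial σ k} (hw : w ∈ (freeGrading D).component d) :
    wedge i (divX i ∘ w) ∈ (freeGrading D).component (d - 1) := by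
  intro S
  rw [wedge_apply]
  split_ifs
  · suffices divX i (w (S.erase i)) ∈ vecPiece D (d - 1) from zsmul_mem this _
    refine fun r => mem_degreePiece.2 fun m hm => ?_
    have := mem_degreePiece.1 (hw (S.erase i) r) _ (coeff_divMonomial _ (w _ r) m ▸ hm)
    rw [map_add, Finsupp.degree_single] at this
    push_cast at this
    linarith
  · exact zero_mem _

theorem wedge_mem_homological {R M : Type*} [CommRing R] [AddCommGroup M] [Module R M]
    {x : σ → R} (i : σ) {d : ℤ} {w : Finset σ → M}
    (hw : w ∈ (KoszulGrading.homological x M).component d) :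
    wedge i w ∈ (KoszulGrading.homological x M).component (d - 1) := by
  intro S hS
  rw [wedge_apply]
  split_ifs with hi
  · rw [hw _ (by rw [Finset.card_erase_of_mem hi, Nat.cast_sub (Finset.card_pos.2 ⟨i, hi⟩)]
                 push_cast; linarith), smul_zero]
  · rfl

variable [Fintype σ]

/-- Every cycle is modified by boundaries until it is concentrated in degree zero of both the
exterior algebra and the variables in `t`. -/
theorem exists_sub_koszulD_coeff (g : KoszulGrading (X (R := k)) (β → MvPolynomial σ k))
    (hg : ∀ i d, ∀ w ∈ g.component d, wedge i (divX i ∘ w) ∈ g.component (d - 1)) {d : ℤ}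
    {w : Finset σ → β → MvPolynomial σ k} (hw : w ∈ g.component d)
    (hw0 : koszulD (X (R := k)) w = 0) (t : Finset σ) :
    ∃ u ∈ g.component (d - 1), ∀ S r m, coeff m ((w - koszulD (X (R := k)) u) S r) =
      if ∃ i ∈ t, i ∈ S ∨ m i ≠ 0 then 0 else coeff m (w S r) := by
  classical
  induction t using Finset.induction_on with
  | empty => exact ⟨0, zero_mem _, by simp⟩
  | insert i t _ ih =>
    obtain ⟨u, hu, hcoeff⟩ := ih
    set v := w - koszulD (X (R := k)) u with hv
    have hv0 : koszulD (X (R := k)) v = 0 := by rw [hv, map_sub, hw0, koszulD_koszulD, sub_zero]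
    refine ⟨u + wedge i (divX i ∘ v),
      add_mem hu (hg i d v (sub_mem hw (g.koszulD_mem' hu))), fun S r m => ?_⟩
    rw [map_add, ← sub_sub, ← hv, sub_koszulD_wedge_comp_apply (divX_smul_self i)
      (fun j hj => divX_smul_of_ne hj) hv0]
    by_cases hi : i ∈ S
    · simp [hi]
    · rw [if_neg hi, coeff_sub_smul_divX, hcoeff]
      by_cases hm : m i = 0 <;> simp [hi, hm]

theorem exists_koszulD_eq_of_coeff_zero (g : KoszulGrading (X (R := k)) (β → MvPolynomial σ k))
    (hg : ∀ i d, ∀ w ∈ g.component d, wedge i (divX i ∘ w) ∈ g.component (d - 1)) {d : ℤ}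
    {w : Finset σ → β → MvPolynomial σ k} (hw : w ∈ g.component d)
    (hw0 : koszulD (X (R := k)) w = 0) (hcoeff : ∀ r, coeff 0 (w ∅ r) = 0) :
    ∃ u ∈ g.component (d - 1), koszulD (X (R := k)) u = w := by
  obtain ⟨u, hu, hwu⟩ := exists_sub_koszulD_coeff g hg hw hw0 Finset.univ
  refine ⟨u, hu, (sub_eq_zero.1 (_root_.funext fun S => _root_.funext fun r => ?_)).symm⟩
  ext m
  rw [hwu, Pi.zero_apply, Pi.zero_apply, coeff_zero]
  split_ifs with h
  · rfl
  · push Not at h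
    obtain rfl : S = ∅ := Finset.eq_empty_of_forall_notMem fun i => (h i (Finset.mem_univ i)).1
    obtain rfl : m = 0 := Finsupp.ext fun i => (h i (Finset.mem_univ i)).2
    exact hcoeff r

theorem regularityLE_freeGrading {D : β → ℤ} {s : ℤ} (hD : ∀ r, D r ≤ s) :
    (freeGrading (σ := σ) (k := k) D).RegularityLE s := by
  intro d hd w hw hw0
  refine exists_koszulD_eq_of_coeff_zero _ (fun i _ _ => wedge_divX_mem_freeGrading D i) hw hw0
    fun r => by_contra fun hr => ?_
  have := mem_degreePiece.1 (hw ∅ r) 0 hr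
  rw [map_zero, Nat.cast_zero] at this
  linarith [hD r]

theorem exists_homological_koszulD_eq {d : ℤ} {w : Finset σ → β → MvPolynomial σ k}
    (hw : w ∈ (KoszulGrading.homological (X (R := k)) _).component d)
    (hw0 : koszulD (X (R := k)) w = 0) (hcoeff : ∀ r, coeff 0 (w ∅ r) = 0) :
    ∃ u ∈ (KoszulGrading.homological (X (R := k)) _).component (d - 1),
      koszulD (X (R := k)) u = w :=
  exists_koszulD_eq_of_coeff_zero _ (fun i _ w hw => wedge_mem_homological i fun S hS => by
    rw [Function.comp_apply, hw S hS, map_zero]) hw hw0 hcoeff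

end FreeModule

section GradedVectors

variable {σ k β γ : Type*} [CommRing k]

/-- The homogeneous component of degree `d` of a vector in `⊕ᵣ R(-D r)`. -/
noncomputable def vecProj (D : β → ℤ) (d : ℤ) :
    (β → MvPolynomial σ k) →+ (β → MvPolynomial σ k) where
  toFun w r := GradedRing.proj (degreePiece σ k) (d - D r) (w r)
  map_zero' := _root_.funext fun _ => map_zero _
  map_add' _ _ := _root_.funext fun _ => map_add _ _ _

theorem vecProj_apply (D : β → ℤ) (d : ℤ) (w : β → MvPolynomial σ k) (r : β) :
    vecProj D d w r = GradedRing.proj (degreePiece σ k) (d - D r) (w r) := rfl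

theorem vecProj_mem (D : β → ℤ) (d : ℤ) (w : β → MvPolynomial σ k) :
    vecProj D d w ∈ vecPiece D d :=
  fun _ => proj_mem _ _

theorem vecProj_of_mem {D : β → ℤ} {d : ℤ} {w : β → MvPolynomial σ k} (hw : w ∈ vecPiece D d) :
    vecProj D d w = w :=
  _root_.funext fun r => proj_of_mem (hw r)

theorem exists_sum_vecProj_eq [Finite β] (D : β → ℤ) (w : β → MvPolynomial σ k) :
    ∃ s : Finset ℤ, ∑ d ∈ s, vecProj D d w = w := by
  classical
  have := Fintype.ofFinite β
  refine ⟨Finset.univ.biUnion fun r => (w r).support.image fun m => m.degree + D r, ?_⟩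
  ext r m
  simp only [Finset.sum_apply, coeff_sum, vecProj_apply, coeff_proj, eq_sub_iff_add_eq,
    Finset.sum_ite_eq]
  split_ifs with h
  · rfl
  · by_contra hm
    exact h (Finset.mem_biUnion.2 ⟨r, Finset.mem_univ r,
      Finset.mem_image_of_mem _ (mem_support_iff.2 (Ne.symm hm))⟩)

/-- Matrices of degree-preserving maps `⊕_c R(-D' c) → ⊕_r R(-D r)`. -/
def IsGradedMatrix (D : β → ℤ) (D' : γ → ℤ) (A : Matrix β γ (MvPolynomial σ k)) : Prop :=
  ∀ r c, A r c ∈ degreePiece σ k (D' c - D r)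

namespace IsGradedMatrix

variable [Fintype γ] {D : β → ℤ} {D' : γ → ℤ} {A : Matrix β γ (MvPolynomial σ k)}

theorem vecProj_mulVec (hA : IsGradedMatrix D D' A) (d : ℤ) (u : γ → MvPolynomial σ k) :
    vecProj D d (A.mulVec u) = A.mulVec (vecProj D' d u) := by
  ext1 r
  simp only [vecProj_apply, Matrix.mulVec, dotProduct, map_sum]
  refine Finset.sum_congr rfl fun c _ => ?_
  rw [proj_mul_of_mem (hA r c), sub_sub_sub_cancel_right]

theorem mulVec_mem (hA : IsGradedMatrix D D' A) {d : ℤ} {u : γ → MvPolynomial σ k}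
    (hu : u ∈ vecPiece D' d) : A.mulVec u ∈ vecPiece D d := by
  rw [← vecProj_of_mem hu, ← hA.vecProj_mulVec]
  exact vecProj_mem _ _ _

theorem exists_mulVec_eq (hA : IsGradedMatrix D D' A) {d : ℤ} {w : β → MvPolynomial σ k}
    (hw : w ∈ vecPiece D d) (h : w ∈ LinearMap.range A.mulVecLin) :
    ∃ u ∈ vecPiece D' d, A.mulVec u = w := by
  obtain ⟨u, rfl⟩ := h
  exact ⟨vecProj D' d u, vecProj_mem _ _ _, by
    rw [← hA.vecProj_mulVec]; exact vecProj_of_mem hw⟩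

theorem shortExact [LinearOrder σ] (hA : IsGradedMatrix D D' A)
    {Z : Submodule (MvPolynomial σ k) (β → MvPolynomial σ k)} (hZ : A.mulVecLin.range = Z) :
    KoszulGrading.ShortExact ((freeGrading D').comap A.mulVecLin.ker.subtype) (freeGrading D')
      ((freeGrading D).comap Z.subtype) A.mulVecLin.ker.subtype
      (A.mulVecLin.codRestrict Z fun u => hZ ▸ ⟨u, rfl⟩) := by
  subst hZ
  refine KoszulGrading.shortExact_subtype ?_ (fun hm => hA.mulVec_mem hm) fun {_ _ q} hq => ?_
  · simp only [LinearMap.exact_iff, LinearMap.ker_codRestrict, Submodule.range_subtype]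
  · obtain ⟨u, hu, huq⟩ := hA.exists_mulVec_eq hq q.2
    exact ⟨u, hu, Subtype.ext huq⟩

end IsGradedMatrix

end GradedVectors

section MinimalCovers

variable {σ k : Type*}

/-- Graded submodules of the graded free modules `⊕ᵣ R(-twist r)` of finite rank. -/
structure GradedSubmodule (σ k : Type*) [CommRing k] where
  rank : ℕ
  twist : Fin rank → ℤ
  carrier : Submodule (MvPolynomial σ k) (Fin rank → MvPolynomial σ k)
  vecProj_mem : ∀ z ∈ carrier, ∀ d, vecProj twist d z ∈ carrier

/-- The grading a graded submodule inherits from the ambient free module. -/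
noncomputable def GradedSubmodule.grading [CommRing k] [LinearOrder σ]
    (Z : GradedSubmodule σ k) : KoszulGrading (X (R := k) (σ := σ)) Z.carrier :=
  (freeGrading Z.twist).comap Z.carrier.subtype

theorem GradedSubmodule.exists_matrix [CommRing k] [IsNoetherianRing k] [Finite σ]
    (Z : GradedSubmodule σ k) :
    ∃ (m : ℕ) (D : Fin m → ℤ) (A : Matrix (Fin Z.rank) (Fin m) (MvPolynomial σ k)),
      IsGradedMatrix Z.twist D A ∧ A.mulVecLin.range = Z.carrier := by
  set T : Set (Fin Z.rank → MvPolynomial σ k) := {z | z ∈ Z.carrier ∧ ∃ d, z ∈ vecPiece Z.twist d}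
  have hT : Submodule.span (MvPolynomial σ k) T = Z.carrier := by
    refine le_antisymm (Submodule.span_le.2 fun z hz => hz.1) fun z hz => ?_
    obtain ⟨s, hs⟩ := exists_sum_vecProj_eq Z.twist z
    exact hs ▸ Submodule.sum_mem _ fun d _ =>
      Submodule.subset_span ⟨Z.vecProj_mem z hz d, d, KoszulRegularity.vecProj_mem _ _ _⟩
  obtain ⟨s, hsT, hs⟩ := (Submodule.fg_span_iff_fg_span_finset_subset
    (R := MvPolynomial σ k) T).1 (IsNoetherian.noetherian _)
  choose deg hdeg using fun z : s => (hsT z.2).2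
  refine ⟨s.card, deg ∘ s.equivFin.symm, Matrix.of fun r c => s.equivFin.symm c |>.1 r,
    fun r c => hdeg (s.equivFin.symm c) r, ?_⟩
  have hcol : (Matrix.of fun r c => (s.equivFin.symm c).1 r).col = Subtype.val ∘ s.equivFin.symm :=
    rfl
  rw [Matrix.range_mulVecLin, hcol, s.equivFin.symm.surjective.range_comp, Subtype.range_coe, ← hT,
    hs]

theorem range_submatrix_succAbove {R : Type*} [CommRing R] {β : Type*} {m : ℕ}
    {A : Matrix β (Fin (m + 1)) R} {c : Fin (m + 1)} {u : Fin (m + 1) → R} (hu : u c = 0)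
    (h : A.mulVec u = A.mulVec (Pi.single c 1)) :
    (A.submatrix id c.succAbove).mulVecLin.range = A.mulVecLin.range := by
  have hspan : (A.submatrix id c.succAbove).col = A.col ∘ c.succAbove := rfl
  rw [Matrix.range_mulVecLin, Matrix.range_mulVecLin, hspan]
  refine le_antisymm (Submodule.span_mono (Set.range_comp_subset_range _ _))
    (Submodule.span_le.2 ?_)
  rintro _ ⟨i, rfl⟩
  rcases Fin.eq_self_or_eq_succAbove c i with rfl | ⟨i, rfl⟩
  · rw [← A.mulVec_single_one i, ← h, Matrix.mulVec_eq_sum, Fin.sum_univ_succAbove _ i, hu]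
    simp only [MulOpposite.op_zero, zero_smul, zero_add, op_smul_eq_smul]
    exact Submodule.sum_mem _ fun j _ =>
      Submodule.smul_mem _ _ (Submodule.subset_span ⟨j, rfl⟩)
  · exact Submodule.subset_span ⟨i, rfl⟩

/-- A minimal graded cover `⊕_c R(-twist c) → Z`; minimality says that no column of the matrix is
a combination of the others. -/
structure MinimalCover [CommRing k] (Z : GradedSubmodule σ k) where
  rank : ℕ
  twist : Fin rank → ℤ
  matrix : Matrix (Fin Z.rank) (Fin rank) (MvPolynomial σ k)
  isGradedMatrix : IsGradedMatrix Z.twist twist matrix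
  range_eq : matrix.mulVecLin.range = Z.carrier
  minimal : ∀ c u, u c = 0 → matrix.mulVec u ≠ matrix.mulVec (Pi.single c 1)

namespace MinimalCover

instance nonempty [CommRing k] [IsNoetherianRing k] [Finite σ] (Z : GradedSubmodule σ k) :
    Nonempty (MinimalCover Z) := by
  classical
  obtain ⟨m, ⟨D, A, hA, hrange⟩, hmin⟩ := Nat.findX Z.exists_matrix
  refine ⟨m, D, A, hA, hrange, fun c u hu h => ?_⟩
  obtain _ | m := m
  · exact c.elim0
  · exact hmin m m.lt_succ_self ⟨D ∘ c.succAbove, A.submatrix id c.succAbove,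
      fun r i => hA r (c.succAbove i), (range_submatrix_succAbove hu h).trans hrange⟩

section CommRing

variable [CommRing k] {Z : GradedSubmodule σ k}

theorem mulVec_mem (C : MinimalCover Z) (u : Fin C.rank → MvPolynomial σ k) :
    C.matrix.mulVec u ∈ Z.carrier := by
  rw [← C.range_eq]
  exact ⟨u, rfl⟩

theorem exists_mulVec_eq (C : MinimalCover Z) {z : Fin Z.rank → MvPolynomial σ k}
    (hz : z ∈ Z.carrier) : ∃ u, C.matrix.mulVec u = z := by
  rwa [← C.range_eq] at hz

theorem vecProj_mem_ker (C : MinimalCover Z) {u : Fin C.rank → MvPolynomial σ k}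
    (hu : u ∈ C.matrix.mulVecLin.ker) (d : ℤ) : vecProj C.twist d u ∈ C.matrix.mulVecLin.ker := by
  rw [LinearMap.mem_ker, Matrix.mulVecLin_apply] at hu ⊢
  rw [← C.isGradedMatrix.vecProj_mulVec, hu, map_zero]

/-- The kernel of a minimal cover, that is, the next syzygy module. -/
noncomputable def kernel (C : MinimalCover Z) : GradedSubmodule σ k where
  rank := C.rank
  twist := C.twist
  carrier := C.matrix.mulVecLin.ker
  vecProj_mem _ hz := C.vecProj_mem_ker hz

variable [LinearOrder σ]

theorem shortExact (C : MinimalCover Z) :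
    KoszulGrading.ShortExact ((freeGrading C.twist).comap C.matrix.mulVecLin.ker.subtype)
      (freeGrading C.twist) Z.grading C.matrix.mulVecLin.ker.subtype
      (C.matrix.mulVecLin.codRestrict Z.carrier C.mulVec_mem) :=
  C.isGradedMatrix.shortExact C.range_eq

variable [Fintype σ]

theorem twist_le (C : MinimalCover Z) {s : ℤ} (h : Z.grading.RegularityLE s) (c : Fin C.rank) :
    C.twist c ≤ s := by
  by_contra! hc
  have hmem : C.matrix.mulVec (Pi.single c 1) ∈ vecPiece Z.twist (C.twist c) := fun r => by
    rw [C.matrix.mulVec_single_one]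
    exact C.isGradedMatrix r c
  obtain ⟨y, hy, hsum⟩ := (h _ hc).exists_sum_smul_eq (m := ⟨_, C.mulVec_mem _⟩) hmem
  choose u hu huy using fun j => C.shortExact.exists_lift (hy j)
  have huc : ∀ j, u j c = 0 := fun j =>
    eq_zero_of_mem_degreePiece_of_neg (hu j c) (by linarith)
  refine C.minimal c (∑ j, (X j : MvPolynomial σ k) • u j) (by simp [Finset.sum_apply, huc]) ?_
  have hcover : C.matrix.mulVecLin.codRestrict Z.carrier C.mulVec_mem
      (∑ j, (X j : MvPolynomial σ k) • u j) =
      ⟨C.matrix.mulVec (Pi.single c 1), C.mulVec_mem _⟩ := by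
    simp only [map_sum, map_smul, huy, hsum]
  exact congrArg Subtype.val hcover

theorem regularityLE_kernel (C : MinimalCover Z) {s : ℤ} (h : Z.grading.RegularityLE s) :
    C.kernel.grading.RegularityLE (s + 1) :=
  C.shortExact.regularityLE_left
    (regularityLE_freeGrading fun c => (C.twist_le h c).trans (by linarith))
    (by rwa [add_sub_cancel_right])

end CommRing

section Field

variable [Field k] {Z : GradedSubmodule σ k}

theorem coeff_zero_eq_zero (C : MinimalCover Z) {u : Fin C.rank → MvPolynomial σ k}
    (hu : u ∈ C.matrix.mulVecLin.ker) (c : Fin C.rank) : coeff 0 (u c) = 0 := by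
  by_contra hc
  set v := vecProj C.twist (C.twist c) u with hv
  have hv0 : C.matrix.mulVec v = 0 := C.vecProj_mem_ker hu _
  have hvc : v c = MvPolynomial.C (coeff 0 (u c)) := by
    rw [hv, vecProj_apply, sub_self, proj_zero_eq_C]
  refine C.minimal c (Pi.single c 1 - (MvPolynomial.C (coeff 0 (u c))⁻¹ : MvPolynomial σ k) • v)
    ?_ ?_
  · simp [hvc, ← C_mul, inv_mul_cancel₀ hc]
  · rw [Matrix.mulVec_sub, Matrix.mulVec_smul, hv0, smul_zero, sub_zero]

variable [LinearOrder σ] [Fintype σ]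

theorem exactAt_homological_ker (C : MinimalCover Z) {d : ℤ}
    (h : (KoszulGrading.homological (X (R := k) (σ := σ)) Z.carrier).ExactAt (d - 1)) :
    (KoszulGrading.homological (X (R := k) (σ := σ)) C.matrix.mulVecLin.ker).ExactAt d := by
  intro w hw hw0
  have hses := KoszulGrading.shortExact_homological (x := X (R := k)) C.shortExact.injective
    C.shortExact.exact fun z => (C.exists_mulVec_eq z.2).imp fun _ => Subtype.ext
  obtain ⟨u, hu, huw⟩ := exists_homological_koszulD_eq (hses.map_left_mem hw)
    (by rw [koszulD_map, hw0]; exact _root_.funext fun _ => map_zero _)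
    fun c => C.coeff_zero_eq_zero (w ∅).2 c
  exact hses.exists_boundary h hu huw

theorem rank_eq_zero (C : MinimalCover Z) {d : ℤ} (hd : 0 ≤ d)
    (h : (KoszulGrading.homological (X (R := k) (σ := σ)) Z.carrier).ExactAt d) :
    C.rank = 0 := by
  by_contra hrank
  set c : Fin C.rank := ⟨0, Nat.pos_of_ne_zero hrank⟩
  obtain ⟨y, -, hsum⟩ := h.exists_sum_smul_eq (m := ⟨_, C.mulVec_mem (Pi.single c 1)⟩)
    fun hd' => absurd hd' (by simpa using hd)
  choose u hu using fun j => C.exists_mulVec_eq (y j).2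
  have hker : ∑ j, (X j : MvPolynomial σ k) • u j - Pi.single c 1 ∈ C.matrix.mulVecLin.ker := by
    rw [LinearMap.sub_mem_ker_iff, map_sum]
    simpa [hu] using congrArg Subtype.val hsum
  simpa [coeff_sum, coeff_X_mul', Finset.sum_apply] using C.coeff_zero_eq_zero hker c

end Field

end MinimalCover

end MinimalCovers

namespace GradedSubmodule

variable {σ k : Type*}

section Syzygy

variable [CommRing k] [IsNoetherianRing k] [Finite σ]

/-- A minimal cover of `Z`, chosen so that syzygies can be iterated. -/
noncomputable def minimalCover (Z : GradedSubmodule σ k) : MinimalCover Z :=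
  Classical.choice (MinimalCover.nonempty Z)

/-- The iterated kernels of minimal covers, starting with `Z` itself. -/
noncomputable def syzygy (Z : GradedSubmodule σ k) : ℕ → GradedSubmodule σ k
  | 0 => Z
  | i + 1 => (Z.syzygy i).minimalCover.kernel

end Syzygy

variable [LinearOrder σ] [Fintype σ]

theorem regularityLE_syzygy [CommRing k] [IsNoetherianRing k] {Z : GradedSubmodule σ k} {s : ℤ}
    (h : Z.grading.RegularityLE s) (i : ℕ) : (Z.syzygy i).grading.RegularityLE (s + i) := by
  induction i with
  | zero =>
    rw [Nat.cast_zero, add_zero]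
    exact h
  | succ i ih =>
    rw [Nat.cast_succ, ← add_assoc]
    exact (Z.syzygy i).minimalCover.regularityLE_kernel ih

theorem twist_syzygy_succ_le [CommRing k] [IsNoetherianRing k] {Z : GradedSubmodule σ k} {s : ℤ}
    (h : Z.grading.RegularityLE s) (i : ℕ) (c : Fin (Z.syzygy (i + 1)).rank) :
    (Z.syzygy (i + 1)).twist c ≤ s + i :=
  (Z.syzygy i).minimalCover.twist_le (regularityLE_syzygy h i) c

variable [Field k]

theorem exactAt_homological_syzygy (Z : GradedSubmodule σ k) (i : ℕ) :
    (KoszulGrading.homological (X (R := k) (σ := σ)) (Z.syzygy i).carrier).ExactAt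
      (i - (Fintype.card σ + 1)) := by
  induction i with
  | zero => exact KoszulGrading.exactAt_homological_of_card_lt (by push_cast; linarith)
  | succ i ih =>
    refine (Z.syzygy i).minimalCover.exactAt_homological_ker ?_
    rwa [Nat.cast_succ, sub_right_comm, add_sub_cancel_right]

/-- Hilbert's syzygy theorem, up to one step. -/
theorem rank_syzygy_eq_zero (Z : GradedSubmodule σ k) {i : ℕ} (hi : Fintype.card σ + 1 < i) :
    (Z.syzygy i).rank = 0 := by
  obtain ⟨i, rfl⟩ := Nat.exists_eq_add_one.2 (pos_of_gt hi)
  exact (Z.syzygy i).minimalCover.rank_eq_zero (by omega) (Z.exactAt_homological_syzygy i)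

end GradedSubmodule

section Quotient

variable {σ k β : Type*} [CommRing k] {I : Ideal (MvPolynomial σ k)}

/-- The Koszul grading of `R/I`. -/
noncomputable def quotientGrading [LinearOrder σ] (I : Ideal (MvPolynomial σ k)) :
    KoszulGrading (X (R := k) (σ := σ)) (MvPolynomial σ k ⧸ I) where
  piece d _ := (degreePiece σ k d).toAddSubgroup.map (Ideal.Quotient.mk I).toAddMonoidHom
  smul_mem {d j _ m} _ hm := by
    obtain ⟨p, hp, rfl⟩ := hm
    exact ⟨X j * p, add_comm 1 d ▸ SetLike.mul_mem_graded (X_mem_degreePiece j) hp, rfl⟩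

variable [Fintype β] {D : β → ℤ} {v : β → MvPolynomial σ k}

/-- The map `⊕ᵣ R → R/I` sending the `r`-th basis vector to the class of `v r`. -/
noncomputable def augmentation (I : Ideal (MvPolynomial σ k)) (v : β → MvPolynomial σ k) :
    (β → MvPolynomial σ k) →ₗ[MvPolynomial σ k] MvPolynomial σ k ⧸ I :=
  I.mkQ ∘ₗ Fintype.linearCombination (MvPolynomial σ k) v

theorem augmentation_apply (w : β → MvPolynomial σ k) :
    augmentation I v w = Ideal.Quotient.mk I (∑ r, w r * v r) := rfl

theorem augmentation_eq_zero {w : β → MvPolynomial σ k} :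
    augmentation I v w = 0 ↔ ∑ r, w r * v r ∈ I :=
  Ideal.Quotient.eq_zero_iff_mem

theorem sum_vecProj_mul (hv : ∀ r, v r ∈ degreePiece σ k (D r)) (d : ℤ)
    (w : β → MvPolynomial σ k) :
    ∑ r, vecProj D d w r * v r = GradedRing.proj (degreePiece σ k) d (∑ r, w r * v r) := by
  rw [map_sum]
  refine Finset.sum_congr rfl fun r _ => ?_
  rw [mul_comm (w r), proj_mul_of_mem (hv r), vecProj_apply, mul_comm]

theorem vecProj_mem_ker_augmentation (hI : I.IsHomogeneous (degreePiece σ k))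
    (hv : ∀ r, v r ∈ degreePiece σ k (D r)) {w : β → MvPolynomial σ k}
    (hw : w ∈ (augmentation I v).ker) (d : ℤ) : vecProj D d w ∈ (augmentation I v).ker := by
  rw [LinearMap.mem_ker, augmentation_eq_zero] at hw ⊢
  rw [sum_vecProj_mul hv]
  exact hI d hw

variable [LinearOrder σ]

theorem shortExact_augmentation (hI : I.IsHomogeneous (degreePiece σ k))
    (hv : ∀ r, v r ∈ degreePiece σ k (D r)) (hsurj : Function.Surjective (augmentation I v)) :
    KoszulGrading.ShortExact ((freeGrading D).comap (augmentation I v).ker.subtype) (freeGrading D)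
      (quotientGrading I) (augmentation I v).ker.subtype (augmentation I v) := by
  refine KoszulGrading.shortExact_subtype (LinearMap.exact_subtype_ker_map _)
    (fun {d _ w} hw => ⟨∑ r, w r * v r, sum_mem fun r _ => ?_, rfl⟩) ?_
  · have := SetLike.mul_mem_graded (hw r) (hv r)
    rwa [sub_add_cancel] at this
  · rintro d S _ ⟨p, hp, rfl⟩
    obtain ⟨w, hw⟩ := hsurj (Ideal.Quotient.mk I p)
    refine ⟨vecProj D d w, vecProj_mem _ _ _, ?_⟩
    rw [augmentation_apply, Ideal.Quotient.eq] at hw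
    rw [augmentation_apply, sum_vecProj_mul hv]
    have := hI d hw
    change GradedRing.proj (degreePiece σ k) d (_ - p) ∈ I at this
    rw [map_sub, proj_of_mem hp] at this
    exact Ideal.Quotient.eq.2 this

theorem nonneg_of_regularityLE_quotientGrading [Fintype σ] (hI : I ≠ ⊤) {r : ℤ}
    (h : (quotientGrading I).RegularityLE r) : 0 ≤ r := by
  by_contra! hr
  obtain ⟨y, hy, hsum⟩ := (h 0 hr).exists_sum_smul_eq (m := 1)
    ⟨1, one_mem_degreePiece, rfl⟩
  have hy0 : ∀ j, y j = 0 := fun j => by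
    obtain ⟨p, hp, hpy⟩ := hy j
    rw [← hpy, eq_zero_of_mem_degreePiece_of_neg hp (by norm_num), map_zero]
  refine hI ((Ideal.eq_top_iff_one I).2 (Ideal.Quotient.eq_zero_iff_mem.1 ?_))
  rw [map_one, ← hsum]
  exact Finset.sum_eq_zero fun j _ => by rw [hy0, smul_zero]

end Quotient

section Resolution

variable {k : Type*} [Field k] {n : ℕ} {I : Ideal (MvPolynomial (Fin n) k)}

theorem homogOfDeg_iff {p : MvPolynomial (Fin n) k} {d : ℤ} :
    HomogOfDeg p d ↔ p ∈ degreePiece (Fin n) k d := by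
  constructor
  · rintro (rfl | ⟨m, rfl, hp⟩)
    · exact zero_mem _
    · exact mem_degreePiece_natCast.2 hp
  · intro hp
    rcases lt_or_ge d 0 with hd | hd
    · exact Or.inl (eq_zero_of_mem_degreePiece_of_neg hp hd)
    · lift d to ℕ using hd
      exact Or.inr ⟨d, rfl, mem_degreePiece_natCast.1 hp⟩

theorem regularityLE_range_of_gradedFreeRes (F : GradedFreeRes I) {r : ℤ}
    (hF : ∀ (i : ℕ) (j : Fin (F.b i)), F.D i j - (i : ℤ) ≤ r) {m i : ℕ} (hm : F.len < i + m) :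
    ((freeGrading (F.D i)).comap (F.A i).mulVecLin.range.subtype).RegularityLE (r + i + 1) := by
  have hshort (i : ℕ) := IsGradedMatrix.shortExact (fun r c => homogOfDeg_iff.1 (F.hA i r c)) rfl
  induction m generalizing i with
  | zero =>
    have : IsEmpty (Fin (F.b i)) := F.hb i hm ▸ Fin.isEmpty
    exact fun d _ w _ _ => ⟨0, zero_mem _, Subsingleton.elim _ _⟩
  | succ m ih =>
    refine (hshort i).regularityLE_right (regularityLE_freeGrading fun j => ?_) ?_
    · have := hF (i + 1) j
      push_cast at this
      linarith
    · rw [LinearMap.exact_iff.1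
        (show Function.Exact (F.A (i + 1)).mulVecLin (F.A i).mulVecLin from F.hex i)]
      have := ih (i := i + 1) (by omega)
      push_cast at this
      convert this using 1
      ring

theorem regularityLE_of_gradedFreeRes (hI : I.IsHomogeneous (degreePiece (Fin n) k))
    (F : GradedFreeRes I) {r : ℤ} (hF : ∀ (i : ℕ) (j : Fin (F.b i)), F.D i j - (i : ℤ) ≤ r) :
    (quotientGrading I).RegularityLE r := by
  refine (shortExact_augmentation hI (fun r => homogOfDeg_iff.1 (F.hv r)) F.haug).regularityLE_right
    (regularityLE_freeGrading fun j => by simpa using hF 0 j) ?_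
  have hex0 : Function.Exact (F.A 0).mulVecLin (augmentation I F.v) := F.hex0
  rw [LinearMap.exact_iff.1 hex0]
  simpa using regularityLE_range_of_gradedFreeRes F hF (m := F.len + 1) (i := 0) (by omega)

/-- The ideal `I`, as the module of relations of the generator `1` of `R/I`. -/
noncomputable def relationModule (hI : I.IsHomogeneous (degreePiece (Fin n) k)) :
    GradedSubmodule (Fin n) k where
  rank := 1
  twist := 0
  carrier := (augmentation I 1).ker
  vecProj_mem _ hz :=
    vecProj_mem_ker_augmentation hI (fun _ => one_mem_degreePiece) hz

theorem augmentation_one_surjective (I : Ideal (MvPolynomial (Fin n) k)) :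
    Function.Surjective (augmentation I (1 : Fin 1 → MvPolynomial (Fin n) k)) := fun q => by
  obtain ⟨p, rfl⟩ := Ideal.Quotient.mk_surjective q
  exact ⟨fun _ => p, by simp [augmentation_apply]⟩

/-- The minimal graded free resolution of `R/I`. -/
noncomputable def minimalResolution (hI : I.IsHomogeneous (degreePiece (Fin n) k)) :
    GradedFreeRes I where
  len := n + 1
  b i := ((relationModule hI).syzygy i).rank
  hb i hi := (relationModule hI).rank_syzygy_eq_zero (by simpa using hi)
  D i := ((relationModule hI).syzygy i).twist
  A i := ((relationModule hI).syzygy i).minimalCover.matrix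
  v := 1
  hv _ := homogOfDeg_iff.2 one_mem_degreePiece
  hA i r c := homogOfDeg_iff.2 (((relationModule hI).syzygy i).minimalCover.isGradedMatrix r c)
  haug := augmentation_one_surjective I
  hex0 := LinearMap.exact_iff.2 ((relationModule hI).minimalCover.range_eq.symm)
  hex i := LinearMap.exact_iff.2 (((relationModule hI).syzygy (i + 1)).minimalCover.range_eq.symm)

theorem minimalResolution_twist_le (hI : I.IsHomogeneous (degreePiece (Fin n) k)) {r : ℤ}
    (hr : 0 ≤ r) (h : (quotientGrading I).RegularityLE r) (i : ℕ)
    (j : Fin ((minimalResolution hI).b i)) : (minimalResolution hI).D i j - (i : ℤ) ≤ r := by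
  cases i with
  | zero =>
    change (0 : ℤ) - ((0 : ℕ) : ℤ) ≤ r
    simpa using hr
  | succ i =>
    have hrel : (relationModule hI).grading.RegularityLE (r + 1) :=
      (shortExact_augmentation hI (fun _ => one_mem_degreePiece)
        (augmentation_one_surjective I)).regularityLE_left
        (regularityLE_freeGrading fun _ => (by linarith : (0 : ℤ) ≤ r + 1))
        (by rwa [add_sub_cancel_right])
    rw [Nat.cast_succ, sub_le_iff_le_add, ← add_assoc, add_right_comm]
    exact GradedSubmodule.twist_syzygy_succ_le hrel i j

theorem exists_twist_le (F : GradedFreeRes I) :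
    ∃ r : ℤ, ∀ (i : ℕ) (j : Fin (F.b i)), F.D i j - (i : ℤ) ≤ r := by
  obtain ⟨r, hr⟩ := (Set.finite_range fun p : Σ i : Fin (F.len + 1), Fin (F.b i) =>
    F.D p.1 p.2 - (p.1 : ℤ)).bddAbove
  refine ⟨r, fun i j => ?_⟩
  rcases le_or_gt i F.len with hi | hi
  · exact hr ⟨⟨⟨i, Nat.lt_succ_of_le hi⟩, j⟩, rfl⟩
  · exact (Fin.cast (F.hb i hi) j).elim0

theorem regQuot_le_iff (hI : I.IsHomogeneous (degreePiece (Fin n) k)) (hI' : I ≠ ⊤) {r : ℤ} :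
    regQuot I ≤ r ↔ (quotientGrading I).RegularityLE r := by
  have hres (s : ℤ) : (∃ F : GradedFreeRes I, ∀ (i : ℕ) (j : Fin (F.b i)), F.D i j - (i : ℤ) ≤ s) ↔
      (quotientGrading I).RegularityLE s :=
    ⟨fun ⟨F, hF⟩ => regularityLE_of_gradedFreeRes hI F hF, fun h => ⟨minimalResolution hI,
      minimalResolution_twist_le hI (nonneg_of_regularityLE_quotientGrading hI' h) h⟩⟩
  have hbdd : BddBelow {s | (quotientGrading I).RegularityLE s} :=
    ⟨0, fun _ => nonneg_of_regularityLE_quotientGrading hI'⟩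
  obtain ⟨s, hs⟩ := exists_twist_le (minimalResolution hI)
  rw [regQuot, Set.ext hres]
  exact ⟨(Int.csInf_mem ⟨s, (hres s).1 ⟨_, hs⟩⟩ hbdd).mono, csInf_le hbdd⟩

end Resolution

section FilterRegular

variable {R M : Type*} [CommRing R] [AddCommGroup M] [Module R M]

/-- Filter-regular elements, `𝔪` playing the role of the irrelevant ideal. -/
def IsFilterRegular (𝔪 : Ideal R) (M : Type*) [AddCommGroup M] [Module R M] (f : R) : Prop :=
  ∀ p ∈ associatedPrimes R M, p ≠ 𝔪 → f ∉ p

/-- A prime containing the annihilator of `y` and associated to `R ∙ y` contains `f`, hence is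
`𝔪`; it is the annihilator of a multiple of `y`. -/
theorem IsFilterRegular.exists_smul_mem_socle [IsNoetherianRing R] {𝔪 : Ideal R} {f : R}
    (hf : IsFilterRegular 𝔪 M f) {y : M} (hy : y ≠ 0) (hfy : f • y = 0) :
    ∃ c : R, c • y ≠ 0 ∧ ∀ r ∈ 𝔪, r • c • y = 0 := by
  let y' : R ∙ y := ⟨y, Submodule.mem_span_singleton_self y⟩
  obtain ⟨P, hP, hle⟩ := exists_le_isAssociatedPrime_of_isNoetherianRing R y'
    (Subtype.coe_ne_coe.1 hy)
  have hfP : f ∈ P := hle (Submodule.mem_colon_singleton.2 (Subtype.ext hfy))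
  obtain rfl : P = 𝔪 := by
    by_contra h
    exact hf P (hP.map_of_injective (R ∙ y).subtype Subtype.val_injective) h hfP
  obtain ⟨hprime, ⟨z, hz⟩, hPz⟩ := isAssociatedPrime_iff.1 hP
  obtain ⟨c, rfl⟩ := Submodule.mem_span_singleton.1 hz
  have hmem (r : R) : r ∈ P ↔ r • c • y = 0 := by
    rw [hPz, Submodule.mem_colon_singleton, Submodule.mem_bot, ← Subtype.coe_inj]
    rfl
  refine ⟨c, fun hc => hprime.ne_top ((Ideal.eq_top_iff_one P).2 ?_), fun r => (hmem r).1⟩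
  rw [hmem, hc, smul_zero]

theorem exists_isSMulRegular_of_idealDepth_ne_zero {J : Ideal R} (h : idealDepth J M ≠ 0) :
    ∃ r ∈ J, IsSMulRegular M r := by
  contrapose! h
  refine Nat.eq_zero_of_le_zero (csSup_le' ?_)
  rintro _ ⟨_ | ⟨r, rs⟩, rfl, hrs, hreg⟩
  · exact le_rfl
  · exact absurd ((RingTheory.Sequence.isRegular_cons_iff M r rs).1 hreg).1
      (h r (hrs r List.mem_cons_self))

theorem idealDepth_eq_zero {J : Ideal R} {y : M} (hy : y ≠ 0) (hJy : ∀ r ∈ J, r • y = 0) :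
    idealDepth J M = 0 := by
  by_contra h
  obtain ⟨r, hr, hreg⟩ := exists_isSMulRegular_of_idealDepth_ne_zero h
  exact hy (hreg.right_eq_zero_of_smul (hJy r hr))

end FilterRegular

section Colon

variable {R : Type*} [CommRing R] {I J : Ideal R} {f : R}

theorem mem_colon_span_singleton {p : R} : p ∈ I.colon (Ideal.span {f}) ↔ f * p ∈ I := by
  rw [Ideal.mem_colon_span_singleton, mul_comm]

theorem le_colon_span_singleton (I : Ideal R) (f : R) : I ≤ I.colon (Ideal.span {f}) :=
  fun _ hp => mem_colon_span_singleton.2 (I.mul_mem_left f hp)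

theorem le_add_span_singleton (I : Ideal R) (f : R) : I ≤ I + Ideal.span {f} :=
  le_sup_left

/-- The projection `R/I → R/J`, as an `R`-linear map. -/
def projection (h : I ≤ J) : R ⧸ I →ₗ[R] R ⧸ J :=
  Submodule.factor h

/-- The map `R/(I:f) → R/I` induced by multiplication by `f`. -/
def mulColon (I : Ideal R) (f : R) : R ⧸ I.colon (Ideal.span {f}) →ₗ[R] R ⧸ I :=
  Submodule.mapQ _ _ (LinearMap.mulLeft R f) fun _ => mem_colon_span_singleton.1

theorem mulColon_injective (I : Ideal R) (f : R) : Function.Injective (mulColon I f) := by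
  refine (injective_iff_map_eq_zero _).2 (Ideal.Quotient.mk_surjective.forall.2 fun p hp => ?_)
  exact Ideal.Quotient.eq_zero_iff_mem.2
    (mem_colon_span_singleton.2 (Ideal.Quotient.eq_zero_iff_mem.1 hp))

theorem exact_mulColon_projection (I : Ideal R) (f : R) :
    Function.Exact (mulColon I f) (projection (le_add_span_singleton I f)) := by
  refine Ideal.Quotient.mk_surjective.forall.2 fun p => ?_
  change Ideal.Quotient.mk _ p = 0 ↔ _
  rw [Ideal.Quotient.eq_zero_iff_mem, Submodule.add_eq_sup, Submodule.mem_sup]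
  constructor
  · rintro ⟨i, hi, _, hz, rfl⟩
    obtain ⟨t, rfl⟩ := Ideal.mem_span_singleton.1 hz
    exact ⟨Ideal.Quotient.mk _ t, Ideal.Quotient.eq.2 (by simpa using hi)⟩
  · rintro ⟨q, hq⟩
    obtain ⟨t, rfl⟩ := Ideal.Quotient.mk_surjective q
    exact ⟨p - f * t, Ideal.Quotient.eq.1 hq.symm, f * t,
      Ideal.mem_span_singleton.2 ⟨t, rfl⟩, sub_add_cancel _ _⟩

theorem colon_span_singleton_eq_self (hf : IsSMulRegular (R ⧸ I) f) :
    I.colon (Ideal.span {f}) = I := by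
  refine le_antisymm (fun p hp => ?_) (le_colon_span_singleton I f)
  rw [mem_colon_span_singleton, ← Ideal.Quotient.eq_zero_iff_mem] at hp
  exact Ideal.Quotient.eq_zero_iff_mem.1 (hf.right_eq_zero_of_smul hp)

/-- A socle element of `R/I` either survives in `R/(I,f)` or comes from a socle element of
`R/(I:f)`. -/
theorem IsFilterRegular.idealDepth_eq_or [IsNoetherianRing R] {𝔪 : Ideal R}
    (hf : IsFilterRegular 𝔪 (R ⧸ I) f) :
    idealDepth 𝔪 (R ⧸ I) = idealDepth 𝔪 (R ⧸ I.colon (Ideal.span {f})) ∨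
      idealDepth 𝔪 (R ⧸ I) = idealDepth 𝔪 (R ⧸ I + Ideal.span {f}) := by
  by_cases hreg : IsSMulRegular (R ⧸ I) f
  · rw [colon_span_singleton_eq_self hreg]
    exact Or.inl rfl
  obtain ⟨y, hfy, hy⟩ : ∃ y : R ⧸ I, f • y = 0 ∧ y ≠ 0 := by
    simpa [isSMulRegular_iff_right_eq_zero_of_smul] using hreg
  obtain ⟨c, hcy, hsocle⟩ := hf.exists_smul_mem_socle hy hfy
  rw [idealDepth_eq_zero hcy hsocle]
  by_cases hproj : projection (le_add_span_singleton I f) (c • y) = 0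
  · obtain ⟨z, hz⟩ := (exact_mulColon_projection I f _).1 hproj
    refine Or.inl (idealDepth_eq_zero (y := z) ?_ fun r hr => mulColon_injective I f ?_).symm
    · rintro rfl
      exact hcy (by rw [← hz, map_zero])
    · rw [map_smul, hz, hsocle r hr, map_zero]
  · exact Or.inr (idealDepth_eq_zero hproj fun r hr => by
      rw [← map_smul, hsocle r hr, map_zero]).symm

end Colon

section Regularity

variable {σ k : Type*} [CommRing k] {I : Ideal (MvPolynomial σ k)} {f : MvPolynomial σ k} {e : ℤ}

theorem isHomogeneous_colon_span_singleton (hI : I.IsHomogeneous (degreePiece σ k))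
    (hf : f ∈ degreePiece σ k e) :
    (I.colon (Ideal.span {f})).IsHomogeneous (degreePiece σ k) := by
  intro d p hp
  rw [mem_colon_span_singleton] at hp ⊢
  have := hI (d + e) hp
  change GradedRing.proj (degreePiece σ k) (d + e) (f * p) ∈ I at this
  rwa [proj_mul_of_mem hf, add_sub_cancel_right] at this

theorem isHomogeneous_add_span_singleton (hI : I.IsHomogeneous (degreePiece σ k))
    (hf : f ∈ degreePiece σ k e) :
    (I + Ideal.span {f}).IsHomogeneous (degreePiece σ k) :=
  hI.sup (Ideal.homogeneous_span _ _ fun _ hp => ⟨e, (Set.mem_singleton_iff.1 hp).symm ▸ hf⟩)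

theorem add_span_singleton_ne_top (hI : I.IsHomogeneous (degreePiece σ k)) (hI' : I ≠ ⊤)
    (hf : f ∈ degreePiece σ k e) (he : 0 < e) : I + Ideal.span {f} ≠ ⊤ := by
  intro h
  rw [Ideal.eq_top_iff_one, Submodule.add_eq_sup, Submodule.mem_sup] at h
  obtain ⟨i, hi, _, hz, hsum⟩ := h
  obtain ⟨t, rfl⟩ := Ideal.mem_span_singleton.1 hz
  refine hI' ((Ideal.eq_top_iff_one I).2 ?_)
  have hft : GradedRing.proj (degreePiece σ k) 0 (f * t) = 0 := by
    rw [proj_mul_of_mem hf, eq_zero_of_mem_degreePiece_of_neg (proj_mem (0 - e) t) (by omega),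
      mul_zero]
  rw [← proj_of_mem (one_mem_degreePiece (σ := σ) (k := k)), ← hsum, map_add, hft, add_zero]
  exact hI 0 hi

variable [LinearOrder σ]

theorem shortExact_mulColon_projection (hI : I.IsHomogeneous (degreePiece σ k))
    (hf : f ∈ degreePiece σ k 1) :
    KoszulGrading.ShortExact (quotientGrading (I.colon (Ideal.span {f}))).shift (quotientGrading I)
      (quotientGrading (I + Ideal.span {f})) (mulColon I f)
      (projection (le_add_span_singleton I f)) where
  injective := mulColon_injective I f
  exact := exact_mulColon_projection I f
  mem_iff {d _ m} := by
    obtain ⟨p, rfl⟩ := Ideal.Quotient.mk_surjective m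
    constructor
    · rintro ⟨q, hq, hqp⟩
      refine ⟨_, proj_mem (d - 1) p, Ideal.Quotient.eq.2 (mem_colon_span_singleton.2 ?_)⟩
      have hqp : q - f * p ∈ I := Ideal.Quotient.eq.1 hqp
      have hproj : GradedRing.proj (degreePiece σ k) d (q - f * p) ∈ I := hI d hqp
      rw [map_sub, proj_of_mem hq, proj_mul_of_mem hf] at hproj
      convert sub_mem hqp hproj using 1
      ring
    · rintro ⟨q, hq, hqp⟩
      exact ⟨f * q, add_sub_cancel 1 d ▸ SetLike.mul_mem_graded hf hq,
        congrArg (mulColon I f) hqp⟩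
  map_mem := by
    rintro d S _ ⟨p, hp, rfl⟩
    exact ⟨p, hp, rfl⟩
  exists_lift := by
    rintro d S _ ⟨p, hp, rfl⟩
    exact ⟨_, ⟨p, hp, rfl⟩, rfl⟩

variable [Fintype σ] [IsNoetherianRing k]

theorem IsFilterRegular.mem_of_mul_mem
    (hf : IsFilterRegular (Ideal.span (Set.range X)) (MvPolynomial σ k ⧸ I) f)
    (hI : I.IsHomogeneous (degreePiece σ k)) {r d : ℤ} (h : (quotientGrading I).RegularityLE r)
    (hd : r < d) {p : MvPolynomial σ k} (hp : p ∈ degreePiece σ k d) (hfp : f * p ∈ I) :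
    p ∈ I := by
  by_contra hpI
  obtain ⟨c, hc, hsocle⟩ := hf.exists_smul_mem_socle
    (mt Ideal.Quotient.eq_zero_iff_mem.1 hpI) (Ideal.Quotient.eq_zero_iff_mem.2 hfp)
  refine hc (Ideal.Quotient.eq_zero_iff_mem.2 ((hI.mem_iff _).2 fun i => ?_))
  have hi : GradedRing.proj (degreePiece σ k) i (c * p) =
      p * GradedRing.proj (degreePiece σ k) (i - d) c := by
    rw [mul_comm, proj_mul_of_mem hp]
  change GradedRing.proj (degreePiece σ k) i (c * p) ∈ I
  rcases lt_or_ge i d with hid | hdi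
  · rw [hi, eq_zero_of_mem_degreePiece_of_neg (proj_mem (i - d) c) (by omega), mul_zero]
    exact I.zero_mem
  refine Ideal.Quotient.eq_zero_iff_mem.1 ((h i (by omega)).eq_zero_of_smul_eq_zero
    ⟨_, proj_mem i (c * p), rfl⟩ fun j => Ideal.Quotient.eq_zero_iff_mem.2 ?_)
  have hX : X j * (c * p) ∈ I :=
    Ideal.Quotient.eq_zero_iff_mem.1 (hsocle (X j) (Ideal.subset_span ⟨j, rfl⟩))
  have hXi : GradedRing.proj (degreePiece σ k) (i + 1) (X j * (c * p)) ∈ I := hI _ hX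
  rwa [proj_mul_of_mem (X_mem_degreePiece j), add_sub_cancel_right] at hXi

theorem IsFilterRegular.regularityLE_colon
    (hf : IsFilterRegular (Ideal.span (Set.range X)) (MvPolynomial σ k ⧸ I) f)
    (hI : I.IsHomogeneous (degreePiece σ k)) {r : ℤ} (h : (quotientGrading I).RegularityLE r) :
    (quotientGrading (I.colon (Ideal.span {f}))).RegularityLE r := by
  refine h.of_injective_above (φ := projection (le_colon_span_singleton I f)) ?_ ?_ ?_
  · rintro d S _ ⟨p, hp, rfl⟩
    exact ⟨p, hp, rfl⟩
  · rintro d S _ ⟨p, hp, rfl⟩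
    exact ⟨_, ⟨p, hp, rfl⟩, rfl⟩
  · rintro d S _ hd ⟨p, hp, rfl⟩ h0
    exact Ideal.Quotient.eq_zero_iff_mem.2 (hf.mem_of_mul_mem hI h hd hp
      (mem_colon_span_singleton.1 (Ideal.Quotient.eq_zero_iff_mem.1 h0)))

end Regularity

section Dichotomy

variable {k : Type*} [Field k] {n : ℕ} {I : Ideal (MvPolynomial (Fin n) k)}
  {f : MvPolynomial (Fin n) k}

theorem isHomogeneous_of_isHomogeneousIdeal (hI : IsHomogeneousIdeal I) :
    I.IsHomogeneous (degreePiece (Fin n) k) := by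
  obtain ⟨T, hT, rfl⟩ := hI
  exact Ideal.homogeneous_span _ _ fun p hp =>
    (hT p hp).imp' Nat.cast fun _ => mem_degreePiece_natCast.2

theorem IsFilterRegular.regQuot_eq_or
    (hf : IsFilterRegular (mxIdeal k n) (MvPolynomial (Fin n) k ⧸ I) f)
    (hI : I.IsHomogeneous (degreePiece (Fin n) k)) (hf1 : f ∈ degreePiece (Fin n) k 1) :
    regQuot I = regQuot (I.colon (Ideal.span {f})) + 1 ∨
      regQuot I = regQuot (I + Ideal.span {f}) := by
  by_cases hfI : f ∈ I
  · rw [Submodule.add_eq_sup, sup_eq_left.2 ((Ideal.span_singleton_le_iff_mem I).2 hfI)]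
    exact Or.inr rfl
  have hI' : I ≠ ⊤ := fun h => hfI (h ▸ Submodule.mem_top)
  have hcolon : I.colon (Ideal.span {f}) ≠ ⊤ := by
    rwa [Ne, Ideal.eq_top_iff_one, mem_colon_span_singleton, mul_one]
  have hle {r : ℤ} := regQuot_le_iff (r := r) hI hI'
  have hle_colon {r : ℤ} :=
    regQuot_le_iff (r := r) (isHomogeneous_colon_span_singleton hI hf1) hcolon
  have hle_add {r : ℤ} := regQuot_le_iff (r := r) (isHomogeneous_add_span_singleton hI hf1)
    (add_span_singleton_ne_top hI hI' hf1 one_pos)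
  have hses := shortExact_mulColon_projection hI hf1
  set i := regQuot I
  set c := regQuot (I.colon (Ideal.span {f}))
  set s := regQuot (I + Ideal.span {f})
  have h1 : c ≤ i := hle_colon.2 (hf.regularityLE_colon hI (hle.1 le_rfl))
  have h2 : c ≤ max i (s + 1) - 1 := hle_colon.2 <| KoszulGrading.RegularityLE.shift_iff.1 <|
    hses.regularityLE_left (hle.1 (le_max_left _ _)) (hle_add.1 (by omega))
  have h3 : i ≤ max (c + 1) s := hle.2 <| hses.regularityLE_middle
    (KoszulGrading.RegularityLE.shift_iff.2 (hle_colon.1 (by omega))) (hle_add.1 (le_max_right _ _))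
  have h4 : s ≤ i := hle_add.2 <| hses.regularityLE_right (hle.1 le_rfl)
    (KoszulGrading.RegularityLE.shift_iff.2 (hle_colon.1 (by omega)))
  omega

end Dichotomy

end KoszulRegularity

/-- **Corollary (depth and regularity modulo a filter-regular linear form).** Let `I` be a
homogeneous ideal and `f` a linear form which is filter-regular on `R/I` (i.e. `f` avoids
all associated primes of `R/I` other than the maximal homogeneous ideal). Then
(i) `depth R/I ∈ {depth R/(I:f), depth R/(I,f)}` and
(ii) `reg R/I ∈ {reg R/(I:f) + 1, reg R/(I,f)}`. -/
theorem depth_reg_modulo_filter_regular {k : Type*} [Field k] {n : ℕ}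
    (I : Ideal (MvPolynomial (Fin n) k)) (hI : IsHomogeneousIdeal I)
    (f : MvPolynomial (Fin n) k) (hf1 : f.IsHomogeneous 1) (hf0 : f ≠ 0)
    (hfilter : ∀ p ∈ associatedPrimes (MvPolynomial (Fin n) k)
      (MvPolynomial (Fin n) k ⧸ I), p ≠ mxIdeal k n → f ∉ p) :
    (pdepth I = pdepth (I.colon (Ideal.span {f})) ∨
      pdepth I = pdepth (I + Ideal.span {f})) ∧
    (regQuot I = regQuot (I.colon (Ideal.span {f})) + 1 ∨
      regQuot I = regQuot (I + Ideal.span {f})) := by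
  have hf : KoszulRegularity.IsFilterRegular (mxIdeal k n) (MvPolynomial (Fin n) k ⧸ I) f := hfilter
  have hf1' : f ∈ KoszulRegularity.degreePiece (Fin n) k 1 :=
    KoszulRegularity.mem_degreePiece_natCast.2 hf1
  exact ⟨hf.idealDepth_eq_or,
    hf.regQuot_eq_or (KoszulRegularity.isHomogeneous_of_isHomogeneousIdeal hI) hf1'⟩
end
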